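/- arXiv:1705.02228 — 2 statements merged into one kernel-verified Lean document; each statement's English description precedes it below -/
import Mathlib

section
/- Let 2 ≤ p < ∞, s > 0, and set i = ⌊s⌋ + 1. There exists C > 0, depending only on φ, p, s, such that for every admissible finite collection 𝓘 = {[a_m,b_m]}_{m=1}^N and every measurable f : ℝ → ℂ with ‖ M^{i,s}_p f ‖_{L^p} < ∞, the rotated family g = {g_m}_{m=1}^N, g_m(x) = e^{−2πi a_m x}(f∗φ_m)(x), satisfies ‖ M^{i,s}_p g ‖_{L^p} ≤ C ‖ M^{i,s}_p f ‖_{L^p}. (Uniform boundedness of the rotated family on Ċ^s_p = Ḟ^s_{p∞}.) -/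
open MeasureTheory Real Set Function
open scoped FourierTransform ENNReal NNReal

/-- `e2pi t = e^{2πit}`. -/
noncomputable def e2pi (t : ℝ) : ℂ := Complex.exp (2 * (Real.pi : ℂ) * Complex.I * (t : ℂ))

/-- Convolution of two functions on `ℝ`. -/
noncomputable def conv (f g : ℝ → ℂ) (x : ℝ) : ℂ := ∫ t, f t * g (x - t)

/-- The function `φ_m` associated with the interval `[a,b]`: its Fourier transform is
`ξ ↦ 𝓕φ ((ξ - a)/(b - a))`; in space variables it is `x ↦ (b-a) e^{2πiax} φ((b-a)x)`. -/
noncomputable def phim (φ : ℝ → ℂ) (a b : ℝ) (x : ℝ) : ℂ :=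
  ((b - a : ℝ) : ℂ) * e2pi (a * x) * φ ((b - a) * x)

/-- A finite collection of compact intervals `[a m, b m]` is admissible if the intervals are
nondegenerate, pairwise disjoint, and none of them contains `0` in its interior. -/
def Admissible {N : ℕ} (a b : Fin N → ℝ) : Prop :=
  (∀ m, a m < b m) ∧ (∀ m, (0 : ℝ) ∉ Set.Ioo (a m) (b m)) ∧
    ∀ m m', m ≠ m' → Disjoint (Set.Icc (a m) (b m)) (Set.Icc (a m') (b m'))

/-- The rotated Rubio de Francia piece `g_m(x) = e^{-2πi a x} (f ∗ φ_m)(x)`. -/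
noncomputable def rotConv (φ : ℝ → ℂ) (a b : ℝ) (f : ℝ → ℂ) (x : ℝ) : ℂ :=
  e2pi (-(a * x)) * conv f (phim φ a b) x

/-- Sharp maximal function `M^{i,s}_p` of a finite family `h = {h_m}` of functions, with the
`ℓ²`-norm inside: `sup_{I ∋ x} inf_{P} |I|^{-s} ((1/|I|) ∫_I (Σ_m |h_m - P_m|²)^{p/2})^{1/p}`,
the infimum over families of polynomials of degree `< i`, with values in `[0,∞]`. -/
noncomputable def sharpMax (i : ℕ) (s p : ℝ) {N : ℕ} (h : Fin N → ℝ → ℂ) (x : ℝ) : ℝ≥0∞ :=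
  ⨆ (u : ℝ) (v : ℝ) (_ : u < v) (_ : x ∈ Set.Icc u v),
    ⨅ (P : Fin N → Polynomial ℂ) (_ : ∀ m, (P m).degree < (i : WithBot ℕ)),
      ENNReal.ofReal (v - u) ^ (-s) *
        ((ENNReal.ofReal (v - u))⁻¹ *
          ∫⁻ t in Set.Icc u v,
            ENNReal.ofReal ((∑ m, ‖h m t - (P m).eval (t : ℂ)‖ ^ 2) ^ (p / 2))) ^ (1 / p)



/-- Hardy-Littlewood maximal function over intervals having the point in the interior. -/
noncomputable def hlM (W : ℝ → ℝ≥0∞) (x : ℝ) : ℝ≥0∞ :=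
  ⨆ (u : ℝ) (v : ℝ) (_ : x ∈ Set.Ioo u v), (ENNReal.ofReal (v - u))⁻¹ * ∫⁻ t in Set.Icc u v, W t

theorem measurable_iSup_Ioo (A : ℝ → ℝ → ℝ≥0∞) :
    Measurable (fun x : ℝ => ⨆ (u : ℝ) (v : ℝ) (_ : x ∈ Set.Ioo u v), A u v) := by
  apply measurable_of_Ioi
  intro c
  have : (fun x : ℝ => ⨆ (u : ℝ) (v : ℝ) (_ : x ∈ Set.Ioo u v), A u v) ⁻¹' Ioi c
      = ⋃ (u : ℝ) (v : ℝ) (_ : c < A u v), Ioo u v := by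
    ext x
    simp only [mem_preimage, mem_Ioi, lt_iSup_iff, mem_iUnion]
    constructor
    · rintro ⟨u, v, h, h'⟩; exact ⟨u, v, h', h⟩
    · rintro ⟨u, v, h, h'⟩; exact ⟨u, v, h', h⟩
  rw [this]
  exact (isOpen_iUnion fun u => isOpen_iUnion fun v => isOpen_iUnion fun _ => isOpen_Ioo).measurableSet

theorem measurable_hlM (W : ℝ → ℝ≥0∞) : Measurable (hlM W) := measurable_iSup_Ioo _

theorem hlM_weak (W : ℝ → ℝ≥0∞) (l : ℝ) (hl : 0 < l) :
    volume {x | ENNReal.ofReal l < hlM W x} ≤ ENNReal.ofReal (5 / l) * ∫⁻ t, W t := by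
  by_cases hW : ∫⁻ t, W t = ∞
  · rw [hW, ENNReal.mul_top (by simp; positivity)]; exact le_top
  set T : Set (ℝ × ℝ) := {q | q.1 < q.2 ∧ ENNReal.ofReal (l * (q.2 - q.1)) ≤ ∫⁻ t in Icc q.1 q.2, W t}
  have hT : ∀ q ∈ T, (q.2 - q.1) / 2 ≤ (∫⁻ t, W t).toReal / l := by
    intro q hq
    have h1 : ENNReal.ofReal (l * (q.2 - q.1)) ≤ ∫⁻ t, W t := hq.2.trans (setLIntegral_le_lintegral _ _)
    have h2 := (ENNReal.ofReal_le_iff_le_toReal hW).1 h1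
    rw [le_div_iff₀ hl]
    have := hq.1
    nlinarith
  obtain ⟨S, hST, hdisj, hcov⟩ := Vitali.exists_disjoint_subfamily_covering_enlargement_closedBall T
    (fun q => (q.1 + q.2) / 2) (fun q => (q.2 - q.1) / 2) _ hT 5 (by norm_num)
  have hball : ∀ q : ℝ × ℝ, Metric.closedBall ((q.1 + q.2) / 2) ((q.2 - q.1) / 2) = Icc q.1 q.2 := by
    intro q; rw [Real.closedBall_eq_Icc]; congr 1 <;> ring
  have hdisj' : S.PairwiseDisjoint (fun q => Icc q.1 q.2) := by
    intro a ha b hb hab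
    have := hdisj ha hb hab
    simpa [Function.onFun, hball] using this
  have hSc : S.Countable := by
    apply hdisj'.countable_of_nonempty_interior
    intro q hq
    rw [interior_Icc]
    exact nonempty_Ioo.2 (hST hq).1
  have hsub : {x | ENNReal.ofReal l < hlM W x} ⊆
      ⋃ q ∈ S, Metric.closedBall ((q.1 + q.2) / 2) (5 * ((q.2 - q.1) / 2)) := by
    intro x hx
    simp only [mem_setOf_eq, hlM, lt_iSup_iff] at hx
    obtain ⟨u, v, hxuv, hlt⟩ := hx
    have huv : u < v := hxuv.1.trans hxuv.2
    have hq : (u, v) ∈ T := by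
      refine ⟨huv, ?_⟩
      have hpos : ENNReal.ofReal (v - u) ≠ 0 := by simp; linarith
      rw [ENNReal.ofReal_mul hl.le]
      calc ENNReal.ofReal l * ENNReal.ofReal (v - u) ≤
          ((ENNReal.ofReal (v - u))⁻¹ * ∫⁻ t in Set.Icc u v, W t) * ENNReal.ofReal (v - u) := by gcongr
        _ = ∫⁻ t in Set.Icc u v, W t := by
          rw [mul_comm, ← mul_assoc, ENNReal.mul_inv_cancel hpos ENNReal.ofReal_ne_top, one_mul]
    obtain ⟨q, hqS, hq2⟩ := hcov _ hq
    simp only [mem_iUnion]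
    refine ⟨q, hqS, hq2 ?_⟩
    rw [hball (u, v)]
    exact Ioo_subset_Icc_self hxuv
  calc volume {x | ENNReal.ofReal l < hlM W x}
      ≤ volume (⋃ q ∈ S, Metric.closedBall ((q.1 + q.2) / 2) (5 * ((q.2 - q.1) / 2))) := measure_mono hsub
    _ ≤ ∑' q : S, volume (Metric.closedBall ((q.1.1 + q.1.2) / 2) (5 * ((q.1.2 - q.1.1) / 2))) :=
        measure_biUnion_le _ hSc _
    _ ≤ ∑' q : S, ENNReal.ofReal (5 / l) * ∫⁻ t in Icc q.1.1 q.1.2, W t := by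
        apply ENNReal.tsum_le_tsum
        intro q
        have h1 := hST q.2
        rw [Real.volume_closedBall]
        calc ENNReal.ofReal (2 * (5 * ((q.1.2 - q.1.1) / 2)))
            = ENNReal.ofReal (5 / l) * ENNReal.ofReal (l * (q.1.2 - q.1.1)) := by
              rw [← ENNReal.ofReal_mul (by positivity)]; congr 1; field_simp
          _ ≤ _ := by gcongr; exact h1.2
    _ = ENNReal.ofReal (5 / l) * ∫⁻ t in ⋃ q ∈ S, Icc q.1 q.2, W t := by
        rw [ENNReal.tsum_mul_left, lintegral_biUnion hSc (fun _ _ => measurableSet_Icc) hdisj']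
    _ ≤ _ := by gcongr; exact Measure.restrict_le_self

theorem hlM_split (W : ℝ → ℝ≥0∞) (c : ℝ≥0∞) (x : ℝ) :
    hlM W x ≤ hlM (indicator {t | c < W t} W) x + c := by
  unfold hlM
  refine iSup_le fun u => iSup_le fun v => iSup_le fun h => ?_
  have huv : u < v := h.1.trans h.2
  have hpos : ENNReal.ofReal (v - u) ≠ 0 := by simp; linarith
  calc (ENNReal.ofReal (v - u))⁻¹ * ∫⁻ t in Set.Icc u v, W t
      ≤ (ENNReal.ofReal (v - u))⁻¹ * ∫⁻ t in Set.Icc u v, (indicator {t | c < W t} W t + c) := by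
        gcongr with t
        by_cases ht : c < W t
        · simp [indicator, ht]
        · simp only [indicator, mem_setOf_eq, ht, if_false, zero_add]; exact not_lt.1 ht
    _ = (ENNReal.ofReal (v - u))⁻¹ * (∫⁻ t in Set.Icc u v, indicator {t | c < W t} W t) + c := by
        rw [lintegral_add_right _ measurable_const, mul_add]
        congr 1
        rw [lintegral_const, Measure.restrict_apply_univ, Real.volume_Icc, mul_comm c, ← mul_assoc,
          ENNReal.inv_mul_cancel hpos ENNReal.ofReal_ne_top, one_mul]
    _ ≤ _ := by
        gcongr
        exact le_iSup_of_le u (le_iSup_of_le v (le_iSup_of_le h le_rfl))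

theorem layer_real (q : ℝ) (hq : 0 < q) (y : ℝ) (hy : 0 ≤ y) :
    ENNReal.ofReal (y ^ q) = ENNReal.ofReal q *
      ∫⁻ t in Ioi (0:ℝ), (Ioi t).indicator 1 y * ENNReal.ofReal (t ^ (q - 1)) := by
  have := lintegral_rpow_eq_lintegral_meas_lt_mul (Measure.dirac ()) (f := fun _ : Unit => y)
    (by simp [Filter.EventuallyLE, hy]) (by fun_prop) hq
  simp only [lintegral_dirac] at this
  rw [this]
  congr 1
  apply lintegral_congr
  intro t
  congr 1
  by_cases h : t < y <;> simp [h]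

theorem layer_le (q : ℝ) (hq : 0 < q) (y : ℝ≥0∞) :
    y ^ q ≤ ENNReal.ofReal q *
      ∫⁻ t in Ioi (0:ℝ), (Ioi (ENNReal.ofReal t)).indicator 1 y * ENNReal.ofReal (t ^ (q - 1)) := by
  have hfin : ∀ y : ℝ, 0 ≤ y → ENNReal.ofReal y ^ q ≤ ENNReal.ofReal q *
      ∫⁻ t in Ioi (0:ℝ), (Ioi (ENNReal.ofReal t)).indicator 1 (ENNReal.ofReal y) *
        ENNReal.ofReal (t ^ (q - 1)) := by
    intro y hy
    rw [ENNReal.ofReal_rpow_of_nonneg hy hq.le, layer_real q hq y hy]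
    gcongr 1
    apply setLIntegral_mono' measurableSet_Ioi
    intro t ht
    gcongr
    by_cases h : t < y
    · have : ENNReal.ofReal t < ENNReal.ofReal y := (ENNReal.ofReal_lt_ofReal_iff (lt_trans ht h)).2 h
      simp [h, this]
    · simp [h]
  by_cases hy : y = ∞
  · subst hy
    rw [ENNReal.top_rpow_of_pos hq, top_le_iff]
    apply ENNReal.eq_top_of_forall_nnreal_le
    intro r
    have h1 := hfin ((r:ℝ) ^ (1 / q)) (by positivity)
    rw [ENNReal.ofReal_rpow_of_nonneg (by positivity) hq.le, ← Real.rpow_mul (by positivity),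
      one_div_mul_cancel hq.ne', Real.rpow_one, ENNReal.ofReal_coe_nnreal] at h1
    refine h1.trans ?_
    gcongr with t
    simp only [indicator, mem_Ioi, ENNReal.ofReal_lt_top, if_true]
    split_ifs <;> simp
  · have := hfin y.toReal ENNReal.toReal_nonneg
    rwa [ENNReal.ofReal_toReal hy] at this

theorem layer_ge (q : ℝ) (hq : 0 < q) (y : ℝ≥0∞) :
    ENNReal.ofReal q *
      ∫⁻ t in Ioi (0:ℝ), (Ioi (ENNReal.ofReal t)).indicator 1 y * ENNReal.ofReal (t ^ (q - 1))
      ≤ y ^ q := by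
  by_cases hy : y = ∞
  · subst hy; rw [ENNReal.top_rpow_of_pos hq]; exact le_top
  · have h := layer_real q hq y.toReal ENNReal.toReal_nonneg
    rw [← ENNReal.ofReal_rpow_of_nonneg ENNReal.toReal_nonneg hq.le, ENNReal.ofReal_toReal hy] at h
    rw [h]
    gcongr 1
    apply setLIntegral_mono' measurableSet_Ioi
    intro t ht
    gcongr
    by_cases h : ENNReal.ofReal t < y
    · have : t < y.toReal := (ENNReal.ofReal_lt_iff_lt_toReal (le_of_lt ht) hy).1 h
      simp [h, this]
    · simp [h]

theorem hlM_strong (r : ℝ) (hr : 1 < r) : ∃ C : ℝ, 0 < C ∧ ∀ W : ℝ → ℝ≥0∞, Measurable W →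
    ∫⁻ x, hlM W x ^ r ≤ ENNReal.ofReal C * ∫⁻ x, W x ^ r := by
  refine ⟨r * 10 * ((r - 1)⁻¹ * 2 ^ (r - 1)), by have : 0 < r - 1 := by linarith
                                                 positivity, fun W hW => ?_⟩
  have hr1 : 0 < r - 1 := by linarith
  have hM := measurable_hlM W
  have hm1 : Measurable (fun z : ℝ × ℝ => (Ioi (ENNReal.ofReal z.2)).indicator (1 : ℝ≥0∞ → ℝ≥0∞) (hlM W z.1)) := by
    have : (fun z : ℝ × ℝ => (Ioi (ENNReal.ofReal z.2)).indicator (1 : ℝ≥0∞ → ℝ≥0∞) (hlM W z.1)) =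
        ({z : ℝ × ℝ | ENNReal.ofReal z.2 < hlM W z.1}).indicator 1 := by
      ext z; simp [indicator]
    rw [this]
    apply measurable_one.indicator
    exact measurableSet_lt (by fun_prop) (by fun_prop)
  have hm2 : Measurable (fun z : ℝ × ℝ => (Ioi (ENNReal.ofReal z.2)).indicator (1 : ℝ≥0∞ → ℝ≥0∞) (2 * W z.1)) := by
    have : (fun z : ℝ × ℝ => (Ioi (ENNReal.ofReal z.2)).indicator (1 : ℝ≥0∞ → ℝ≥0∞) (2 * W z.1)) =
        ({z : ℝ × ℝ | ENNReal.ofReal z.2 < 2 * W z.1}).indicator 1 := by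
      ext z; simp [indicator]
    rw [this]
    apply measurable_one.indicator
    exact measurableSet_lt (by fun_prop) (by fun_prop)
  have key : ∀ t : ℝ, 0 < t → volume {x | ENNReal.ofReal t < hlM W x} ≤
      ENNReal.ofReal (10 / t) * ∫⁻ x, (Ioi (ENNReal.ofReal t)).indicator 1 (2 * W x) * W x := by
    intro t ht
    have h1 : {x | ENNReal.ofReal t < hlM W x} ⊆
        {x | ENNReal.ofReal (t / 2) < hlM (indicator {y | ENNReal.ofReal (t/2) < W y} W) x} := by
      intro x hx
      have hx' : ENNReal.ofReal t < hlM W x := hx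
      have := hx'.trans_le (hlM_split W (ENNReal.ofReal (t/2)) x)
      by_contra hcon
      simp only [mem_setOf_eq, not_lt] at hcon
      refine absurd this (not_lt.2 ?_)
      calc _ ≤ ENNReal.ofReal (t/2) + ENNReal.ofReal (t/2) := by gcongr
        _ = ENNReal.ofReal t := by rw [← ENNReal.ofReal_add (by positivity) (by positivity)]; simp
    refine (measure_mono h1).trans ((hlM_weak _ (t/2) (by positivity)).trans ?_)
    rw [show (5 / (t / 2)) = 10 / t by field_simp; norm_num]
    gcongr with x
    by_cases hx : ENNReal.ofReal (t/2) < W x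
    · have : ENNReal.ofReal t < 2 * W x := by
        have h2 : ENNReal.ofReal t = 2 * ENNReal.ofReal (t/2) := by
          rw [show (2:ℝ≥0∞) = ENNReal.ofReal 2 by simp, ← ENNReal.ofReal_mul (by norm_num)]; congr 1; ring
        rw [h2]
        exact (ENNReal.mul_lt_mul_iff_right (by norm_num) (by norm_num)).2 hx
      simp [indicator, hx, this]
    · simp [indicator, hx]
  calc ∫⁻ x, hlM W x ^ r
      ≤ ∫⁻ x, ENNReal.ofReal r * ∫⁻ t in Ioi (0:ℝ),
          (Ioi (ENNReal.ofReal t)).indicator 1 (hlM W x) * ENNReal.ofReal (t ^ (r - 1)) :=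
        lintegral_mono fun x => layer_le r (by linarith) _
    _ = ENNReal.ofReal r * ∫⁻ t in Ioi (0:ℝ), ∫⁻ x,
          (Ioi (ENNReal.ofReal t)).indicator 1 (hlM W x) * ENNReal.ofReal (t ^ (r - 1)) := by
        rw [lintegral_const_mul' _ _ ENNReal.ofReal_ne_top, lintegral_lintegral_swap]
        exact (hm1.mul (by fun_prop)).aemeasurable
    _ ≤ ENNReal.ofReal r * ∫⁻ t in Ioi (0:ℝ), ∫⁻ x, ENNReal.ofReal 10 *
          (W x * ((Ioi (ENNReal.ofReal t)).indicator 1 (2 * W x) * ENNReal.ofReal (t ^ (r - 1 - 1)))) := by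
        gcongr 1
        apply setLIntegral_mono' measurableSet_Ioi
        intro t ht
        have ht : 0 < t := ht
        rw [lintegral_mul_const' _ _ ENNReal.ofReal_ne_top]
        have e1 : ∫⁻ x, (Ioi (ENNReal.ofReal t)).indicator 1 (hlM W x) = volume {x | ENNReal.ofReal t < hlM W x} := by
          rw [← lintegral_indicator_one (measurableSet_lt measurable_const hM)]
          rfl
        rw [e1]
        calc _ ≤ (ENNReal.ofReal (10 / t) * ∫⁻ x, (Ioi (ENNReal.ofReal t)).indicator 1 (2 * W x) * W x) *
              ENNReal.ofReal (t ^ (r - 1)) := by gcongr; exact key t ht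
          _ = (ENNReal.ofReal 10 * ENNReal.ofReal (t ^ (r - 1 - 1))) *
              ∫⁻ x, (Ioi (ENNReal.ofReal t)).indicator 1 (2 * W x) * W x := by
              rw [mul_right_comm, ← ENNReal.ofReal_mul (by positivity), ← ENNReal.ofReal_mul (by positivity)]
              congr 2
              rw [Real.rpow_sub_one ht.ne' (r - 1)]; field_simp
          _ = _ := by
              rw [← lintegral_const_mul' _ _ (ENNReal.mul_ne_top ENNReal.ofReal_ne_top ENNReal.ofReal_ne_top)]
              apply lintegral_congr; intro x; ring
          _ ≤ _ := le_rfl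
    _ = ENNReal.ofReal r * ∫⁻ x, ENNReal.ofReal 10 * (W x * ∫⁻ t in Ioi (0:ℝ),
          ((Ioi (ENNReal.ofReal t)).indicator 1 (2 * W x) * ENNReal.ofReal (t ^ (r - 1 - 1)))) := by
        congr 1
        rw [lintegral_lintegral_swap]
        · apply lintegral_congr
          intro x
          have hmx : Measurable (fun t : ℝ => (Ioi (ENNReal.ofReal t)).indicator (1 : ℝ≥0∞ → ℝ≥0∞) (2 * W x)) :=
            hm2.comp (measurable_const.prodMk measurable_id)
          rw [lintegral_const_mul, lintegral_const_mul]
          · exact hmx.mul (by fun_prop)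
          · exact (measurable_const.mul (hmx.mul (by fun_prop)))
        · apply Measurable.aemeasurable
          apply measurable_const.mul
          apply (hW.comp measurable_snd).mul
          apply Measurable.mul
          · exact hm2.comp measurable_swap
          · fun_prop
    _ ≤ ENNReal.ofReal r * ∫⁻ x, ENNReal.ofReal 10 * (W x * (ENNReal.ofReal ((r-1)⁻¹) * (2 * W x) ^ (r - 1))) := by
        gcongr with x
        have := layer_ge (r-1) hr1 (2 * W x)
        have h2 : ENNReal.ofReal ((r-1)⁻¹) * ENNReal.ofReal (r-1) = 1 := by
          rw [← ENNReal.ofReal_mul (by positivity), inv_mul_cancel₀ hr1.ne']; simp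
        calc _ = ENNReal.ofReal ((r-1)⁻¹) * (ENNReal.ofReal (r-1) * ∫⁻ t in Ioi (0:ℝ),
          ((Ioi (ENNReal.ofReal t)).indicator 1 (2 * W x) * ENNReal.ofReal (t ^ (r - 1 - 1)))) := by
              rw [← mul_assoc, h2, one_mul]
          _ ≤ _ := by gcongr
    _ = _ := by
        rw [← lintegral_const_mul' _ _ ENNReal.ofReal_ne_top, ← lintegral_const_mul' _ _ ENNReal.ofReal_ne_top]
        apply lintegral_congr; intro x
        rw [ENNReal.mul_rpow_of_nonneg _ _ hr1.le, ENNReal.ofReal_mul (by positivity),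
          ENNReal.ofReal_mul (by positivity), ENNReal.ofReal_mul (by positivity),
          ← ENNReal.ofReal_rpow_of_nonneg (by norm_num) hr1.le]
        have : W x ^ r = W x * W x ^ (r - 1) := by
          rw [show r = 1 + (r - 1) by ring, ENNReal.rpow_add_of_nonneg _ _ (by norm_num) hr1.le]; simp
        rw [this]
        simp only [ENNReal.ofReal_ofNat]
        ring


/-- Vector of values of a family of polynomials. -/
noncomputable def pv {N : ℕ} (P : Fin N → Polynomial ℂ) (t : ℝ) : EuclideanSpace ℂ (Fin N) :=
  WithLp.toLp 2 (fun m => (P m).eval (t : ℂ))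

theorem continuous_pv {N : ℕ} (P : Fin N → Polynomial ℂ) : Continuous (pv P) := by
  unfold pv
  apply (PiLp.continuous_toLp 2 _).comp
  apply continuous_pi
  intro m
  exact (P m).continuous.comp Complex.continuous_ofReal

theorem pv_sub {N : ℕ} (P Q : Fin N → Polynomial ℂ) (t : ℝ) :
    pv (fun m => P m - Q m) t = pv P t - pv Q t := by
  ext m; simp [pv]

theorem poly_coercive (k : ℕ) : ∃ κ : ℝ, 0 < κ ∧ ∀ a : Fin (k+1) → ℂ,
    κ * ‖a‖ ^ 2 ≤ ∫ t in Icc (-1:ℝ) 1, ‖∑ j, a j * (t:ℂ) ^ (j:ℕ)‖ ^ 2 := by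
  set q : (Fin (k+1) → ℂ) → ℝ := fun a => ∫ t in Icc (-1:ℝ) 1, ‖∑ j, a j * (t:ℂ) ^ (j:ℕ)‖ ^ 2 with hq
  have hqc : Continuous q := by
    apply continuous_parametric_integral_of_continuous _ isCompact_Icc
    unfold Function.uncurry
    fun_prop
  have hpos : ∀ a, a ≠ 0 → 0 < q a := by
    intro a ha
    have hcont : Continuous (fun t : ℝ => ‖∑ j, a j * (t:ℂ) ^ (j:ℕ)‖ ^ 2) := by fun_prop
    by_contra hcon
    have h0 : q a = 0 := le_antisymm (not_lt.1 hcon) (integral_nonneg fun t => by positivity)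
    rw [hq] at h0
    have hae := (setIntegral_eq_zero_iff_of_nonneg_ae (Filter.Eventually.of_forall fun t => by positivity)
      (hcont.integrableOn_Icc)).1 h0
    have hz : ∀ t ∈ Ioo (-1:ℝ) 1, ‖∑ j, a j * (t:ℂ) ^ (j:ℕ)‖ ^ 2 = 0 := by
      have hae2 : (fun t : ℝ => ‖∑ j, a j * (t:ℂ) ^ (j:ℕ)‖ ^ 2) =ᵐ[volume.restrict (Ioo (-1:ℝ) 1)] fun _ => 0 :=
        ae_restrict_of_ae_restrict_of_subset Ioo_subset_Icc_self hae
      exact Measure.eqOn_open_of_ae_eq hae2 isOpen_Ioo hcont.continuousOn continuousOn_const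
    set P : Polynomial ℂ := ∑ j : Fin (k+1), Polynomial.C (a j) * Polynomial.X ^ (j:ℕ) with hP
    have hev : ∀ z : ℂ, P.eval z = ∑ j, a j * z ^ (j:ℕ) := by
      intro z; simp [hP, Polynomial.eval_finset_sum]
    have hP0 : P = 0 := by
      apply Polynomial.eq_zero_of_infinite_isRoot
      apply Set.Infinite.mono (s := (fun t : ℝ => (t:ℂ)) '' Ioo (-1:ℝ) 1)
      · rintro _ ⟨t, ht, rfl⟩
        have := hz t ht
        simp only [mem_setOf_eq, Polynomial.IsRoot.def, hev]
        simpa using this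
      · apply Set.Infinite.image Complex.ofReal_injective.injOn
        exact Ioo_infinite (by norm_num)
    apply ha
    ext j
    have : P.coeff (j:ℕ) = a j := by
      simp only [hP, Polynomial.finset_sum_coeff, Polynomial.coeff_C_mul, Polynomial.coeff_X_pow]
      rw [Finset.sum_eq_single j]
      · simp
      · intro b _ hb
        have : ¬ (j:ℕ) = b := fun h => hb (Fin.ext h.symm)
        simp [this]
      · simp
    rw [← this, hP0]; simp
  obtain ⟨a0, ha0, hmin⟩ := (isCompact_sphere (0 : Fin (k+1) → ℂ) 1).exists_isMinOn
    (NormedSpace.sphere_nonempty.2 zero_le_one) hqc.continuousOn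
  have ha0' : a0 ≠ 0 := by
    rintro rfl; simp at ha0
  refine ⟨q a0, hpos a0 ha0', fun a => ?_⟩
  by_cases ha : a = 0
  · subst ha
    simp
  · have hn : 0 < ‖a‖ := norm_pos_iff.2 ha
    have h1 : q a0 ≤ q (((‖a‖⁻¹ : ℝ) : ℂ) • a) := by
      apply hmin
      simp only [mem_sphere_iff_norm, sub_zero, norm_smul, Complex.norm_real, norm_inv, norm_norm]
      exact inv_mul_cancel₀ hn.ne'
    have h2 : q (((‖a‖⁻¹ : ℝ) : ℂ) • a) = (‖a‖⁻¹) ^ 2 * q a := by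
      rw [hq]; simp only
      rw [← integral_const_mul]
      congr 1; ext t
      have : ∑ j, (((‖a‖⁻¹ : ℝ) : ℂ) • a) j * (t:ℂ) ^ (j:ℕ) = ((‖a‖⁻¹ : ℝ) : ℂ) * ∑ j, a j * (t:ℂ) ^ (j:ℕ) := by
        rw [Finset.mul_sum]; simp [mul_assoc]
      rw [this, norm_mul, mul_pow, Complex.norm_real, norm_inv, norm_norm]
    rw [h2] at h1
    change q a0 * ‖a‖^2 ≤ q a
    calc q a0 * ‖a‖^2 ≤ ((‖a‖⁻¹) ^ 2 * q a) * ‖a‖^2 := by gcongr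
      _ = q a := by field_simp

theorem poly_scalar (k : ℕ) : ∃ C : ℝ, 0 < C ∧ ∀ P : Polynomial ℂ, P.degree < ((k+1 : ℕ) : WithBot ℕ) →
    ∀ c r τ y : ℝ, 0 < r → 1 ≤ τ → |y - c| ≤ τ * r →
    ‖P.eval (y:ℂ)‖ ^ 2 ≤ C * τ ^ (2 * k) * r⁻¹ * ∫ t in Icc (c - r) (c + r), ‖P.eval (t:ℂ)‖ ^ 2 := by
  obtain ⟨κ, hκ, hco⟩ := poly_coercive k
  refine ⟨(k+1)^2 * κ⁻¹, by positivity, fun P hP c r τ y hr hτ hy => ?_⟩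
  set R : Polynomial ℂ := P.comp (Polynomial.C (c:ℂ) + Polynomial.C (r:ℂ) * Polynomial.X) with hR
  have hRe : ∀ w : ℝ, R.eval (w:ℂ) = P.eval (((c + r * w : ℝ)) : ℂ) := by
    intro w; simp [hR]
  have hPd : P.natDegree < k + 1 := by
    by_cases h0 : P = 0
    · subst h0; simp
    · exact (Polynomial.natDegree_lt_iff_degree_lt h0).2 hP
  have hRd : R.natDegree < k + 1 := by
    have h1 : R.natDegree ≤ P.natDegree * (Polynomial.C (c:ℂ) + Polynomial.C (r:ℂ) * Polynomial.X).natDegree :=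
      Polynomial.natDegree_comp_le
    have h2 : (Polynomial.C (c:ℂ) + Polynomial.C (r:ℂ) * Polynomial.X).natDegree ≤ 1 := by
      rw [add_comm]; exact Polynomial.natDegree_linear_le
    calc R.natDegree ≤ P.natDegree * 1 := h1.trans (by gcongr)
      _ < k + 1 := by simpa using hPd
  set a : Fin (k+1) → ℂ := fun j => R.coeff j
  have hRs : ∀ z : ℂ, R.eval z = ∑ j, a j * z ^ (j:ℕ) := by
    intro z
    rw [Polynomial.eval_eq_sum_range' hRd, Finset.sum_range]
  have hinteg : ∫ t in Icc (-1:ℝ) 1, ‖∑ j, a j * (t:ℂ) ^ (j:ℕ)‖ ^ 2 =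
      r⁻¹ * ∫ t in Icc (c - r) (c + r), ‖P.eval (t:ℂ)‖ ^ 2 := by
    rw [integral_Icc_eq_integral_Ioc, integral_Icc_eq_integral_Ioc,
      ← intervalIntegral.integral_of_le (by norm_num), ← intervalIntegral.integral_of_le (by linarith)]
    have := intervalIntegral.integral_comp_add_mul (a := -1) (b := 1) (fun t : ℝ => ‖P.eval (t:ℂ)‖ ^ 2) hr.ne' c
    simp only [smul_eq_mul] at this
    rw [show c + r * -1 = c - r by ring, show c + r * 1 = c + r by ring] at this
    rw [← this]
    apply intervalIntegral.integral_congr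
    intro t _
    simp only
    rw [← hRs, hRe]
  have hco' := hco a
  rw [hinteg] at hco'
  set w := (y - c) / r with hw
  have hyw : y = c + r * w := by rw [hw]; field_simp; ring
  have hwa : |w| ≤ τ := by
    rw [hw, abs_div, abs_of_pos hr, div_le_iff₀ hr]; exact hy
  have hval : ‖P.eval (y:ℂ)‖ ≤ (k+1) * τ ^ k * ‖a‖ := by
    rw [hyw, ← hRe, hRs]
    calc ‖∑ j, a j * (w:ℂ) ^ (j:ℕ)‖ ≤ ∑ j : Fin (k+1), ‖a‖ * τ ^ k := by
          apply norm_sum_le_of_le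
          intro j _
          rw [norm_mul, norm_pow, Complex.norm_real, Real.norm_eq_abs]
          gcongr
          · exact norm_le_pi_norm a j
          · calc |w| ^ (j:ℕ) ≤ τ ^ (j:ℕ) := by gcongr
              _ ≤ τ ^ k := by gcongr; omega
      _ = _ := by simp; ring
  calc ‖P.eval (y:ℂ)‖ ^ 2 ≤ ((k+1) * τ ^ k * ‖a‖) ^ 2 := by gcongr
    _ = (k+1)^2 * κ⁻¹ * τ ^ (2*k) * (κ * ‖a‖^2) := by field_simp; ring
    _ ≤ (k+1)^2 * κ⁻¹ * τ ^ (2*k) * (r⁻¹ * ∫ t in Icc (c - r) (c + r), ‖P.eval (t:ℂ)‖ ^ 2) := by gcongr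
    _ = _ := by ring

theorem eLpNorm_two_sq {E : Type*} [NormedAddCommGroup E] (g : ℝ → E) (μ : Measure ℝ) :
    eLpNorm g 2 μ ^ (2:ℕ) = ∫⁻ t, ‖g t‖ₑ ^ (2:ℕ) ∂μ := by
  rw [eLpNorm_eq_lintegral_rpow_enorm_toReal (by norm_num) (by norm_num), ← ENNReal.rpow_natCast, ← ENNReal.rpow_mul]
  simp

theorem poly_vec (k : ℕ) : ∃ C : ℝ, 0 < C ∧ ∀ (N : ℕ) (P : Fin N → Polynomial ℂ),
    (∀ m, (P m).degree < ((k+1 : ℕ) : WithBot ℕ)) →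
    ∀ c r τ y : ℝ, 0 < r → 1 ≤ τ → |y - c| ≤ τ * r →
    ‖pv P y‖ₑ ≤ ENNReal.ofReal (C * τ ^ k * r ^ (-(1/2) : ℝ)) *
      eLpNorm (pv P) 2 (volume.restrict (Icc (c - r) (c + r))) := by
  obtain ⟨C, hC, hsc⟩ := poly_scalar k
  refine ⟨√C, by positivity, fun N P hP c r τ y hr hτ hy => ?_⟩
  have h1 : ‖pv P y‖ ^ 2 ≤ C * τ ^ (2 * k) * r⁻¹ * ∫ t in Icc (c - r) (c + r), ‖pv P t‖ ^ 2 := by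
    have e : ∀ t, ‖pv P t‖ ^ 2 = ∑ m, ‖(P m).eval (t:ℂ)‖ ^ 2 := by
      intro t; rw [EuclideanSpace.norm_sq_eq]; rfl
    simp only [e]
    rw [integral_finset_sum, Finset.mul_sum]
    · exact Finset.sum_le_sum fun m _ => hsc (P m) (hP m) c r τ y hr hτ hy
    · intro m _
      apply Continuous.integrableOn_Icc
      exact (((P m).continuous.comp Complex.continuous_ofReal).norm.pow 2)
  rw [← ENNReal.pow_le_pow_left_iff (n := 2) (by norm_num), mul_pow, eLpNorm_two_sq]
  have h2 : ∫⁻ t in Icc (c - r) (c + r), ‖pv P t‖ₑ ^ 2 = ENNReal.ofReal (∫ t in Icc (c - r) (c + r), ‖pv P t‖ ^ 2) := by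
    rw [ofReal_integral_eq_lintegral_ofReal]
    · apply lintegral_congr; intro t
      rw [ENNReal.ofReal_pow (norm_nonneg _), ofReal_norm_eq_enorm]
    · exact ((continuous_pv P).norm.pow 2).integrableOn_Icc
    · exact Filter.Eventually.of_forall fun t => by positivity
  rw [h2, ← ENNReal.ofReal_pow (by positivity), ← ENNReal.ofReal_mul (by positivity), ← ofReal_norm_eq_enorm,
    ← ENNReal.ofReal_pow (norm_nonneg _)]
  apply ENNReal.ofReal_le_ofReal
  refine h1.trans (le_of_eq ?_)
  congr 1
  rw [mul_pow, mul_pow, Real.sq_sqrt hC.le, ← Real.rpow_natCast (r ^ _), ← Real.rpow_mul hr.le, ← pow_mul, mul_comm 2 k]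
  congr 1
  norm_num [Real.rpow_neg_one]


theorem poly_at (k : ℕ) : ∃ C : ℝ, 0 < C ∧ ∀ (N : ℕ) (P : Fin N → Polynomial ℂ),
    (∀ m, (P m).degree < ((k+1 : ℕ) : WithBot ℕ)) →
    ∀ a b t : ℝ, a < b → t ∈ Icc a b →
    ‖pv P t‖ₑ ≤ ENNReal.ofReal (C * (b - a) ^ (-(1/2) : ℝ)) *
      eLpNorm (pv P) 2 (volume.restrict (Icc a b)) := by
  obtain ⟨C, hC, h⟩ := poly_vec k
  refine ⟨C * (1/2) ^ (-(1/2) : ℝ), by positivity, fun N P hP a b t hab ht => ?_⟩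
  have := h N P hP ((a+b)/2) ((b-a)/2) 1 t (by linarith) le_rfl (by
    rw [abs_le]; constructor <;> linarith [ht.1, ht.2])
  rw [show (a+b)/2 - (b-a)/2 = a by ring, show (a+b)/2 + (b-a)/2 = b by ring] at this
  refine this.trans (le_of_eq ?_)
  congr 2
  rw [show (b - a)/2 = (1/2) * (b-a) by ring, Real.mul_rpow (by norm_num) (by linarith)]
  ring

theorem rpow_aux (d s : ℝ) (hd : 0 < d) : d ^ (-(1/2) : ℝ) * d ^ (s + 1/2) = d ^ s := by
  rw [← Real.rpow_add hd]; congr 1; ring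

theorem ptw (k : ℕ) (s : ℝ) (hs : 0 < s) : ∃ C : ℝ, 0 < C ∧ ∀ (N : ℕ) (g : ℝ → EuclideanSpace ℂ (Fin N)),
    Continuous g → ∀ (u v t : ℝ), u < v → t ∈ Icc u v → ∀ (lam : ℕ → ℝ), (∀ j, 0 ≤ lam j) →
    ∀ P : ℕ → Fin N → Polynomial ℂ, (∀ j m, (P j m).degree < ((k+1 : ℕ) : WithBot ℕ)) →
    (∀ j, eLpNorm (fun x => g x - pv (P j) x) 2
      (volume.restrict (Icc (t - (1/2)^j * (t - u)) (t + (1/2)^j * (v - t)))) ≤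
        ENNReal.ofReal (lam j * ((1/2)^j * (v - u)) ^ (s + 1/2))) →
    ‖g t - pv (P 0) t‖ₑ ≤ ENNReal.ofReal C *
      ∑' j, ENNReal.ofReal (lam j * ((1/2)^j * (v - u)) ^ s) := by
  obtain ⟨C, hC, hat⟩ := poly_at k
  refine ⟨C * 5, by positivity, fun N g hg u v t huv ht lam hlam P hP hb => ?_⟩
  set I : ℕ → Set ℝ := fun j => Icc (t - (1/2)^j * (t - u)) (t + (1/2)^j * (v - t)) with hI
  set d : ℕ → ℝ := fun j => (1/2)^j * (v - u) with hd
  have hd0 : ∀ j, 0 < d j := fun j => by have : 0 < v - u := by linarith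
                                         positivity
  have hdj : ∀ j, d j = 2 * d (j+1) := fun j => by simp only [hd]; rw [pow_succ]; ring
  set T : ℕ → ℝ≥0∞ := fun j => ENNReal.ofReal (lam j * (d j) ^ s) with hT
  have htI : ∀ j, t ∈ I j := by
    intro j
    have h1 : 0 ≤ (1/2:ℝ)^j * (t - u) := mul_nonneg (by positivity) (by linarith [ht.1])
    have h2 : 0 ≤ (1/2:ℝ)^j * (v - t) := mul_nonneg (by positivity) (by linarith [ht.2])
    exact ⟨by linarith, by linarith⟩
  have hIlen : ∀ j, (t + (1/2)^j * (v - t)) - (t - (1/2)^j * (t - u)) = d j := by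
    intro j; simp only [hd]; ring
  have hIsub : ∀ j, I (j+1) ⊆ I j := by
    intro j
    have h1 : 0 ≤ (1/2:ℝ)^j * (t - u) := mul_nonneg (by positivity) (by linarith [ht.1])
    have h2 : 0 ≤ (1/2:ℝ)^j * (v - t) := mul_nonneg (by positivity) (by linarith [ht.2])
    apply Icc_subset_Icc
    · rw [pow_succ]; nlinarith
    · rw [pow_succ]; nlinarith
  have hatj : ∀ j (Q : Fin N → Polynomial ℂ), (∀ m, (Q m).degree < ((k+1 : ℕ) : WithBot ℕ)) →
      ‖pv Q t‖ₑ ≤ ENNReal.ofReal (C * (d j) ^ (-(1/2) : ℝ)) * eLpNorm (pv Q) 2 (volume.restrict (I j)) := by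
    intro j Q hQ
    have := hat N Q hQ (t - (1/2)^j * (t - u)) (t + (1/2)^j * (v - t)) t
      (by have := hIlen j; have := hd0 j; linarith) (htI j)
    rwa [hIlen] at this
  have hmeas : ∀ j, AEStronglyMeasurable (fun x => g x - pv (P j) x) (volume.restrict (I j)) := fun j =>
    (hg.sub (continuous_pv _)).aestronglyMeasurable
  -- successive differences
  have hdiff : ∀ j, ‖pv (P (j+1)) t - pv (P j) t‖ₑ ≤ ENNReal.ofReal (2 * C) * (T j + T (j+1)) := by
    intro j
    rw [← pv_sub]
    refine (hatj (j+1) _ (fun m => ?_)).trans ?_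
    · exact (Polynomial.degree_sub_le _ _).trans_lt (max_lt (hP _ _) (hP _ _))
    have e : pv (fun m => P (j+1) m - P j m) = (fun x => g x - pv (P j) x) - (fun x => g x - pv (P (j+1)) x) := by
      ext1 x; rw [pv_sub]; simp
    have h1 : eLpNorm (pv (fun m => P (j+1) m - P j m)) 2 (volume.restrict (I (j+1))) ≤
        ENNReal.ofReal (lam j * d j ^ (s + 1/2)) + ENNReal.ofReal (lam (j+1) * d (j+1) ^ (s + 1/2)) := by
      rw [e]
      refine (eLpNorm_sub_le ?_ ?_ (by norm_num)).trans ?_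
      · exact (hg.sub (continuous_pv _)).aestronglyMeasurable
      · exact (hg.sub (continuous_pv _)).aestronglyMeasurable
      · gcongr
        · exact (eLpNorm_mono_measure _ (Measure.restrict_mono (hIsub j) le_rfl)).trans (hb j)
        · exact hb (j+1)
    refine (mul_le_mul_right h1 _).trans ?_
    rw [mul_add, mul_add]
    have hlj := hlam j; have hlj1 := hlam (j+1)
    have hp := hd0 j; have hp1 := hd0 (j+1)
    refine add_le_add ?_ ?_
    · rw [hT, ← ENNReal.ofReal_mul (by positivity), ← ENNReal.ofReal_mul (by positivity)]
      apply ENNReal.ofReal_le_ofReal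
      have h3 : d (j+1) ^ (-(1/2) : ℝ) ≤ 2 * d j ^ (-(1/2) : ℝ) := by
        rw [hdj j, Real.mul_rpow (by norm_num) hp1.le]
        have : (1:ℝ) ≤ 2 * 2 ^ (-(1/2) : ℝ) := by
          have : (2:ℝ) ^ (-1:ℝ) ≤ 2 ^ (-(1/2) : ℝ) := Real.rpow_le_rpow_of_exponent_le (by norm_num) (by norm_num)
          rw [Real.rpow_neg_one] at this; linarith
        have h4 : 0 ≤ d (j+1) ^ (-(1/2) : ℝ) := by positivity
        nlinarith
      calc C * d (j+1) ^ (-(1/2) : ℝ) * (lam j * d j ^ (s + 1/2)) ≤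
          C * (2 * d j ^ (-(1/2) : ℝ)) * (lam j * d j ^ (s + 1/2)) := by gcongr
        _ = 2 * C * (lam j * (d j ^ (-(1/2) : ℝ) * d j ^ (s + 1/2))) := by ring
        _ = _ := by rw [rpow_aux _ _ hp]
    · rw [hT, ← ENNReal.ofReal_mul (by positivity), ← ENNReal.ofReal_mul (by positivity)]
      apply ENNReal.ofReal_le_ofReal
      calc C * d (j+1) ^ (-(1/2) : ℝ) * (lam (j+1) * d (j+1) ^ (s + 1/2)) 
          = C * (lam (j+1) * (d (j+1) ^ (-(1/2) : ℝ) * d (j+1) ^ (s + 1/2))) := by ring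
        _ = C * (lam (j+1) * d (j+1) ^ s) := by rw [rpow_aux _ _ hp1]
        _ ≤ _ := by have : 0 ≤ C * (lam (j+1) * d (j+1) ^ s) := by positivity
                    linarith
  have hlast : ∀ ε : ℝ, 0 < ε → ∃ K, ‖g t - pv (P K) t‖ₑ ≤ ENNReal.ofReal C * T K + ENNReal.ofReal (C * ε) := by
    intro ε hε
    obtain ⟨δ, hδ, hδg⟩ := Metric.continuousAt_iff.1 (hg.continuousAt (x := t)) ε hε
    obtain ⟨K, hK⟩ := exists_pow_lt_of_lt_one (show 0 < δ / (v - u) by apply div_pos hδ; linarith)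
      (show (1/2:ℝ) < 1 by norm_num)
    rw [lt_div_iff₀ (by linarith)] at hK
    refine ⟨K, ?_⟩
    set Q : Fin N → Polynomial ℂ := fun m => Polynomial.C (g t m)
    have hQ : ∀ x, pv Q x = g t := by intro x; ext m; simp [pv, Q]
    have h0 : ‖g t - pv (P K) t‖ₑ = ‖pv (fun m => Q m - P K m) t‖ₑ := by rw [pv_sub, hQ]
    rw [h0]
    refine (hatj K _ (fun m => ?_)).trans ?_
    · refine (Polynomial.degree_sub_le _ _).trans_lt (max_lt ?_ (hP _ _))
      exact Polynomial.degree_C_le.trans_lt (by exact_mod_cast Nat.succ_pos k)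
    have e : pv (fun m => Q m - P K m) = (fun x => g x - pv (P K) x) - (fun x => g x - g t) := by
      ext1 x; rw [pv_sub, hQ]; simp
    have hp := hd0 K
    have hl := hlam K
    have h2 : eLpNorm (fun x => g x - g t) 2 (volume.restrict (I K)) ≤ ENNReal.ofReal ((d K) ^ (1/2 : ℝ) * ε) := by
      have := eLpNorm_le_of_ae_bound (p := 2) (μ := volume.restrict (I K)) (f := fun x => g x - g t) (C := ε) (by
        refine (ae_restrict_iff' measurableSet_Icc).2 (Filter.Eventually.of_forall fun x hx => ?_)
        rw [← dist_eq_norm]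
        apply (hδg _).le
        have h3 : |x - t| ≤ d K := by
          have := hIlen K; have := htI K
          rw [abs_le]; constructor <;> linarith [hx.1, hx.2, this.1, this.2]
        exact h3.trans_lt hK)
      refine this.trans (le_of_eq ?_)
      rw [Measure.restrict_apply_univ, Real.volume_Icc, hIlen,
        ENNReal.ofReal_mul (p := d K ^ (1/2:ℝ)) (by positivity),
        ← ENNReal.ofReal_rpow_of_pos hp]
      norm_num
    have h1 : eLpNorm (pv (fun m => Q m - P K m)) 2 (volume.restrict (I K)) ≤
        ENNReal.ofReal (lam K * d K ^ (s + 1/2)) + ENNReal.ofReal ((d K) ^ (1/2 : ℝ) * ε) := by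
      rw [e]
      refine (eLpNorm_sub_le ?_ ?_ (by norm_num)).trans ?_
      · exact (hg.sub (continuous_pv _)).aestronglyMeasurable
      · exact (hg.sub continuous_const).aestronglyMeasurable
      · gcongr
        exact hb K
    refine (mul_le_mul_right h1 _).trans ?_
    rw [mul_add]
    apply le_of_eq
    congr 1
    · rw [hT, ← ENNReal.ofReal_mul (by positivity), ← ENNReal.ofReal_mul (by positivity)]
      congr 1
      calc _ = C * (lam K * (d K ^ (-(1/2) : ℝ) * d K ^ (s + 1/2))) := by ring
        _ = _ := by rw [rpow_aux _ _ hp]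
    · rw [← ENNReal.ofReal_mul (by positivity)]
      congr 1
      have : d K ^ (-(1/2) : ℝ) * d K ^ (1/2:ℝ) = 1 := by rw [← Real.rpow_add hp]; norm_num
      linear_combination (C * ε) * this
  have hsum : ∀ K, ‖pv (P K) t - pv (P 0) t‖ₑ ≤ ∑ j ∈ Finset.range K, ENNReal.ofReal (2 * C) * (T j + T (j+1)) := by
    intro K
    induction K with
    | zero => simp
    | succ K ih =>
      rw [Finset.sum_range_succ]
      calc ‖pv (P (K+1)) t - pv (P 0) t‖ₑ = ‖(pv (P K) t - pv (P 0) t) + (pv (P (K+1)) t - pv (P K) t)‖ₑ := by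
            congr 1; abel
        _ ≤ _ := (enorm_add_le _ _).trans (add_le_add ih (hdiff K))
  have hsum2 : ∀ K, ∑ j ∈ Finset.range K, ENNReal.ofReal (2 * C) * (T j + T (j+1)) ≤ ENNReal.ofReal (4 * C) * ∑' j, T j := by
    intro K
    rw [← Finset.mul_sum, Finset.sum_add_distrib]
    have a1 : ∑ j ∈ Finset.range K, T j ≤ ∑' j, T j := ENNReal.sum_le_tsum _
    have a2 : ∑ j ∈ Finset.range K, T (j+1) ≤ ∑' j, T j :=
      (ENNReal.sum_le_tsum _).trans (ENNReal.tsum_comp_le_tsum_of_injective (add_left_injective 1) T)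
    calc _ ≤ ENNReal.ofReal (2 * C) * (∑' j, T j + ∑' j, T j) := by gcongr
      _ = _ := by rw [show 4 * C = 2 * C * 2 by ring, ENNReal.ofReal_mul (by positivity) (q := 2)]
                  simp only [ENNReal.ofReal_ofNat]; ring
  apply ENNReal.le_of_forall_pos_le_add
  intro ε hε _
  obtain ⟨K, hK⟩ := hlast (ε / C) (by positivity)
  rw [mul_div_cancel₀ _ hC.ne', ENNReal.ofReal_coe_nnreal] at hK
  calc ‖g t - pv (P 0) t‖ₑ = ‖(g t - pv (P K) t) + (pv (P K) t - pv (P 0) t)‖ₑ := by congr 1; abel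
    _ ≤ (ENNReal.ofReal C * T K + ε) + ENNReal.ofReal (4 * C) * ∑' j, T j :=
      (enorm_add_le _ _).trans (add_le_add hK ((hsum K).trans (hsum2 K)))
    _ ≤ (ENNReal.ofReal C * (∑' j, T j) + ε) + ENNReal.ofReal (4 * C) * ∑' j, T j := by
      gcongr; exact ENNReal.le_tsum K
    _ = _ := by
      rw [show C * 5 = C + 4 * C by ring, ENNReal.ofReal_add (by positivity) (by positivity)]
      ring


theorem aff_int (W : ℝ → ℝ≥0∞) (u v q t : ℝ) (hq : 0 < q) :
    ENNReal.ofReal q * ∫⁻ z in Icc u v, W ((1 - q) * t + q * z) =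
      ∫⁻ z in Icc (t - q * (t - u)) (t + q * (v - t)), W z := by
  have himg : (fun z => q * z + (1 - q) * t) '' Icc u v = Icc (t - q * (t - u)) (t + q * (v - t)) := by
    rw [Set.image_affine_Icc' hq]; congr 1 <;> ring
  rw [← himg, lintegral_image_eq_lintegral_abs_deriv_mul (f' := fun _ => q) measurableSet_Icc
    (fun x _ => ?_) (fun x _ y _ h => ?_), ← lintegral_const_mul' _ _ (by simp)]
  · simp only [abs_of_pos hq]
    congr 1; ext z; rw [add_comm]
  · have : HasDerivAt (fun z => q * z + (1 - q) * t) q x := by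
      simpa using ((hasDerivAt_id x).const_mul q).add_const ((1-q)*t)
    exact this.hasDerivWithinAt
  · have := mul_left_cancel₀ hq.ne' (add_right_cancel h)
    exact this

theorem avg_half (W : ℝ → ℝ≥0∞) (u v q : ℝ) (hq : 1/2 ≤ q) (hq1 : q ≤ 1) (t : ℝ) (ht : t ∈ Icc u v) :
    ∫⁻ z in Icc u v, W ((1 - q) * t + q * z) ≤ 2 * ∫⁻ z in Icc u v, W z := by
  have h := aff_int W u v q t (by linarith)
  have h2 : ∫⁻ z in Icc (t - q * (t - u)) (t + q * (v - t)), W z ≤ ∫⁻ z in Icc u v, W z := by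
    apply lintegral_mono_set
    apply Icc_subset_Icc <;> nlinarith [ht.1, ht.2]
  have h1 : (1:ℝ≥0∞) ≤ 2 * ENNReal.ofReal q := by
    rw [show (2:ℝ≥0∞) = ENNReal.ofReal 2 by simp, ← ENNReal.ofReal_mul (by norm_num), ← ENNReal.ofReal_one]
    apply ENNReal.ofReal_le_ofReal; linarith
  calc _ ≤ (2 * ENNReal.ofReal q) * ∫⁻ z in Icc u v, W ((1 - q) * t + q * z) := by
        conv_lhs => rw [← one_mul (∫⁻ z in Icc u v, W ((1 - q) * t + q * z))]
        gcongr
    _ ≤ _ := by rw [mul_assoc, h]; gcongr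

theorem avg_int (W : ℝ → ℝ≥0∞) (hW : Measurable W) (u v q : ℝ) (hq : 0 < q) (hq1 : q ≤ 1) :
    ∫⁻ t in Icc u v, ∫⁻ z in Icc u v, W ((1 - q) * t + q * z) ≤
      2 * ENNReal.ofReal (v - u) * ∫⁻ z in Icc u v, W z := by
  have key : ∀ q : ℝ, 1/2 ≤ q → q ≤ 1 → ∫⁻ t in Icc u v, ∫⁻ z in Icc u v, W ((1 - q) * t + q * z) ≤
      2 * ENNReal.ofReal (v - u) * ∫⁻ z in Icc u v, W z := by
    intro q h1 h2
    calc _ ≤ ∫⁻ t in Icc u v, 2 * ∫⁻ z in Icc u v, W z :=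
          setLIntegral_mono' measurableSet_Icc (fun t ht => avg_half W u v q h1 h2 t ht)
      _ = _ := by rw [setLIntegral_const, Real.volume_Icc]; ring
  rcases le_total (1/2) q with h | h
  · exact key q h hq1
  · rw [lintegral_lintegral_swap]
    · refine le_trans (le_of_eq ?_) (key (1 - q) (by linarith) (by linarith))
      congr 1; ext t; congr 1; ext z; congr 1; ring
    · apply Measurable.aemeasurable
      apply hW.comp
      fun_prop

theorem geom_fin (s : ℝ) (hs : 0 < s) : ∑' j : ℕ, ENNReal.ofReal ((1/2:ℝ)^j) ^ s ≠ ⊤ := by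
  have h : ∀ j : ℕ, ENNReal.ofReal ((1/2:ℝ)^j) ^ s = (ENNReal.ofReal ((1/2:ℝ) ^ s)) ^ j := by
    intro j
    rw [ENNReal.ofReal_pow (by norm_num), ← ENNReal.ofReal_rpow_of_pos (by norm_num),
      ← ENNReal.rpow_natCast, ← ENNReal.rpow_natCast, ← ENNReal.rpow_mul, ← ENNReal.rpow_mul, mul_comm]
  simp_rw [h]
  rw [ENNReal.tsum_geometric, ne_eq, ENNReal.inv_eq_top, tsub_eq_zero_iff_le, not_le]
  rw [← ENNReal.ofReal_one]
  apply (ENNReal.ofReal_lt_ofReal_iff (by norm_num)).2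
  exact Real.rpow_lt_one (by norm_num) (by norm_num) hs

theorem sum_pow (s p : ℝ) (hp : 0 < p) (L : ℕ → ℝ≥0∞) :
    (∑' j : ℕ, ENNReal.ofReal ((1/2:ℝ)^j) ^ s * L j) ^ p ≤
      (∑' j : ℕ, ENNReal.ofReal ((1/2:ℝ)^j) ^ (s/2)) ^ p *
      ∑' j : ℕ, ENNReal.ofReal ((1/2:ℝ)^j) ^ (s * p / 2) * L j ^ p := by
  set B := ∑' j : ℕ, ENNReal.ofReal ((1/2:ℝ)^j) ^ (s * p / 2) * L j ^ p
  have h1 : ∀ j, ENNReal.ofReal ((1/2:ℝ)^j) ^ (s/2) * L j ≤ B ^ (1/p) := by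
    intro j
    rw [one_div p, ENNReal.le_rpow_inv_iff hp, ENNReal.mul_rpow_of_nonneg _ _ hp.le, ← ENNReal.rpow_mul,
      show s/2*p = s*p/2 by ring]
    exact ENNReal.le_tsum j
  have h2 : ∀ j : ℕ, ENNReal.ofReal ((1/2:ℝ)^j) ^ s * L j ≤ ENNReal.ofReal ((1/2:ℝ)^j) ^ (s/2) * B ^ (1/p) := by
    intro j
    have : ENNReal.ofReal ((1/2:ℝ)^j) ^ s = ENNReal.ofReal ((1/2:ℝ)^j) ^ (s/2) * ENNReal.ofReal ((1/2:ℝ)^j) ^ (s/2) := by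
      rw [← ENNReal.rpow_add _ _ (by simp) (by simp)]; congr 1; ring
    rw [this, mul_assoc]
    gcongr
    exact h1 j
  calc _ ≤ (∑' j : ℕ, ENNReal.ofReal ((1/2:ℝ)^j) ^ (s/2) * B ^ (1/p)) ^ p := by
        exact ENNReal.rpow_le_rpow (ENNReal.tsum_le_tsum h2) hp.le
    _ = _ := by
      rw [ENNReal.tsum_mul_right, ENNReal.mul_rpow_of_nonneg _ _ hp.le, ← ENNReal.rpow_mul,
        one_div_mul_cancel hp.ne', ENNReal.rpow_one]

theorem self_improve (k : ℕ) (s p : ℝ) (hs : 0 < s) (hp : 0 < p) : ∃ C : ℝ≥0∞, C ≠ ⊤ ∧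
    ∀ (N : ℕ) (g : ℝ → EuclideanSpace ℂ (Fin N)), Continuous g → ∀ H : ℝ → ℝ≥0∞, Measurable H →
    (∀ x (lam : ℝ), H x < ENNReal.ofReal lam → ∀ u v, u < v → x ∈ Icc u v →
      ∃ P : Fin N → Polynomial ℂ, (∀ m, (P m).degree < ((k+1 : ℕ) : WithBot ℕ)) ∧
        eLpNorm (fun x => g x - pv P x) 2 (volume.restrict (Icc u v)) ≤
          ENNReal.ofReal (lam * (v - u) ^ (s + 1/2))) →
    ∀ r : ℝ, r = 1 + s * p / 4 → ∀ u v : ℝ, u < v →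
      ∀ A : ℝ≥0∞, A = (ENNReal.ofReal (v - u))⁻¹ * ∫⁻ z in Icc u v, (H z) ^ (p / r) → A ≠ ⊤ →
      ∀ η : ℝ, 0 < η →
      ∃ P : Fin N → Polynomial ℂ, (∀ m, (P m).degree < ((k+1 : ℕ) : WithBot ℕ)) ∧
        ∫⁻ t in Icc u v, ‖g t - pv P t‖ₑ ^ p ≤ C * ENNReal.ofReal (v - u) ^ (s * p) * ENNReal.ofReal (v - u) *
          (A ^ r + ENNReal.ofReal η ^ p) := by
  obtain ⟨C, hC, hptw⟩ := ptw k s hs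
  set K1 := (∑' j : ℕ, ENNReal.ofReal ((1/2:ℝ)^j) ^ (s/2))
  set K2 := (∑' j : ℕ, ENNReal.ofReal ((1/2:ℝ)^j) ^ (s*p/4))
  have hK1 : K1 ≠ ⊤ := geom_fin _ (by positivity)
  have hK2 : K2 ≠ ⊤ := geom_fin _ (by positivity)
  refine ⟨ENNReal.ofReal C ^ p * K1 ^ p * 2 ^ p * K2 * 2, ?_, ?_⟩
  · have : ∀ x : ℝ≥0∞, x ≠ ⊤ → x ^ p ≠ ⊤ := fun x hx => ENNReal.rpow_ne_top_of_nonneg hp.le hx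
    exact ENNReal.mul_ne_top (ENNReal.mul_ne_top (ENNReal.mul_ne_top (ENNReal.mul_ne_top (this _ (by simp)) (this _ hK1)) (this _ (by simp))) hK2) (by simp)
  intro N g hg H hH hyp r hr u v huv A hA hAt η hη
  have hr1 : 1 < r := by rw [hr]; have : 0 < s * p := by positivity
                         linarith
  set σ := p / r with hσ
  have hσ0 : 0 < σ := by positivity
  set W : ℝ → ℝ≥0∞ := fun z => H z ^ σ with hWdef
  have hW : Measurable W := hH.pow_const _
  set l := ENNReal.ofReal (v - u) with hl
  have hl0 : l ≠ 0 := by simp [hl, huv]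
  have hlt : l ≠ ⊤ := by simp [hl]
  set Aj : ℕ → ℝ → ℝ≥0∞ := fun j t => l⁻¹ * ∫⁻ z in Icc u v, W ((1 - (1/2)^j) * t + (1/2)^j * z) with hAj
  have hq0 : ∀ j, (0:ℝ) < (1/2)^j := fun j => by positivity
  have hq1 : ∀ j, ((1/2)^j : ℝ) ≤ 1 := fun j => pow_le_one₀ (by norm_num) (by norm_num)
  have hAjm : ∀ j, Measurable (Aj j) := by
    intro j
    apply Measurable.const_mul
    apply Measurable.lintegral_prod_right
    exact hW.comp (by fun_prop)
  -- Aj as an average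
  have hAjavg : ∀ j t, Aj j t = (ENNReal.ofReal ((1/2)^j * (v - u)))⁻¹ *
      ∫⁻ z in Icc (t - (1/2)^j * (t - u)) (t + (1/2)^j * (v - t)), W z := by
    intro j t
    rw [← aff_int W u v _ t (hq0 j), ENNReal.ofReal_mul (hq0 j).le, ENNReal.mul_inv (by simp) (by simp)]
    rw [show ∀ a b c d : ℝ≥0∞, a * b * (c * d) = (a * c) * (b * d) by intros; ring,
      ENNReal.inv_mul_cancel (by simp) (by simp), one_mul]
  have hAjA : ∀ j t, t ∈ Icc u v → Aj j t ≤ (ENNReal.ofReal ((1/2)^j))⁻¹ * A := by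
    intro j t ht
    rw [hAjavg, hA, ENNReal.ofReal_mul (hq0 j).le, ENNReal.mul_inv (by simp) (by simp), mul_assoc]
    gcongr
    · nlinarith [hq0 j, hq1 j, ht.1, ht.2]
    · nlinarith [hq0 j, hq1 j, ht.1, ht.2]
  have hAjt : ∀ j t, t ∈ Icc u v → Aj j t ≠ ⊤ := fun j t ht =>
    ne_top_of_le_ne_top (ENNReal.mul_ne_top (by simp) hAt) (hAjA j t ht)
  have hA0 : ∀ t, Aj 0 t = A := by
    intro t; rw [hAjavg, hA]; simp [hl]
  -- polynomial selection
  have hsel : ∀ (a b : ℝ) (B : ℝ≥0∞), a < b → B = (ENNReal.ofReal (b - a))⁻¹ * ∫⁻ z in Icc a b, W z → B ≠ ⊤ →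
      ∃ P : Fin N → Polynomial ℂ, (∀ m, (P m).degree < ((k+1 : ℕ) : WithBot ℕ)) ∧
        eLpNorm (fun x => g x - pv P x) 2 (volume.restrict (Icc a b)) ≤
          ENNReal.ofReal (((B ^ (1/σ)).toReal + η) * (b - a) ^ (s + 1/2)) := by
    intro a b B hab hB hBt
    obtain ⟨x, hx, hxB⟩ := exists_le_setLAverage (μ := volume) (s := Icc a b) (f := W)
      (by simp [hab]) (by simp) hW.aemeasurable
    rw [setLAverage_eq, Real.volume_Icc, div_eq_mul_inv, mul_comm, ← hB] at hxB
    refine hyp x _ ?_ a b hab hx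
    have h1 : H x ≤ B ^ (1/σ) := by rwa [one_div σ, ENNReal.le_rpow_inv_iff hσ0]
    have h2 : B ^ (1/σ) ≠ ⊤ := ENNReal.rpow_ne_top_of_nonneg (by positivity) hBt
    refine h1.trans_lt ?_
    rw [ENNReal.ofReal_add (by positivity) hη.le, ENNReal.ofReal_toReal h2]
    exact ENNReal.lt_add_right h2 (by simp [hη])
  obtain ⟨P0, hP0, hP0b⟩ := hsel u v A huv hA hAt
  refine ⟨P0, hP0, ?_⟩
  set L : ℕ → ℝ → ℝ≥0∞ := fun j t => Aj j t ^ (1/σ) + ENNReal.ofReal η with hL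
  have hpt : ∀ t ∈ Icc u v, ‖g t - pv P0 t‖ₑ ≤ ENNReal.ofReal C * (l ^ s *
      ∑' j : ℕ, ENNReal.ofReal ((1/2:ℝ)^j) ^ s * L j t) := by
    intro t ht
    have hch : ∀ j : ℕ, ∃ P : Fin N → Polynomial ℂ, (∀ m, (P m).degree < ((k+1 : ℕ) : WithBot ℕ)) ∧
        (eLpNorm (fun x => g x - pv P x) 2
      (volume.restrict (Icc (t - (1/2)^j * (t - u)) (t + (1/2)^j * (v - t)))) ≤
        ENNReal.ofReal (((Aj j t ^ (1/σ)).toReal + η) * ((1/2)^j * (v - u)) ^ (s + 1/2))) ∧ (j = 0 → P = P0) := by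
      intro j
      rcases Nat.eq_zero_or_pos j with rfl | hj
      · refine ⟨P0, hP0, ?_, fun _ => rfl⟩
        rw [hA0]; simpa using hP0b
      · have hlen : (t + (1/2)^j * (v - t)) - (t - (1/2)^j * (t - u)) = (1/2)^j * (v - u) := by ring
        obtain ⟨P, h1, h2⟩ := hsel (t - (1/2)^j * (t - u)) (t + (1/2)^j * (v - t)) (Aj j t)
          (by rw [← sub_pos, hlen]; exact mul_pos (hq0 j) (by linarith)) (by rw [hlen]; exact hAjavg j t) (hAjt j t ht)
        rw [hlen] at h2
        exact ⟨P, h1, h2, fun h => by omega⟩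
    choose P h1 h2 h3 using hch
    have := hptw N g hg u v t huv ht (fun j => (Aj j t ^ (1/σ)).toReal + η) (fun j => by positivity) P h1 h2
    rw [h3 0 rfl] at this
    refine this.trans (le_of_eq ?_)
    rw [← ENNReal.tsum_mul_left (a := l ^ s)]
    congr 2; ext j
    rw [ENNReal.ofReal_mul (by positivity), ENNReal.ofReal_add (by positivity) hη.le, ENNReal.ofReal_toReal
      (ENNReal.rpow_ne_top_of_nonneg (by positivity) (hAjt j t ht)), ← ENNReal.ofReal_rpow_of_pos
        (mul_pos (hq0 j) (by linarith)), ENNReal.ofReal_mul (hq0 j).le, ENNReal.mul_rpow_of_nonneg _ _ hs.le]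
    ring
  -- p-th power
  have hσr : 1/σ * p = r := by rw [hσ]; field_simp
  have hpt2 : ∀ t ∈ Icc u v, ‖g t - pv P0 t‖ₑ ^ p ≤ (ENNReal.ofReal C ^ p * l ^ (s*p) * K1 ^ p * 2 ^ p) *
      ∑' j : ℕ, ENNReal.ofReal ((1/2:ℝ)^j) ^ (s*p/4) * (Aj j t * A ^ (r-1) + ENNReal.ofReal η ^ p) := by
    intro t ht
    calc _ ≤ (ENNReal.ofReal C * (l ^ s * ∑' j : ℕ, ENNReal.ofReal ((1/2:ℝ)^j) ^ s * L j t)) ^ p := by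
          gcongr; exact hpt t ht
      _ = ENNReal.ofReal C ^ p * l ^ (s*p) * (∑' j : ℕ, ENNReal.ofReal ((1/2:ℝ)^j) ^ s * L j t) ^ p := by
          rw [ENNReal.mul_rpow_of_nonneg _ _ hp.le, ENNReal.mul_rpow_of_nonneg _ _ hp.le, ← ENNReal.rpow_mul]; ring
      _ ≤ ENNReal.ofReal C ^ p * l ^ (s*p) * (K1 ^ p *
          ∑' j : ℕ, ENNReal.ofReal ((1/2:ℝ)^j) ^ (s * p / 2) * L j t ^ p) := by
          gcongr; exact sum_pow s p hp _
      _ ≤ ENNReal.ofReal C ^ p * l ^ (s*p) * (K1 ^ p *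
          ∑' j : ℕ, 2 ^ p * (ENNReal.ofReal ((1/2:ℝ)^j) ^ (s*p/4) * (Aj j t * A ^ (r-1) + ENNReal.ofReal η ^ p))) := by
          refine mul_le_mul_right (mul_le_mul_right (ENNReal.tsum_le_tsum fun j => ?_) _) _
          set q := ENNReal.ofReal ((1/2:ℝ)^j) with hq
          have hqp : q ≠ 0 := by simp [hq]
          have hqt : q ≠ ⊤ := by simp [hq]
          have hq1' : q ≤ 1 := by rw [hq, ← ENNReal.ofReal_one]; exact ENNReal.ofReal_le_ofReal (hq1 j)
          have b1 : L j t ^ p ≤ 2 ^ p * (Aj j t ^ r + ENNReal.ofReal η ^ p) := by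
            have : L j t ≤ 2 * max (Aj j t ^ (1/σ)) (ENNReal.ofReal η) := by
              rw [two_mul]; exact add_le_add (le_max_left _ _) (le_max_right _ _)
            calc L j t ^ p ≤ (2 * max (Aj j t ^ (1/σ)) (ENNReal.ofReal η)) ^ p := by gcongr
              _ = 2 ^ p * (max (Aj j t ^ (1/σ)) (ENNReal.ofReal η)) ^ p := ENNReal.mul_rpow_of_nonneg _ _ hp.le
              _ ≤ _ := by
                gcongr
                rcases max_cases (Aj j t ^ (1/σ)) (ENNReal.ofReal η) with ⟨h, _⟩ | ⟨h, _⟩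
                · rw [h, ← ENNReal.rpow_mul, hσr]; exact le_self_add
                · rw [h]; exact le_add_self
          have b2 : q ^ (s*p/4) * Aj j t ^ r ≤ Aj j t * A ^ (r-1) := by
            have e1 : Aj j t ^ r = Aj j t * Aj j t ^ (r-1) := by
              conv_lhs => rw [show r = 1 + (r-1) by ring]
              rw [ENNReal.rpow_add_of_nonneg _ _ (by norm_num) (by linarith), ENNReal.rpow_one]
            have e2 : Aj j t ^ (r-1) ≤ (q⁻¹ * A) ^ (r-1) :=
              ENNReal.rpow_le_rpow (hAjA j t ht) (by linarith)
            have e3 : r - 1 = s*p/4 := by rw [hr]; ring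
            calc _ ≤ q ^ (s*p/4) * (Aj j t * (q⁻¹ * A) ^ (r-1)) := by rw [e1]; gcongr
              _ = (q ^ (s*p/4) * q⁻¹ ^ (s*p/4)) * (Aj j t * A ^ (r-1)) := by
                rw [ENNReal.mul_rpow_of_nonneg _ _ (by linarith : 0 ≤ r - 1), ← e3]; ring
              _ = _ := by
                rw [← ENNReal.mul_rpow_of_nonneg _ _ (by positivity), ENNReal.mul_inv_cancel hqp hqt]; simp
          calc q ^ (s*p/2) * L j t ^ p ≤ q ^ (s*p/2) * (2 ^ p * (Aj j t ^ r + ENNReal.ofReal η ^ p)) := by gcongr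
            _ = 2 ^ p * (q ^ (s*p/4) * (q ^ (s*p/4) * Aj j t ^ r + q ^ (s*p/4) * ENNReal.ofReal η ^ p)) := by
              rw [show s*p/2 = s*p/4 + s*p/4 by ring, ENNReal.rpow_add _ _ hqp hqt]; ring
            _ ≤ _ := by
              refine mul_le_mul_right (mul_le_mul_right (add_le_add b2 ?_) _) _
              calc _ ≤ 1 ^ (s*p/4) * ENNReal.ofReal η ^ p := by gcongr
                _ = _ := by simp
      _ = _ := by rw [ENNReal.tsum_mul_left]; ring
  have hlA : ∫⁻ z in Icc u v, W z = l * A := by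
    rw [hA, ← mul_assoc, ENNReal.mul_inv_cancel hl0 hlt, one_mul]
  have hinteg : ∀ j, ∫⁻ t in Icc u v, Aj j t ≤ 2 * l * A := by
    intro j
    simp only [hAj]
    rw [lintegral_const_mul' _ _ (by simp [hl0])]
    calc _ ≤ l⁻¹ * (2 * l * ∫⁻ z in Icc u v, W z) := by
          gcongr; exact avg_int W hW u v _ (hq0 j) (hq1 j)
      _ = (l⁻¹ * l) * (2 * (l * A)) := by rw [hlA]; ring
      _ = _ := by rw [ENNReal.inv_mul_cancel hl0 hlt]; ring
  have hrA : A * A ^ (r-1) = A ^ r := by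
    conv_rhs => rw [show r = 1 + (r-1) by ring]
    rw [ENNReal.rpow_add_of_nonneg _ _ (by norm_num) (by linarith), ENNReal.rpow_one]
  calc _ ≤ ∫⁻ t in Icc u v, (ENNReal.ofReal C ^ p * l ^ (s*p) * K1 ^ p * 2 ^ p) *
      ∑' j : ℕ, ENNReal.ofReal ((1/2:ℝ)^j) ^ (s*p/4) * (Aj j t * A ^ (r-1) + ENNReal.ofReal η ^ p) :=
        setLIntegral_mono' measurableSet_Icc hpt2
    _ = (ENNReal.ofReal C ^ p * l ^ (s*p) * K1 ^ p * 2 ^ p) * ∑' j : ℕ, ENNReal.ofReal ((1/2:ℝ)^j) ^ (s*p/4) *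
        ((∫⁻ t in Icc u v, Aj j t) * A ^ (r-1) + ENNReal.ofReal η ^ p * l) := by
      have hm : ∀ j, Measurable fun t => Aj j t * A ^ (r-1) + ENNReal.ofReal η ^ p := fun j =>
        ((hAjm j).mul_const _).add_const _
      rw [lintegral_const_mul _ (Measurable.ennreal_tsum fun j => (hm j).const_mul _),
        lintegral_tsum (fun j => ((hm j).const_mul _).aemeasurable)]
      congr 2; ext j
      rw [lintegral_const_mul _ (hm j), lintegral_add_right _ measurable_const, setLIntegral_const,
        lintegral_mul_const _ (hAjm j), Real.volume_Icc]
    _ ≤ (ENNReal.ofReal C ^ p * l ^ (s*p) * K1 ^ p * 2 ^ p) * ∑' j : ℕ, ENNReal.ofReal ((1/2:ℝ)^j) ^ (s*p/4) *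
        (2 * l * (A ^ r + ENNReal.ofReal η ^ p)) := by
      refine mul_le_mul_right (ENNReal.tsum_le_tsum fun j => mul_le_mul_right ?_ _) _
      calc _ ≤ (2 * l * A) * A ^ (r-1) + ENNReal.ofReal η ^ p * (2 * l) := by
            gcongr
            · exact hinteg j
            · rw [two_mul]; exact le_self_add
        _ = _ := by rw [← hrA]; ring
    _ = _ := by rw [ENNReal.tsum_mul_right]; ring


/-- Schwartz functions with Fourier transform vanishing off the open unit interval. -/
def InS (η : SchwartzMap ℝ ℂ) : Prop := ∀ ξ : ℝ, ξ ∉ Ioo (0:ℝ) 1 → 𝓕 (η : ℝ → ℂ) ξ = 0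

/-- Multiplication by the coordinate. -/
noncomputable def mulT (η : SchwartzMap ℝ ℂ) : SchwartzMap ℝ ℂ :=
  SchwartzMap.smulLeftCLM ℂ (fun x : ℝ => x) η

theorem mulT_apply (η : SchwartzMap ℝ ℂ) (x : ℝ) : mulT η x = (x : ℂ) * η x := by
  rw [mulT, SchwartzMap.smulLeftCLM_apply_apply (by fun_prop)]
  simp

theorem InS.mulT {η : SchwartzMap ℝ ℂ} (h : InS η) : InS (mulT η) := by
  intro ξ hξ
  have hi : Integrable (fun x : ℝ ↦ x • η x) := by
    have := (_root_.mulT η).integrable (μ := volume)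
    refine this.congr (Filter.Eventually.of_forall fun x => ?_)
    simp [mulT_apply]
  have hd := Real.hasDerivAt_fourier η.integrable hi ξ
  have e : 𝓕 (fun x : ℝ ↦ (-2 * π * Complex.I * x) • η x) ξ = (-2 * π * Complex.I) * 𝓕 (_root_.mulT η : ℝ → ℂ) ξ := by
    rw [Real.fourier_eq, Real.fourier_eq, ← integral_const_mul]
    congr 1; ext x
    simp only [mulT_apply, Circle.smul_def, smul_eq_mul]; ring
  rw [e] at hd
  have hz : (-2 * π * Complex.I) * 𝓕 (_root_.mulT η : ℝ → ℂ) ξ = 0 := by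
    rw [mem_Ioo, not_and_or, not_lt, not_lt] at hξ
    rcases hξ with hξ | hξ
    · have h0 : HasDerivWithinAt (𝓕 (η : ℝ → ℂ)) 0 (Iic ξ) ξ := by
        refine (hasDerivWithinAt_const ξ (Iic ξ) (0:ℂ)).congr (fun y hy => ?_) ?_
        · exact h y (fun hh => absurd hh.1 (not_lt.2 (le_trans hy hξ)))
        · exact h ξ (fun hh => absurd hh.1 (not_lt.2 hξ))
      exact (uniqueDiffOn_Iic ξ ξ (by simp)).eq_deriv _ hd.hasDerivWithinAt h0
    · have h0 : HasDerivWithinAt (𝓕 (η : ℝ → ℂ)) 0 (Ici ξ) ξ := by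
        refine (hasDerivWithinAt_const ξ (Ici ξ) (0:ℂ)).congr (fun y hy => ?_) ?_
        · exact h y (fun hh => absurd hh.2 (not_lt.2 (le_trans hξ hy)))
        · exact h ξ (fun hh => absurd hh.2 (not_lt.2 hξ))
      exact (uniqueDiffOn_Ici ξ ξ (by simp)).eq_deriv _ hd.hasDerivWithinAt h0
  have : (-2 * π * Complex.I : ℂ) ≠ 0 := by simp [Real.pi_ne_zero]
  exact (mul_eq_zero.1 hz).resolve_left this

/-- derivative -/
noncomputable def dS (η : SchwartzMap ℝ ℂ) : SchwartzMap ℝ ℂ := SchwartzMap.derivCLM ℂ ℂ η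

theorem dS_hasDerivAt (η : SchwartzMap ℝ ℂ) (x : ℝ) : HasDerivAt η (dS η x) x := by
  rw [dS, SchwartzMap.derivCLM_apply]; exact η.differentiableAt.hasDerivAt

theorem InS.dS {η : SchwartzMap ℝ ℂ} (h : InS η) : InS (dS η) := by
  intro ξ hξ
  have e : (_root_.dS η : ℝ → ℂ) = deriv (η : ℝ → ℂ) := by
    ext x; exact (dS_hasDerivAt η x).deriv.symm
  rw [e, Real.fourier_deriv η.integrable η.differentiable (by rw [← e]; exact (_root_.dS η).integrable)]
  simp [h ξ hξ]

theorem InS.poly {η : SchwartzMap ℝ ℂ} (h : InS η) (R : Polynomial ℂ) :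
    ∃ θ : SchwartzMap ℝ ℂ, InS θ ∧ ∀ x : ℝ, θ x = R.eval (x : ℂ) * η x := by
  induction R using Polynomial.induction_on' with
  | add p q hp hq =>
    obtain ⟨θ1, h1, e1⟩ := hp
    obtain ⟨θ2, h2, e2⟩ := hq
    refine ⟨θ1 + θ2, fun ξ hξ => ?_, fun x => by simp [e1, e2]; ring⟩
    have : 𝓕 (θ1 + θ2) = 𝓕 θ1 + 𝓕 θ2 := FourierTransform.fourier_add θ1 θ2
    have h3 := congrArg (fun f : SchwartzMap ℝ ℂ => f ξ) this
    simp only [SchwartzMap.add_apply, SchwartzMap.fourier_coe] at h3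
    rw [h3, h1 ξ hξ, h2 ξ hξ, add_zero]
  | monomial n c =>
    induction n with
    | zero =>
      refine ⟨c • η, fun ξ hξ => ?_, fun x => by simp⟩
      have : 𝓕 (c • η) = c • 𝓕 η := FourierTransform.fourier_smul c η
      have h3 := congrArg (fun f : SchwartzMap ℝ ℂ => f ξ) this
      simp only [SchwartzMap.smul_apply, SchwartzMap.fourier_coe] at h3
      rw [h3, h ξ hξ, smul_zero]
    | succ n ih =>
      obtain ⟨θ, h1, e1⟩ := ih
      refine ⟨_root_.mulT θ, h1.mulT, fun x => ?_⟩
      rw [mulT_apply, e1]; simp [pow_succ]; ring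

theorem e2pi_add (x y : ℝ) : e2pi (x + y) = e2pi x * e2pi y := by
  simp only [e2pi, ← Complex.exp_add]; congr 1; push_cast; ring

theorem e2pi_norm (x : ℝ) : ‖e2pi x‖ = 1 := by
  rw [e2pi, show 2 * (Real.pi : ℂ) * Complex.I * (x : ℂ) = ((2 * Real.pi * x : ℝ) : ℂ) * Complex.I by push_cast; ring]
  exact Complex.norm_exp_ofReal_mul_I _

theorem e2pi_zero : e2pi 0 = 1 := by simp [e2pi]

theorem continuous_e2pi : Continuous e2pi := by unfold e2pi; fun_prop

theorem fourier_e2pi (f : ℝ → ℂ) (ξ : ℝ) : 𝓕 f ξ = ∫ t, e2pi (-(ξ * t)) * f t := by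
  rw [Real.fourier_real_eq_integral_exp_smul]
  congr 1; ext t; rw [smul_eq_mul, e2pi]; congr 2; push_cast; ring

theorem fourierInv_e2pi (f : ℝ → ℂ) (ξ : ℝ) : 𝓕⁻ f ξ = ∫ t, e2pi (ξ * t) * f t := by
  rw [Real.fourierInv_eq']
  congr 1; ext t; rw [smul_eq_mul, e2pi]; congr 2; simp; ring

theorem annihil {η : SchwartzMap ℝ ℂ} (h : InS η) (a b : ℝ) (hab : a < b) (h0 : (0:ℝ) ∉ Ioo a b)
    (R : Polynomial ℂ) (y : ℝ) : ∫ t : ℝ, R.eval (t : ℂ) * phim η a b (y - t) = 0 := by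
  have hL : 0 < b - a := by linarith
  set L := b - a with hLdef
  obtain ⟨θ, hθ, eθ⟩ := h.poly (R.comp (Polynomial.C (y:ℂ) - Polynomial.C ((L:ℂ)⁻¹) * Polynomial.X))
  have e1 : ∫ t : ℝ, R.eval (t : ℂ) * phim η a b (y - t) = ∫ x : ℝ, R.eval ((y - x : ℝ) : ℂ) * phim η a b x := by
    rw [← integral_sub_left_eq_self _ _ y]
    congr 1; ext t; simp
  rw [e1]
  set G : ℝ → ℂ := fun w => (L:ℂ) * (e2pi (-((-a/L) * w)) * θ w) with hG
  have e2 : ∀ x : ℝ, R.eval ((y - x : ℝ) : ℂ) * phim η a b x = G (L * x) := by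
    intro x
    simp only [hG, phim, eθ, ← hLdef]
    have : (L:ℂ) ≠ 0 := by exact_mod_cast hL.ne'
    rw [show -(-a/L * (L * x)) = a * x by field_simp]
    simp only [Polynomial.eval_comp, Polynomial.eval_sub, Polynomial.eval_C, Polynomial.eval_mul, Polynomial.eval_X]
    rw [show (y:ℂ) - (L:ℂ)⁻¹ * ((L * x : ℝ) : ℂ) = ((y - x : ℝ) : ℂ) by push_cast; field_simp]
    ring
  simp_rw [e2]
  rw [Measure.integral_comp_mul_left, hG, integral_const_mul, ← fourier_e2pi, hθ]
  · simp
  · rintro ⟨h1, h2⟩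
    apply h0
    rw [div_lt_one hL] at h2
    rw [lt_div_iff₀ hL] at h1
    constructor <;> linarith

/-- dilation by `L⁻¹` as an equivalence -/
noncomputable def dilE (L : ℝ) (hL : L ≠ 0) : ℝ ≃L[ℝ] ℝ :=
  ContinuousLinearEquiv.unitsEquivAut ℝ (Units.mk0 L⁻¹ (inv_ne_zero hL))

theorem phimS_exists (η : SchwartzMap ℝ ℂ) (a b : ℝ) (hab : a < b) :
    ∃ θ : SchwartzMap ℝ ℂ, (∀ x, θ x = phim η a b x) ∧
      ∀ ξ, 𝓕 (θ : ℝ → ℂ) ξ = 𝓕 (η : ℝ → ℂ) ((ξ - a) / (b - a)) := by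
  have hL : 0 < b - a := by linarith
  set L := b - a with hLdef
  set ψ : SchwartzMap ℝ ℂ := SchwartzMap.compSubConstCLM ℂ a
    (SchwartzMap.compCLMOfContinuousLinearEquiv ℂ (dilE L hL.ne') (𝓕 η)) with hψ
  have hψa : ∀ ξ, ψ ξ = 𝓕 (η : ℝ → ℂ) ((ξ - a) / L) := by
    intro ξ
    simp [hψ, dilE, SchwartzMap.fourier_coe, div_eq_mul_inv]
  refine ⟨𝓕⁻ ψ, fun x => ?_, fun ξ => ?_⟩
  · rw [SchwartzMap.fourierInv_coe, fourierInv_e2pi]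
    simp_rw [hψa]
    rw [← integral_add_right_eq_self _ a]
    set G : ℝ → ℂ := fun w => e2pi (a * x) * (e2pi ((L * x) * w) * (𝓕 (η : ℝ → ℂ)) w) with hG
    have e : ∀ t, e2pi (x * (t + a)) * 𝓕 (η : ℝ → ℂ) ((t + a - a) / L) = G (t / L) := by
      intro t
      simp only [hG]
      rw [add_sub_cancel_right, show x * (t + a) = a * x + (L * x) * (t/L) by field_simp; ring, e2pi_add]
      ring
    simp_rw [e]
    rw [Measure.integral_comp_div, hG, integral_const_mul, ← fourierInv_e2pi]
    have : 𝓕⁻ (𝓕 (η : ℝ → ℂ)) = η := by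
      have := FourierTransform.fourierInv_fourier_eq (F := SchwartzMap ℝ ℂ) η
      rw [← SchwartzMap.fourier_coe, ← SchwartzMap.fourierInv_coe, this]
    rw [this, phim, abs_of_pos hL]
    simp [← hLdef]; ring
  · rw [← SchwartzMap.fourier_coe, FourierTransform.fourier_fourierInv_eq, hψa]


theorem ortho_bessel {E : Type*} [NormedAddCommGroup E] [InnerProductSpace ℂ E] {N : ℕ} (v : Fin N → E) (x : E)
    (h0 : ∀ m, v m ≠ 0) (ho : ∀ m m', m ≠ m' → inner ℂ (v m) (v m') = 0) :
    ∑ m, (‖v m‖ ^ 2)⁻¹ * ‖inner ℂ (v m) x‖ ^ 2 ≤ ‖x‖ ^ 2 := by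
  have hon : Orthonormal ℂ (fun m => ((‖v m‖⁻¹ : ℝ) : ℂ) • v m) := by
    constructor
    · intro m
      rw [norm_smul]; simp [h0 m]
    · intro m m' hmm
      simp only [inner_smul_left, inner_smul_right, ho m m' hmm, mul_zero]
  have := hon.sum_inner_products_le (s := Finset.univ) x
  refine le_trans (le_of_eq ?_) this
  congr 1; ext m
  rw [inner_smul_left, norm_mul, mul_pow]
  simp

theorem phim_sq (η : SchwartzMap ℝ ℂ) (a b : ℝ) (hab : a < b) :
    ∫ x, ‖phim η a b x‖ ^ 2 = (b - a) * ∫ x, ‖η x‖ ^ 2 := by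
  have hL : 0 < b - a := by linarith
  have : ∀ x, ‖phim η a b x‖ ^ 2 = (fun w => (b-a)^2 * ‖η w‖ ^ 2) ((b-a) * x) := by
    intro x
    simp only [phim, norm_mul, e2pi_norm, Complex.norm_real, Real.norm_eq_abs, abs_of_pos hL]
    ring
  simp_rw [this]
  rw [Measure.integral_comp_mul_left (fun w => (b-a)^2 * ‖η w‖ ^ 2), integral_const_mul, abs_of_pos (by positivity)]
  simp only [smul_eq_mul]; field_simp

theorem conv_eq' (h g : ℝ → ℂ) (y : ℝ) : conv h g y = ∫ x, h (y - x) * g x := by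
  rw [conv, ← integral_sub_left_eq_self _ _ y]
  congr 1; ext t; simp

theorem bessel {η : SchwartzMap ℝ ℂ} (hη : InS η) {N : ℕ} (a b : Fin N → ℝ) (hab : Admissible a b)
    (h : ℝ → ℂ) (hh : MemLp h 2 volume) (y : ℝ) :
    ∑ m, (b m - a m)⁻¹ * ‖conv h (phim η (a m) (b m)) y‖ ^ 2 ≤
      (∫ x, ‖η x‖ ^ 2) * (eLpNorm h 2 volume).toReal ^ 2 := by
  choose θ hθ hθF using fun m => phimS_exists η (a m) (b m) (hab.1 m)
  set hy : ℝ → ℂ := fun x => starRingEnd ℂ (h (y - x)) with hhy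
  have hmp : MeasurePreserving (fun x => y - x) volume volume := Measure.measurePreserving_sub_left volume y
  have hym : MemLp hy 2 volume := by
    have h1 : MemLp (fun x => h (y - x)) 2 volume := hh.comp_measurePreserving hmp
    exact h1.star
  have hyn : eLpNorm hy 2 volume = eLpNorm h 2 volume := by
    rw [← eLpNorm_comp_measurePreserving hh.aestronglyMeasurable hmp]
    apply eLpNorm_congr_norm_ae
    filter_upwards with x
    simp [hhy]
  set v : Fin N → Lp ℂ 2 (volume : Measure ℝ) := fun m => (θ m).toLp 2 with hv
  have hin : ∀ m, inner ℂ (v m) (hym.toLp hy) = starRingEnd ℂ (conv h (phim η (a m) (b m)) y) := by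
    intro m
    rw [L2.inner_def, conv_eq', ← integral_conj]
    apply integral_congr_ae
    filter_upwards [(θ m).coeFn_toLp 2, hym.coeFn_toLp] with x h1 h2
    rw [h2, hv, h1, hθ]
    simp [hhy]
  have hvn : ∀ m, ‖v m‖ ^ 2 = (b m - a m) * ∫ x, ‖η x‖ ^ 2 := by
    intro m
    rw [← phim_sq η _ _ (hab.1 m)]
    have : (‖v m‖ ^ 2 : ℂ) = ∫ x, ((‖phim η (a m) (b m) x‖ ^ 2 : ℝ) : ℂ) := by
      have := inner_self_eq_norm_sq_to_K (𝕜 := ℂ) (v m)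
      simp only [Complex.coe_algebraMap] at this
      rw [← this, L2.inner_def]
      apply integral_congr_ae
      filter_upwards [(θ m).coeFn_toLp 2] with x h1
      rw [hv, h1, hθ, inner_self_eq_norm_sq_to_K]; simp
    rw [integral_complex_ofReal] at this
    exact_mod_cast this
  have ho : ∀ m m', m ≠ m' → inner ℂ (v m) (v m') = 0 := by
    intro m m' hmm
    have : inner ℂ (v m) (v m') = ∫ x, inner ℂ (θ m x) (θ m' x) := by
      rw [L2.inner_def]
      apply integral_congr_ae
      filter_upwards [(θ m).coeFn_toLp 2, (θ m').coeFn_toLp 2] with x h1 h2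
      rw [hv, h1, h2]
    rw [this, ← SchwartzMap.integral_inner_fourier_fourier]
    rw [← integral_zero ℝ ℂ (μ := volume)]
    congr 1; ext ξ
    rw [SchwartzMap.fourier_coe, SchwartzMap.fourier_coe, hθF, hθF]
    by_cases h1 : (ξ - a m) / (b m - a m) ∈ Ioo (0:ℝ) 1
    · have h2 : (ξ - a m') / (b m' - a m') ∉ Ioo (0:ℝ) 1 := by
        intro h2
        have k1 := hab.1 m; have k2 := hab.1 m'
        have l1 : 0 < b m - a m := by linarith
        have l2 : 0 < b m' - a m' := by linarith
        rw [mem_Ioo, lt_div_iff₀ l1, div_lt_one l1] at h1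
        rw [mem_Ioo, lt_div_iff₀ l2, div_lt_one l2] at h2
        exact Set.disjoint_left.1 (hab.2.2 m m' hmm) (show ξ ∈ Icc (a m) (b m) from ⟨by linarith, by linarith⟩)
          ⟨by linarith, by linarith⟩
      rw [hη _ h2]; simp
    · rw [hη _ h1]; simp
  have hxn : ‖hym.toLp hy‖ = (eLpNorm h 2 volume).toReal := by rw [Lp.norm_toLp, hyn]
  rcases eq_or_ne (∫ x, ‖η x‖ ^ 2) 0 with h0 | h0
  · rw [h0, zero_mul]
    apply Finset.sum_nonpos
    intro m _
    have : v m = 0 := by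
      have := hvn m; rw [h0, mul_zero] at this; simpa using this
    have h2 := hin m
    rw [this, inner_zero_left] at h2
    have h3 : conv h (phim η (a m) (b m)) y = 0 := by
      have := h2.symm; simpa using this
    rw [h3]; simp
  · have hE : 0 < ∫ x, ‖η x‖ ^ 2 := lt_of_le_of_ne (integral_nonneg fun x => by positivity) h0.symm
    have hv0 : ∀ m, v m ≠ 0 := by
      intro m hm
      have := hvn m
      rw [hm] at this
      have h4 := hab.1 m
      have : 0 < (b m - a m) * ∫ x, ‖η x‖ ^ 2 := mul_pos (by linarith) hE
      simp_all
    have := ortho_bessel v (hym.toLp hy) hv0 ho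
    rw [hxn] at this
    calc _ = (∫ x, ‖η x‖ ^ 2) * ∑ m, (‖v m‖ ^ 2)⁻¹ * ‖inner ℂ (v m) (hym.toLp hy)‖ ^ 2 := by
          rw [Finset.mul_sum]
          congr 1; ext m
          rw [hin, hvn]
          have h4 := hab.1 m
          have : b m - a m ≠ 0 := by linarith
          simp only [RCLike.norm_conj]
          field_simp
      _ ≤ _ := by gcongr

theorem conv_cs (h g : ℝ → ℂ) (hh : MemLp h 2 volume) (hg : MemLp g 2 volume) (y : ℝ) :
    Integrable (fun t => h t * g (y - t)) ∧ ‖conv h g y‖ₑ ≤ eLpNorm h 2 volume * eLpNorm g 2 volume := by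
  have hmp : MeasurePreserving (fun x => y - x) volume volume := Measure.measurePreserving_sub_left volume y
  have hgy : MemLp (fun t => g (y - t)) 2 volume := hg.comp_measurePreserving hmp
  have hn : eLpNorm (fun t => g (y - t)) 2 volume = eLpNorm g 2 volume :=
    eLpNorm_comp_measurePreserving hg.aestronglyMeasurable hmp
  have h1 : eLpNorm (fun t => h t * g (y - t)) 1 volume ≤ eLpNorm h 2 volume * eLpNorm g 2 volume := by
    rw [← hn]
    have := eLpNorm_smul_le_mul_eLpNorm (p := 2) (q := 2) (r := 1) (φ := h) (f := fun t => g (y - t)) hgy.aestronglyMeasurable hh.aestronglyMeasurable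
    have e : (h • fun t => g (y - t)) = fun t => h t * g (y - t) := by ext t; simp
    rwa [e] at this
  refine ⟨?_, ?_⟩
  · exact memLp_one_iff_integrable.1 (hgy.mul' hh (p := 2) (q := 2) (r := 1))
  · refine (enorm_integral_le_lintegral_enorm _).trans ?_
    rwa [eLpNorm_one_eq_lintegral_enorm] at h1

theorem local_l2 {η : SchwartzMap ℝ ℂ} (hη : InS η) : ∃ B : ℝ, 0 < B ∧ ∀ {N : ℕ} (a b : Fin N → ℝ), Admissible a b →
    ∀ (h : ℝ → ℂ), MemLp h 2 volume →
    ∫⁻ y, ∑ m, ‖conv h (phim η (a m) (b m)) y‖ₑ ^ 2 ≤ ENNReal.ofReal B * eLpNorm h 2 volume ^ 2 := by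
  obtain ⟨B, hB⟩ : ∃ B : ℝ, ∀ ξ, ‖𝓕 (η : ℝ → ℂ) ξ‖ ≤ B :=
    ⟨_, fun ξ => by rw [← SchwartzMap.fourier_coe]; exact SchwartzMap.norm_le_seminorm ℝ (𝓕 η) ξ⟩
  have hB0 : 0 ≤ B := (norm_nonneg _).trans (hB 0)
  refine ⟨B ^ 2 + 1, by positivity, ?_⟩
  intro N a b hab h hh
  choose θ hθ hθF using fun m => phimS_exists η (a m) (b m) (hab.1 m)
  have hθ' : ∀ m, (θ m : ℝ → ℂ) = phim η (a m) (b m) := fun m => funext (hθ m)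
  -- Schwartz case
  have hS : ∀ g : SchwartzMap ℝ ℂ, (∀ m, Continuous (fun y => conv g (phim η (a m) (b m)) y)) ∧
      ∫⁻ y, ∑ m, ‖conv g (phim η (a m) (b m)) y‖ₑ ^ 2 ≤ ENNReal.ofReal (B^2+1) * eLpNorm g 2 volume ^ 2 := by
    intro g
    set G : Fin N → SchwartzMap ℝ ℂ := fun m => SchwartzMap.convolution (ContinuousLinearMap.mul ℂ ℂ) g (θ m) with hG
    have hGe : ∀ m y, conv g (phim η (a m) (b m)) y = G m y := by
      intro m y
      rw [hG, SchwartzMap.convolution_apply, ← hθ']; rfl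
    have hGF : ∀ m ξ, 𝓕 (G m) ξ = 𝓕 g ξ * 𝓕 (η : ℝ → ℂ) ((ξ - a m)/(b m - a m)) := by
      intro m ξ
      rw [hG, SchwartzMap.fourier_convolution, ← hθF]; rfl
    refine ⟨fun m => by simp_rw [hGe]; exact (G m).continuous, ?_⟩
    simp_rw [hGe]
    have hpl : ∀ F : SchwartzMap ℝ ℂ, ∫⁻ y, ‖F y‖ₑ ^ 2 = ∫⁻ y, ‖𝓕 F y‖ₑ ^ 2 := by
      intro F
      have h1 : ∀ F : SchwartzMap ℝ ℂ, ∫⁻ y, ‖F y‖ₑ ^ 2 = ENNReal.ofReal (∫ y, ‖F y‖ ^ 2) := by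
        intro F
        rw [ofReal_integral_eq_lintegral_ofReal]
        · congr 1; ext y; rw [ENNReal.ofReal_pow (norm_nonneg _), ofReal_norm]
        · have := (F.memLp 2 volume).integrable_norm_pow (by norm_num); simpa using this
        · filter_upwards with x; positivity
      rw [h1, h1, SchwartzMap.integral_norm_sq_fourier]
    rw [lintegral_finsetSum _ (fun m _ => by fun_prop)]
    simp_rw [hpl (G _)]
    rw [← lintegral_finsetSum _ (fun m _ => by fun_prop), eLpNorm_two_sq, hpl g, ← lintegral_const_mul _ (by fun_prop)]
    apply lintegral_mono
    intro ξ
    simp only [hGF, enorm_mul, mul_pow]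
    rw [← Finset.mul_sum, mul_comm]
    gcongr
    have hb : ∀ m, ‖𝓕 (η : ℝ → ℂ) ((ξ - a m)/(b m - a m))‖ₑ ^ 2 ≤ ENNReal.ofReal (B^2) := by
      intro m
      rw [← ofReal_norm, ← ENNReal.ofReal_pow (norm_nonneg _)]
      apply ENNReal.ofReal_le_ofReal
      gcongr; exact hB _
    by_cases hex : ∃ m, (ξ - a m) / (b m - a m) ∈ Ioo (0:ℝ) 1
    · obtain ⟨m, h1⟩ := hex
      rw [Finset.sum_eq_single m]
      · exact (hb m).trans (ENNReal.ofReal_le_ofReal (by linarith))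
      · intro m' _ hmm
        rw [hη]; · simp
        intro h2
        have k1 := hab.1 m; have k2 := hab.1 m'
        have l1 : 0 < b m - a m := by linarith
        have l2 : 0 < b m' - a m' := by linarith
        rw [mem_Ioo, lt_div_iff₀ l1, div_lt_one l1] at h1
        rw [mem_Ioo, lt_div_iff₀ l2, div_lt_one l2] at h2
        exact Set.disjoint_left.1 (hab.2.2 m m' hmm.symm) (show ξ ∈ Icc (a m) (b m) from ⟨by linarith, by linarith⟩)
          ⟨by linarith, by linarith⟩
      · simp
    · push Not at hex
      rw [Finset.sum_eq_zero]; · simp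
      intro m _
      rw [hη _ (hex m)]; simp
  -- density
  have hdense := SchwartzMap.denseRange_toLpCLM (E := ℝ) (F := ℂ) (p := 2) (μ := volume) (by norm_num)
  obtain ⟨u, hu, hul⟩ := mem_closure_iff_seq_limit.1 (hdense (hh.toLp h))
  choose G hG using hu
  have hGl : Filter.Tendsto (fun n => eLpNorm (fun x => G n x - h x) 2 volume) Filter.atTop (nhds 0) := by
    have h1 := (Lp.tendsto_Lp_iff_tendsto_eLpNorm'' (fun n => (G n : ℝ → ℂ)) (fun n => (G n).memLp 2 volume) h hh
      (fi := Filter.atTop) (p := 2)).1 (by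
        refine hul.congr fun n => ?_
        rw [← hG n]; rfl)
    exact h1
  have hpt : ∀ y m, Filter.Tendsto (fun n => conv (G n) (phim η (a m) (b m)) y) Filter.atTop
      (nhds (conv h (phim η (a m) (b m)) y)) := by
    intro y m
    rw [tendsto_iff_edist_tendsto_0]
    have hb : MemLp (phim η (a m) (b m)) 2 volume := by rw [← hθ']; exact (θ m).memLp 2 volume
    have hle : ∀ n, edist (conv (G n) (phim η (a m) (b m)) y) (conv h (phim η (a m) (b m)) y) ≤
        eLpNorm (fun x => G n x - h x) 2 volume * eLpNorm (phim η (a m) (b m)) 2 volume := by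
      intro n
      have hd : MemLp (fun x => G n x - h x) 2 volume := ((G n).memLp 2 volume).sub hh
      have := (conv_cs _ _ hd hb y).2
      rw [edist_eq_enorm_sub]
      refine le_trans (le_of_eq ?_) this
      congr 1
      rw [conv, conv, conv, ← integral_sub (conv_cs _ _ ((G n).memLp 2 volume) hb y).1 (conv_cs _ _ hh hb y).1]
      congr 1; ext t; ring
    refine tendsto_of_tendsto_of_tendsto_of_le_of_le tendsto_const_nhds ?_ (fun _ => zero_le) hle
    have := ENNReal.Tendsto.mul_const hGl (Or.inr hb.eLpNorm_ne_top)
    simpa using this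
  have hlim : ∀ y, ∑ m, ‖conv h (phim η (a m) (b m)) y‖ₑ ^ 2 =
      Filter.liminf (fun n => ∑ m, ‖conv (G n) (phim η (a m) (b m)) y‖ₑ ^ 2) Filter.atTop := by
    intro y
    refine (Filter.Tendsto.liminf_eq ?_).symm
    apply tendsto_finsetSum
    intro m _
    exact ENNReal.Tendsto.pow (hpt y m).enorm
  simp_rw [hlim]
  refine (lintegral_liminf_le (fun n => ?_)).trans ?_
  · exact Finset.measurable_sum _ (fun m _ => ((hS (G n)).1 m).measurable.enorm.pow_const 2)
  have hT : Filter.Tendsto (fun n => ENNReal.ofReal (B^2+1) * (eLpNorm h 2 volume + eLpNorm (fun x => G n x - h x) 2 volume) ^ 2)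
      Filter.atTop (nhds (ENNReal.ofReal (B^2+1) * (eLpNorm h 2 volume) ^ 2)) := by
    apply ENNReal.Tendsto.const_mul _ (Or.inr (by simp))
    apply ENNReal.Tendsto.pow
    simpa using hGl.const_add (eLpNorm h 2 volume)
  rw [← hT.liminf_eq]
  refine Filter.liminf_le_liminf ?_
  filter_upwards with n
  refine (hS (G n)).2.trans ?_
  gcongr
  have : (G n : ℝ → ℂ) = h + (fun x => G n x - h x) := by ext x; simp
  conv_lhs => rw [this]
  exact eLpNorm_add_le hh.aestronglyMeasurable (((G n).memLp 2 volume).sub hh).aestronglyMeasurable (by norm_num)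


/-- The vector valued rotated family. -/
noncomputable def gv (η : ℝ → ℂ) {N : ℕ} (a b : Fin N → ℝ) (h : ℝ → ℂ) (y : ℝ) : EuclideanSpace ℂ (Fin N) :=
  WithLp.toLp 2 (fun m => rotConv η (a m) (b m) h y)

/-- kernel -/
noncomputable def ker (η : ℝ → ℂ) (a b y t : ℝ) : ℂ := ((b - a : ℝ) : ℂ) * e2pi (-(a * t)) * η ((b - a) * (y - t))

theorem rot_kernel (η : ℝ → ℂ) (a b y t : ℝ) : e2pi (-(a * y)) * phim η a b (y - t) = ker η a b y t := by
  rw [phim, ker, show -(a * t) = -(a*y) + a * (y - t) by ring, e2pi_add]; ring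

theorem rotConv_eq (η : ℝ → ℂ) (a b : ℝ) (h : ℝ → ℂ) (y : ℝ) :
    rotConv η a b h y = ∫ t, h t * ker η a b y t := by
  rw [rotConv, conv, ← integral_const_mul]
  congr 1; ext t; rw [← rot_kernel]; ring

theorem rotConv_norm (η : ℝ → ℂ) (a b : ℝ) (h : ℝ → ℂ) (y : ℝ) :
    ‖rotConv η a b h y‖ = ‖conv h (phim η a b) y‖ := by
  rw [rotConv, norm_mul, e2pi_norm, one_mul]

theorem ker_cont (η : SchwartzMap ℝ ℂ) (a b y : ℝ) : Continuous (fun t => ker η a b y t) := by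
  unfold ker
  have := η.continuous; have := continuous_e2pi
  fun_prop

theorem rot_deriv (η : SchwartzMap ℝ ℂ) (a b : ℝ) (hab : a < b) (h : ℝ → ℂ) (hh : Integrable h) (y : ℝ) :
    HasDerivAt (rotConv η a b h) (((b - a : ℝ) : ℂ) * rotConv (dS η) a b h y) y := by
  have hL : 0 < b - a := by linarith
  have e0 : rotConv η a b h = fun y => ∫ t, h t * ker η a b y t := funext (rotConv_eq _ _ _ _)
  rw [e0, rotConv_eq, ← integral_const_mul]
  set M := SchwartzMap.seminorm ℝ 0 0 (dS η)
  set M0 := SchwartzMap.seminorm ℝ 0 0 η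
  have hM : ∀ x, ‖dS η x‖ ≤ M := SchwartzMap.norm_le_seminorm ℝ (dS η)
  have hM0 : ∀ x, ‖η x‖ ≤ M0 := SchwartzMap.norm_le_seminorm ℝ η
  refine (hasDerivAt_integral_of_dominated_loc_of_deriv_le (s := univ) (bound := fun t => ‖h t‖ * ((b-a)^2 * M)) (F := fun y t => h t * ker η a b y t)
    (F' := fun y t => ((b - a : ℝ) : ℂ) * (h t * ker (dS η) a b y t)) Filter.univ_mem ?_ ?_ ?_ ?_ ?_ ?_).2
  · exact Filter.Eventually.of_forall fun x => hh.aestronglyMeasurable.mul (ker_cont η a b x).aestronglyMeasurable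
  · refine hh.mul_bdd (c := (b-a) * M0) (ker_cont η a b y).aestronglyMeasurable (Filter.Eventually.of_forall fun t => ?_)
    simp only [ker, norm_mul, e2pi_norm, Complex.norm_real, Real.norm_eq_abs, abs_of_pos hL, mul_one]
    gcongr; exact hM0 _
  · exact (hh.aestronglyMeasurable.mul (ker_cont (dS η) a b y).aestronglyMeasurable).const_mul _
  · refine Filter.Eventually.of_forall fun t x _ => ?_
    simp only [ker, norm_mul, e2pi_norm, Complex.norm_real, Real.norm_eq_abs, abs_of_pos hL, mul_one]
    have := hM ((b-a)*(x-t))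
    calc (b-a) * (‖h t‖ * ((b-a) * ‖dS η ((b-a)*(x-t))‖)) = ‖h t‖ * ((b-a)^2 * ‖dS η ((b-a)*(x-t))‖) := by ring
      _ ≤ _ := by gcongr
  · exact hh.norm.mul_const _
  · refine Filter.Eventually.of_forall fun t x _ => ?_
    have h1 : HasDerivAt (fun y => (b - a) * (y - t)) (b - a) x := by
      simpa using ((hasDerivAt_id x).sub_const t).const_mul (b-a)
    have h2 := (dS_hasDerivAt η ((b-a)*(x-t))).scomp x h1
    have h3 := ((h2.const_mul (((b - a : ℝ) : ℂ) * e2pi (-(a * t)))).const_mul (h t))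
    refine h3.congr_deriv ?_
    simp only [ker, Complex.real_smul]; ring

theorem toLp_deriv {N : ℕ} (f : ℝ → Fin N → ℂ) (f' : Fin N → ℂ) (y : ℝ) (h : ∀ m, HasDerivAt (fun y => f y m) (f' m) y) :
    HasDerivAt (fun y => (WithLp.toLp 2 (f y) : EuclideanSpace ℂ (Fin N))) (WithLp.toLp 2 f') y := by
  have h1 : HasDerivAt f f' y := hasDerivAt_pi.2 h
  exact (PiLp.continuousLinearEquiv 2 ℝ (fun _ : Fin N => ℂ)).symm.hasFDerivAt.comp_hasDerivAt y h1

theorem taylor_vec {E : Type*} [NormedAddCommGroup E] [NormedSpace ℝ E] (u v B : ℝ) (huv : u < v) (n : ℕ) :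
    ∀ (G : ℕ → ℝ → E), (∀ k y, HasDerivAt (G k) (G (k+1) y) y) → (∀ y ∈ Icc u v, ‖G n y‖ ≤ B) →
    ∃ c : ℕ → E, ∀ y ∈ Icc u v, ‖G 0 y - ∑ k ∈ Finset.range n, (y - u) ^ k • c k‖ ≤ B * (v - u) ^ n := by
  induction n with
  | zero => intro G _ hb; exact ⟨fun _ => 0, fun y hy => by simpa using hb y hy⟩
  | succ n ih =>
    intro G hG hb
    obtain ⟨c, hc⟩ := ih (fun k => G (k+1)) (fun k => hG (k+1)) hb
    refine ⟨fun k => Nat.casesOn k (G 0 u) (fun j => ((j:ℝ)+1)⁻¹ • c j), fun y hy => ?_⟩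
    rw [Finset.sum_range_succ']
    simp only [pow_zero, one_smul]
    set F : ℝ → E := fun y => G 0 y - ∑ k ∈ Finset.range n, (y - u) ^ (k+1) • (((k:ℝ)+1)⁻¹ • c k) with hF
    have hFd : ∀ y ∈ Icc u v, HasDerivWithinAt F (G 1 y - ∑ k ∈ Finset.range n, (y - u) ^ k • c k) (Icc u v) y := by
      intro y _
      apply HasDerivAt.hasDerivWithinAt
      apply (hG 0 y).sub
      apply HasDerivAt.fun_sum
      intro k _
      have h1 : HasDerivAt (fun y : ℝ => (y - u)^(k+1)) (((k+1 : ℕ) : ℝ) * (y - u)^k) y := by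
        have := ((hasDerivAt_id y).sub_const u).fun_pow (k+1)
        simp only [add_tsub_cancel_right, mul_one, id] at this
        exact this
      refine (h1.smul_const (((k:ℝ)+1)⁻¹ • c k)).congr_deriv ?_
      rw [smul_smul]
      congr 1
      push_cast
      field_simp
    have h2 := norm_image_sub_le_of_norm_deriv_le_segment' hFd (C := B * (v-u)^n) (fun x hx => hc x ⟨hx.1, hx.2.le⟩) y hy
    have hFu : F u = G 0 u := by simp [hF]
    rw [hFu] at h2
    have hB : 0 ≤ B * (v - u) ^ n := (norm_nonneg _).trans (hc u ⟨le_rfl, huv.le⟩)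
    calc _ = ‖F y - G 0 u‖ := by simp only [hF]; congr 1; abel
      _ ≤ B * (v-u)^n * (y - u) := h2
      _ ≤ B * (v-u)^n * (v - u) := by gcongr; exact hy.2
      _ = _ := by ring

theorem taylor_pv {N : ℕ} (u v B : ℝ) (huv : u < v) (n : ℕ)
    (G : ℕ → ℝ → EuclideanSpace ℂ (Fin N)) (hG : ∀ k y, HasDerivAt (G k) (G (k+1) y) y) (hB : ∀ y ∈ Icc u v, ‖G n y‖ ≤ B) :
    ∃ P : Fin N → Polynomial ℂ, (∀ m, (P m).degree < (n : WithBot ℕ)) ∧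
      ∀ y ∈ Icc u v, ‖G 0 y - pv P y‖ ≤ B * (v - u) ^ n := by
  obtain ⟨c, hc⟩ := taylor_vec u v B huv n G hG hB
  refine ⟨fun m => ∑ k ∈ Finset.range n, Polynomial.C (c k m) * (Polynomial.X - Polynomial.C (u:ℂ)) ^ k, fun m => ?_, fun y hy => ?_⟩
  · refine (Polynomial.degree_sum_le _ _).trans_lt ?_
    refine (Finset.sup_lt_iff (WithBot.bot_lt_coe n)).2 ?_
    intro k hk
    refine (Polynomial.degree_mul_le _ _).trans_lt ?_
    refine (add_le_add_left Polynomial.degree_C_le _).trans_lt ?_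
    rw [Polynomial.degree_pow, Polynomial.degree_X_sub_C]
    have hk' := Finset.mem_range.1 hk
    simp
    first | exact Nat.cast_lt.2 hk' | exact WithBot.coe_lt_coe.2 hk'
  · refine le_trans (le_of_eq ?_) (hc y hy)
    congr 2
    ext m
    simp [pv, Polynomial.eval_finset_sum]
    apply Finset.sum_congr rfl; intro k _; ring

theorem iter_InS {η : SchwartzMap ℝ ℂ} (h : InS η) (k : ℕ) : InS (dS^[k] η) := by
  induction k with
  | zero => exact h
  | succ k ih => rw [Function.iterate_succ_apply']; exact ih.dS

theorem mulT_iter_InS {η : SchwartzMap ℝ ℂ} (h : InS η) (k : ℕ) :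
    InS (mulT^[k] η) ∧ ∀ x, (mulT^[k] η) x = (x:ℂ)^k * η x := by
  induction k with
  | zero => exact ⟨h, fun x => by simp⟩
  | succ k ih =>
    rw [Function.iterate_succ_apply']
    exact ⟨ih.1.mulT, fun x => by rw [mulT_apply, ih.2]; ring⟩

theorem far_bound {ψ : SchwartzMap ℝ ℂ} (hψ : InS ψ) (n : ℕ) : ∃ C : ℝ, 0 < C ∧ ∀ {N : ℕ} (a b : Fin N → ℝ), Admissible a b →
    ∀ (h : ℝ → ℂ), MemLp h 2 volume → ∀ (y ρ : ℝ), 0 < ρ → (∀ t, h t ≠ 0 → ρ ≤ |y - t|) →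
    ∑ m, ((b m - a m)^n * ‖conv h (phim ψ (a m) (b m)) y‖) ^ 2 ≤
      C * (ρ⁻¹)^(2*n+1) * (eLpNorm h 2 volume).toReal ^ 2 := by
  obtain ⟨h2S, h2e⟩ := mulT_iter_InS hψ (n+1)
  set ψ2 := mulT^[n+1] ψ
  set E1 := ∫ x, ‖ψ x‖ ^ 2
  set E2 := ∫ x, ‖ψ2 x‖ ^ 2
  have hE1 : 0 ≤ E1 := integral_nonneg fun x => by positivity
  have hE2 : 0 ≤ E2 := integral_nonneg fun x => by positivity
  refine ⟨E1 + E2 + 1, by positivity, ?_⟩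
  intro N a b hab h hh y ρ hρ hsupp
  set ht : ℝ → ℂ := fun t => h t * (((y - t)^(n+1) : ℝ) : ℂ)⁻¹ with hht
  have hb : ∀ t, ‖ht t‖ ≤ (ρ⁻¹)^(n+1) * ‖h t‖ := by
    intro t
    rw [hht]
    by_cases h0 : h t = 0
    · simp [h0]
    · rw [norm_mul, mul_comm]
      gcongr
      rw [norm_inv, Complex.norm_real, norm_pow, Real.norm_eq_abs, inv_pow]
      gcongr
      exact hsupp t h0
  have htm : AEStronglyMeasurable ht volume := by
    apply hh.aestronglyMeasurable.mul
    apply Measurable.aestronglyMeasurable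
    fun_prop
  have htLp : MemLp ht 2 volume := hh.of_le_mul (c := (ρ⁻¹)^(n+1)) htm (Filter.Eventually.of_forall hb)
  have hn : (eLpNorm ht 2 volume).toReal ≤ (ρ⁻¹)^(n+1) * (eLpNorm h 2 volume).toReal := by
    have := eLpNorm_le_mul_eLpNorm_of_ae_le_mul (p := 2) (μ := volume) (Filter.Eventually.of_forall hb)
    have h3 := ENNReal.toReal_mono (ENNReal.mul_ne_top (by simp) hh.eLpNorm_ne_top) this
    rwa [ENNReal.toReal_mul, ENNReal.toReal_ofReal (by positivity)] at h3
  have hB1 := bessel hψ a b hab h hh y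
  have hB2 := bessel h2S a b hab ht htLp y
  have hconv : ∀ m, conv ht (phim ψ2 (a m) (b m)) y = (((b m - a m)^(n+1) : ℝ) : ℂ) * conv h (phim ψ (a m) (b m)) y := by
    intro m
    rw [conv, conv, ← integral_const_mul]
    congr 1; ext t
    simp only [hht, phim, h2e]
    by_cases h0 : h t = 0
    · simp [h0]
    · have hyt : ((y - t : ℝ) : ℂ) ≠ 0 := by
        have := hsupp t h0
        have h5 : y - t ≠ 0 := abs_pos.1 (by linarith)
        exact_mod_cast h5
      push_cast at hyt ⊢
      rw [mul_pow]
      field_simp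
  have key : ∀ m, ((b m - a m)^n * ‖conv h (phim ψ (a m) (b m)) y‖) ^ 2 ≤
      (ρ⁻¹)^(2*n+1) * ((b m - a m)⁻¹ * ‖conv h (phim ψ (a m) (b m)) y‖ ^ 2) +
      ρ * ((b m - a m)⁻¹ * ‖conv ht (phim ψ2 (a m) (b m)) y‖ ^ 2) := by
    intro m
    have hL : 0 < b m - a m := by have := hab.1 m; linarith
    rw [hconv, norm_mul, Complex.norm_real, Real.norm_eq_abs, abs_of_pos (by positivity)]
    set L := b m - a m
    set x := ‖conv h (phim ψ (a m) (b m)) y‖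
    rcases le_total L ρ⁻¹ with hc | hc
    · have h1 : (L^n * x)^2 ≤ (ρ⁻¹)^(2*n+1) * (L⁻¹ * x^2) := by
        calc (L^n * x)^2 = L^(2*n+1) * (L⁻¹ * x^2) := by field_simp; ring
          _ ≤ _ := by gcongr
      have h2 : 0 ≤ ρ * (L⁻¹ * (L^(n+1) * x)^2) := by positivity
      linarith
    · have h1 : (L^n * x)^2 ≤ ρ * (L⁻¹ * (L^(n+1) * x)^2) := by
        calc (L^n * x)^2 = 1 * (L^n * x)^2 := by ring
          _ ≤ (ρ * L) * (L^n * x)^2 := by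
            gcongr
            rw [inv_le_iff_one_le_mul₀ hρ] at hc; linarith
          _ = _ := by field_simp; ring
      have h2 : 0 ≤ (ρ⁻¹)^(2*n+1) * (L⁻¹ * x^2) := by positivity
      linarith
  set H := (eLpNorm h 2 volume).toReal
  have hH : 0 ≤ H := ENNReal.toReal_nonneg
  calc _ ≤ ∑ m, ((ρ⁻¹)^(2*n+1) * ((b m - a m)⁻¹ * ‖conv h (phim ψ (a m) (b m)) y‖ ^ 2) +
      ρ * ((b m - a m)⁻¹ * ‖conv ht (phim ψ2 (a m) (b m)) y‖ ^ 2)) := Finset.sum_le_sum fun m _ => key m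
    _ = (ρ⁻¹)^(2*n+1) * ∑ m, ((b m - a m)⁻¹ * ‖conv h (phim ψ (a m) (b m)) y‖ ^ 2) +
      ρ * ∑ m, ((b m - a m)⁻¹ * ‖conv ht (phim ψ2 (a m) (b m)) y‖ ^ 2) := by
      rw [Finset.sum_add_distrib, Finset.mul_sum, Finset.mul_sum]
    _ ≤ (ρ⁻¹)^(2*n+1) * (E1 * H ^ 2) + ρ * (E2 * ((ρ⁻¹)^(n+1) * H)^2) := by
      gcongr
      refine hB2.trans ?_
      gcongr
    _ = (E1 + E2) * (ρ⁻¹)^(2*n+1) * H ^ 2 := by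
      have : ρ * ((ρ⁻¹)^(n+1))^2 = (ρ⁻¹)^(2*n+1) := by
        rw [← pow_mul, show (n+1)*2 = (2*n+1)+1 by ring, pow_succ]; field_simp
      linear_combination (E2 * H^2) * this
    _ ≤ _ := mul_le_mul_of_nonneg_right (mul_le_mul_of_nonneg_right (by linarith) (by positivity)) (by positivity)

theorem far_piece {φ : SchwartzMap ℝ ℂ} (hφ : InS φ) (n : ℕ) : ∃ C : ℝ, 0 < C ∧ ∀ {N : ℕ} (a b : Fin N → ℝ), Admissible a b →
    ∀ (h : ℝ → ℂ), MemLp h 2 volume → Integrable h → ∀ (u v ρ : ℝ), u < v → 0 < ρ →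
    (∀ y ∈ Icc u v, ∀ t, h t ≠ 0 → ρ ≤ |y - t|) →
    ∃ P : Fin N → Polynomial ℂ, (∀ m, (P m).degree < (n : WithBot ℕ)) ∧
      ∀ y ∈ Icc u v, ‖gv φ a b h y - pv P y‖ ≤ C * ρ ^ (-((n:ℝ)+1/2)) * (eLpNorm h 2 volume).toReal * (v - u) ^ n := by
  obtain ⟨C, hC, hb⟩ := far_bound (iter_InS hφ n) n
  refine ⟨√C, by positivity, ?_⟩
  intro N a b hab h hh hi u v ρ huv hρ hsupp
  set G : ℕ → ℝ → EuclideanSpace ℂ (Fin N) := fun k y =>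
    WithLp.toLp 2 (fun m => (((b m - a m)^k : ℝ) : ℂ) * rotConv (dS^[k] φ) (a m) (b m) h y) with hG
  have hG0 : G 0 = gv φ a b h := by ext y m; simp [hG, gv]
  rw [← hG0]
  apply taylor_pv u v _ huv n G
  · intro k y
    apply toLp_deriv
    intro m
    refine ((rot_deriv (dS^[k] φ) (a m) (b m) (hab.1 m) h hi y).const_mul _).congr_deriv ?_
    rw [Function.iterate_succ_apply']; push_cast; ring
  · intro y hy
    have h1 := hb a b hab h hh y ρ hρ (hsupp y hy)
    rw [EuclideanSpace.norm_eq]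
    apply Real.sqrt_le_iff.2
    refine ⟨by positivity, ?_⟩
    refine le_trans (le_of_eq ?_) (h1.trans (le_of_eq ?_))
    · congr 1; ext m
      have hL : 0 < b m - a m := by have := hab.1 m; linarith
      simp only [hG]
      rw [norm_mul, rotConv_norm, Complex.norm_real, Real.norm_eq_abs, abs_of_pos (by positivity)]
    · rw [mul_pow, mul_pow, Real.sq_sqrt hC.le]
      congr 2
      rw [← Real.rpow_natCast (ρ ^ _), ← Real.rpow_mul hρ.le, inv_pow, ← Real.rpow_natCast ρ, ← Real.rpow_neg hρ.le]
      congr 1; push_cast; ring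


theorem term_eq {N : ℕ} (p : ℝ) (hp : 0 < p) (h : Fin N → ℝ → ℂ) (P : Fin N → Polynomial ℂ) (t : ℝ) :
    ENNReal.ofReal ((∑ m, ‖h m t - (P m).eval (t : ℂ)‖ ^ 2) ^ (p / 2)) =
      ‖(WithLp.toLp 2 (fun m => h m t) : EuclideanSpace ℂ (Fin N)) - pv P t‖ₑ ^ p := by
  have h1 : ‖(WithLp.toLp 2 (fun m => h m t) : EuclideanSpace ℂ (Fin N)) - pv P t‖ ^ 2 =
      ∑ m, ‖h m t - (P m).eval (t : ℂ)‖ ^ 2 := by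
    rw [EuclideanSpace.norm_sq_eq]
    simp [pv]
  rw [← h1, ← ofReal_norm, ENNReal.ofReal_rpow_of_nonneg (norm_nonneg _) hp.le]
  congr 1
  rw [← Real.rpow_natCast, ← Real.rpow_mul (norm_nonneg _)]
  congr 1; push_cast; ring

theorem norm_pv_one (D : Polynomial ℂ) (t : ℝ) : ‖pv (fun _ : Fin 1 => D) t‖ = ‖D.eval (t:ℂ)‖ := by
  rw [EuclideanSpace.norm_eq]; simp [pv]

/-- Local oscillation. -/
noncomputable def oscA (i : ℕ) (s p : ℝ) {N : ℕ} (h : Fin N → ℝ → ℂ) (u v : ℝ) : ℝ≥0∞ :=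
  ⨅ (P : Fin N → Polynomial ℂ) (_ : ∀ m, (P m).degree < (i : WithBot ℕ)),
      ENNReal.ofReal (v - u) ^ (-s) *
        ((ENNReal.ofReal (v - u))⁻¹ *
          ∫⁻ t in Set.Icc u v,
            ENNReal.ofReal ((∑ m, ‖h m t - (P m).eval (t : ℂ)‖ ^ 2) ^ (p / 2))) ^ (1 / p)

theorem sharpMax_eq (i : ℕ) (s p : ℝ) {N : ℕ} (h : Fin N → ℝ → ℂ) (x : ℝ) :
    sharpMax i s p h x = ⨆ (u : ℝ) (v : ℝ) (_ : u < v) (_ : x ∈ Set.Icc u v), oscA i s p h u v := rfl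

theorem osc_to_l2 (i : ℕ) (s p : ℝ) (hp : 2 ≤ p) (f : ℝ → ℂ) (hf : Measurable f) (lam : ℝ)
    (u v : ℝ) (huv : u < v) (h : oscA i s p (fun _ : Fin 1 => f) u v < ENNReal.ofReal lam) :
    ∃ Q : Polynomial ℂ, Q.degree < (i : WithBot ℕ) ∧
      eLpNorm (fun t : ℝ => f t - Q.eval (t:ℂ)) 2 (volume.restrict (Icc u v)) ≤ ENNReal.ofReal (lam * (v - u) ^ (s + 1/2)) := by
  have hp0 : 0 < p := by linarith
  have h1 := h
  unfold oscA at h1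
  simp only [iInf_lt_iff] at h1
  obtain ⟨P, hP, h2⟩ := h1
  refine ⟨P 0, hP 0, ?_⟩
  have e : ∀ t : ℝ, ENNReal.ofReal ((∑ m, ‖f t - (P m).eval (t : ℂ)‖ ^ 2) ^ (p / 2)) = ‖f t - (P 0).eval (t:ℂ)‖ₑ ^ p := by
    intro t
    rw [← ofReal_norm, ENNReal.ofReal_rpow_of_nonneg (norm_nonneg _) hp0.le]
    congr 1
    simp only [Finset.univ_unique, Fin.default_eq_zero, Finset.sum_singleton]
    rw [← Real.rpow_natCast, ← Real.rpow_mul (norm_nonneg _)]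
    congr 1; push_cast; ring
  simp_rw [e] at h2
  have hm : AEStronglyMeasurable (fun t : ℝ => f t - (P 0).eval (t:ℂ)) (volume.restrict (Icc u v)) := by
    apply Measurable.aestronglyMeasurable
    have : Continuous fun t : ℝ => (P 0).eval (t:ℂ) := by fun_prop
    exact hf.sub this.measurable
  have h3 := eLpNorm_le_eLpNorm_mul_rpow_measure_univ (p := 2) (q := ENNReal.ofReal p) (by
    rw [show (2:ℝ≥0∞) = ENNReal.ofReal 2 by simp]; exact ENNReal.ofReal_le_ofReal hp) hm
  rw [eLpNorm_eq_lintegral_rpow_enorm_toReal (p := ENNReal.ofReal p) (by simpa using hp0) (by simp)] at h3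
  rw [ENNReal.toReal_ofReal hp0.le] at h3
  refine h3.trans ?_
  have hL : 0 < v - u := by linarith
  rw [Measure.restrict_apply_univ, Real.volume_Icc]
  set L := ENNReal.ofReal (v - u) with hLd
  have hL0 : L ≠ 0 := by simpa [hLd] using hL
  have hLt : L ≠ ⊤ := by simp [hLd]
  set X := ∫⁻ t in Set.Icc u v, ‖f t - (P 0).eval (t:ℂ)‖ₑ ^ p
  rw [ENNReal.mul_rpow_of_nonneg _ _ (by positivity)] at h2
  have hlam : 0 < lam := by
    by_contra hc
    rw [ENNReal.ofReal_of_nonpos (by linarith)] at h; simp at h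
  rw [ENNReal.ofReal_mul hlam.le, ← ENNReal.ofReal_rpow_of_pos hL, ← hLd]
  calc X ^ (1/p) * L ^ (1 / (2:ℝ≥0∞).toReal - 1 / p) = (L ^ (-s) * (L⁻¹ ^ (1/p) * X^(1/p))) * L ^ (s + 1/2) := by
        rw [ENNReal.inv_rpow, ← ENNReal.rpow_neg]
        rw [show L ^ (-s) * (L ^ (-(1/p)) * X^(1/p)) * L ^ (s + 1/2) = X^(1/p) * (L ^ (-s) * L ^ (-(1/p)) * L ^ (s + 1/2)) by ring]
        rw [← ENNReal.rpow_add _ _ hL0 hLt, ← ENNReal.rpow_add _ _ hL0 hLt]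
        congr 2; simp; ring
    _ ≤ _ := mul_le_mul_left h2.le _

theorem claimA (k : ℕ) (s : ℝ) (hks : (k:ℝ) ≤ s) : ∃ C : ℝ, 0 < C ∧ ∀ (f : ℝ → ℂ), Measurable f → ∀ c l lam : ℝ, 0 < l → 0 ≤ lam →
    (∀ j : ℕ, ∃ Q : Polynomial ℂ, Q.degree < ((k+1:ℕ) : WithBot ℕ) ∧
      eLpNorm (fun t : ℝ => f t - Q.eval (t:ℂ)) 2 (volume.restrict (Icc (c - 2^j*l) (c + 2^j*l))) ≤ ENNReal.ofReal (lam * (2 * (2^j * l)) ^ (s + 1/2))) →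
    ∃ Q : Polynomial ℂ, Q.degree < ((k+1:ℕ) : WithBot ℕ) ∧ ∀ j : ℕ,
      eLpNorm (fun t : ℝ => f t - Q.eval (t:ℂ)) 2 (volume.restrict (Icc (c - 2^j*l) (c + 2^j*l))) ≤
        ENNReal.ofReal (C * (j+1) * lam * (2^j * l) ^ (s + 1/2)) := by
  obtain ⟨Cp, hCp, hpoly⟩ := poly_vec k
  have hs0 : 0 ≤ s := (Nat.cast_nonneg k).trans hks
  set σ := s + 1/2 with hσ
  have hσ0 : 0 ≤ σ := by positivity
  set C1 : ℝ := 2^σ + 4^σ with hC1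
  have hC1p : 0 < C1 := by positivity
  refine ⟨2^σ + 2 * (Cp * C1), by positivity, ?_⟩
  intro f hf c l lam hl hlam hP
  choose P hPd hP using hP
  refine ⟨P 0, hPd 0, fun j => ?_⟩
  have hcont : ∀ R : Polynomial ℂ, Continuous fun t : ℝ => R.eval (t:ℂ) := fun R => by fun_prop
  have hmeas : ∀ (R : Polynomial ℂ) (μ : Measure ℝ), AEStronglyMeasurable (fun t : ℝ => f t - R.eval (t:ℂ)) μ := fun R μ =>
    (hf.sub (hcont R).measurable).aestronglyMeasurable
  have hD : ∀ i, eLpNorm (fun t : ℝ => (P (i+1) - P i).eval (t:ℂ)) 2 (volume.restrict (Icc (c - 2^i*l) (c + 2^i*l))) ≤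
      ENNReal.ofReal (C1 * lam * (2^i*l)^σ) := by
    intro i
    have e : (fun t : ℝ => (P (i+1) - P i).eval (t:ℂ)) = (fun t : ℝ => f t - (P i).eval (t:ℂ)) - (fun t : ℝ => f t - (P (i+1)).eval (t:ℂ)) := by
      ext t; simp
    rw [e]
    refine (eLpNorm_sub_le (hmeas _ _) (hmeas _ _) (by norm_num)).trans ?_
    have hle : volume.restrict (Icc (c - 2^i*l) (c + 2^i*l)) ≤ volume.restrict (Icc (c - 2^(i+1)*l) (c + 2^(i+1)*l)) := by
      apply Measure.restrict_mono _ le_rfl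
      have : 2^i*l ≤ 2^(i+1)*l := by gcongr <;> norm_num
      exact Icc_subset_Icc (by linarith) (by linarith)
    refine (add_le_add (hP i) ((eLpNorm_mono_measure _ hle).trans (hP (i+1)))).trans ?_
    rw [← ENNReal.ofReal_add (by positivity) (by positivity)]
    apply ENNReal.ofReal_le_ofReal
    have hr : 0 ≤ 2^i*l := by positivity
    rw [show 2 * (2^(i+1) * l) = 4 * (2^i*l) by ring, Real.mul_rpow (by norm_num) hr, Real.mul_rpow (by norm_num) hr]
    apply le_of_eq; rw [hC1]; ring
  have hDj : ∀ i < j, eLpNorm (fun t : ℝ => (P (i+1) - P i).eval (t:ℂ)) 2 (volume.restrict (Icc (c - 2^j*l) (c + 2^j*l))) ≤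
      ENNReal.ofReal (2 * (Cp * C1) * lam * (2^j*l)^σ) := by
    intro i hi
    have hr : 0 < 2^i*l := by positivity
    have hrj : 0 < 2^j*l := by positivity
    have hb : ∀ y ∈ Icc (c - 2^j*l) (c + 2^j*l), ‖(P (i+1) - P i).eval (y:ℂ)‖ ≤ Cp * C1 * lam * (2^j*l)^s := by
      intro y hy
      have h1 := hpoly 1 (fun _ => P (i+1) - P i) (fun _ => (Polynomial.degree_sub_le _ _).trans_lt (max_lt (hPd _) (hPd _)))
        c (2^i*l) (2^(j-i)) y hr (one_le_pow₀ (by norm_num)) (by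
          rw [← mul_assoc, ← pow_add, Nat.sub_add_cancel hi.le, abs_le]; constructor <;> linarith [hy.1, hy.2])
      have e1 : eLpNorm (pv fun _ : Fin 1 => P (i+1) - P i) 2 (volume.restrict (Icc (c - 2^i*l) (c + 2^i*l))) =
          eLpNorm (fun t : ℝ => (P (i+1) - P i).eval (t:ℂ)) 2 (volume.restrict (Icc (c - 2^i*l) (c + 2^i*l))) :=
        eLpNorm_congr_norm_ae (Filter.Eventually.of_forall fun t => norm_pv_one _ t)
      rw [e1, ← ofReal_norm, norm_pv_one] at h1
      have h2 := h1.trans (mul_le_mul_right (hD i) _)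
      rw [← ENNReal.ofReal_mul (by positivity), ENNReal.ofReal_le_ofReal_iff (by positivity)] at h2
      refine h2.trans ?_
      have e2 : (2^i*l)^(-(1/2):ℝ) * (2^i*l)^σ = (2^i*l)^s := by
        rw [← Real.rpow_add hr]; congr 1; rw [hσ]; ring
      have e3 : ((2:ℝ)^(j-i))^k * (2^i*l)^s ≤ (2^j*l)^s := by
        have : (2:ℝ)^j*l = 2^(j-i) * (2^i*l) := by rw [← mul_assoc, ← pow_add, Nat.sub_add_cancel hi.le]
        rw [this, Real.mul_rpow (by positivity) hr.le]
        gcongr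
        rw [← Real.rpow_natCast]
        exact Real.rpow_le_rpow_of_exponent_le (one_le_pow₀ (by norm_num)) hks
      calc _ = Cp * C1 * lam * (((2:ℝ)^(j-i))^k * ((2^i*l)^(-(1/2):ℝ) * (2^i*l)^σ)) := by ring
        _ ≤ _ := by rw [e2]; gcongr
    refine (eLpNorm_le_of_ae_bound ((ae_restrict_iff' measurableSet_Icc).2 (Filter.Eventually.of_forall hb))).trans ?_
    rw [Measure.restrict_apply_univ, Real.volume_Icc]
    rw [ENNReal.ofReal_rpow_of_nonneg (by linarith) (by positivity), ← ENNReal.ofReal_mul (by apply Real.rpow_nonneg; linarith)]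
    apply ENNReal.ofReal_le_ofReal
    rw [show c + 2^j*l - (c - 2^j*l) = 2 * (2^j*l) by ring, Real.mul_rpow (by norm_num) hrj.le]
    have e4 : (2^j*l)^((2:ℝ≥0∞).toReal⁻¹) * (2^j*l)^s = (2^j*l)^σ := by
      rw [← Real.rpow_add hrj]; congr 1; rw [hσ]; simp; ring
    have e5 : (2:ℝ)^((2:ℝ≥0∞).toReal⁻¹) ≤ 2 := by
      conv_rhs => rw [← Real.rpow_one 2]
      apply Real.rpow_le_rpow_of_exponent_le <;> norm_num
    calc _ = 2^((2:ℝ≥0∞).toReal⁻¹) * (Cp * C1) * lam * ((2^j*l)^((2:ℝ≥0∞).toReal⁻¹) * (2^j*l)^s) := by ring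
      _ ≤ _ := by rw [e4]; gcongr
  have e : (fun t : ℝ => f t - (P 0).eval (t:ℂ)) = (fun t : ℝ => f t - (P j).eval (t:ℂ)) +
      ∑ i ∈ Finset.range j, (fun t : ℝ => (P (i+1) - P i).eval (t:ℂ)) := by
    ext t
    have := Finset.sum_range_sub (fun i => (P i).eval (t:ℂ)) j
    simp only [Pi.add_apply, Finset.sum_apply, Polynomial.eval_sub, this]
    ring
  rw [e]
  refine (eLpNorm_add_le (hmeas _ _) (Finset.aestronglyMeasurable_sum _ fun i _ => (hcont _).aestronglyMeasurable) (by norm_num)).trans ?_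
  refine (add_le_add (hP j) ((eLpNorm_sum_le (fun i _ => (hcont _).aestronglyMeasurable) (by norm_num)).trans
    (Finset.sum_le_sum fun i hi => hDj i (Finset.mem_range.1 hi)))).trans ?_
  rw [Finset.sum_const, Finset.card_range, nsmul_eq_mul, ← ENNReal.ofReal_natCast, ← ENNReal.ofReal_mul (by positivity), ← ENNReal.ofReal_add (by positivity) (by positivity)]
  apply ENNReal.ofReal_le_ofReal
  rw [Real.mul_rpow (by norm_num) (by positivity)]
  have hX : 0 ≤ lam * (2^j*l)^σ := by positivity
  have h1 : 0 ≤ (2:ℝ)^σ * (j:ℝ) * (lam * (2^j*l)^σ) := by positivity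
  have h2 : 0 ≤ 2 * (Cp * C1) * (lam * (2^j*l)^σ) := by positivity
  linarith [h1, h2]


theorem growth_int (w : ℝ → ℂ) (hw : Measurable w) (c l A σ : ℝ) (hl : 0 < l) (hA : 0 ≤ A) (hσ : 0 ≤ σ)
    (h : ∀ j : ℕ, eLpNorm w 2 (volume.restrict (Icc (c - 2^j*l) (c + 2^j*l))) ≤ ENNReal.ofReal (A * (j+1) * (2^j*l)^σ)) :
    ∃ K : ℕ, Integrable (fun t => ‖w t‖ * ((1 + |t - c|)^K)⁻¹) := by
  obtain ⟨M, hM⟩ := exists_nat_ge σ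
  set K := M + 3 with hK
  refine ⟨K, ?_⟩
  set A' : ℝ := A * l^σ * (2*l)^(1/2:ℝ) with hA'
  have hA'0 : 0 ≤ A' := by positivity
  have h1 : ∀ j : ℕ, ∫⁻ t in Icc (c - 2^j*l) (c + 2^j*l), ‖w t‖ₑ ≤ ENNReal.ofReal (A' * (2^j)^(K-1)) := by
    intro j
    rw [← eLpNorm_one_eq_lintegral_enorm]
    refine (eLpNorm_le_eLpNorm_mul_rpow_measure_univ (q := 2) (by norm_num) hw.aestronglyMeasurable).trans ?_
    refine (mul_le_mul_left (h j) _).trans ?_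
    rw [Measure.restrict_apply_univ, Real.volume_Icc, show c + 2^j*l - (c - 2^j*l) = 2^j * (2 * l) by ring]
    rw [ENNReal.ofReal_rpow_of_nonneg (by positivity) (by norm_num), ← ENNReal.ofReal_mul (by positivity)]
    apply ENNReal.ofReal_le_ofReal
    rw [Real.mul_rpow (by positivity) hl.le, Real.mul_rpow (by positivity) (by positivity)]
    have h2 : (1:ℝ) ≤ 2^j := one_le_pow₀ (by norm_num)
    have e1 : ((2:ℝ)^j)^σ ≤ (2^j)^M := by
      rw [← Real.rpow_natCast (2^j) M]; exact Real.rpow_le_rpow_of_exponent_le h2 hM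
    have e2 : ((2:ℝ)^j)^(1 / (1:ℝ≥0∞).toReal - 1 / (2:ℝ≥0∞).toReal) ≤ 2^j := by
      conv_rhs => rw [← Real.rpow_one (2^j)]
      apply Real.rpow_le_rpow_of_exponent_le h2; norm_num
    have e3 : (2*l)^(1 / (1:ℝ≥0∞).toReal - 1 / (2:ℝ≥0∞).toReal) = (2*l)^(1/2:ℝ) := by
      congr 1; norm_num
    have e4 : (j:ℝ) + 1 ≤ 2^j := by
      have : j + 1 ≤ 2^j := Nat.lt_two_pow_self
      exact_mod_cast this
    rw [e3]
    calc _ = A' * (((j:ℝ)+1) * ((2:ℝ)^j)^σ * ((2:ℝ)^j)^(1 / (1:ℝ≥0∞).toReal - 1 / (2:ℝ≥0∞).toReal)) := by rw [hA']; ring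
      _ ≤ A' * (2^j * (2^j)^M * 2^j) := by gcongr
      _ = _ := by rw [show K - 1 = M + 2 by omega]; ring
  refine ⟨(by fun_prop : Measurable fun t => ‖w t‖ * ((1 + |t - c|)^K)⁻¹).aestronglyMeasurable, ?_⟩
  rw [hasFiniteIntegral_iff_enorm]
  set D : ℝ := 1 + (2/l)^K with hD
  have hD0 : 0 < D := by positivity
  have hpt : ∀ t, ‖‖w t‖ * ((1 + |t - c|)^K)⁻¹‖ₑ ≤ ∑' j : ℕ, ENNReal.ofReal (D * ((2^j)^K)⁻¹) *
      (Icc (c - 2^j*l) (c + 2^j*l)).indicator (fun t => ‖w t‖ₑ) t := by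
    intro t
    have hex : ∃ j : ℕ, |t - c| ≤ 2^j * l := by
      obtain ⟨j, hj⟩ := pow_unbounded_of_one_lt (|t-c|/l) (one_lt_two)
      exact ⟨j, by rw [div_lt_iff₀ hl] at hj; exact hj.le⟩
    classical
    set j := Nat.find hex with hj
    have hj1 : |t - c| ≤ 2^j * l := Nat.find_spec hex
    refine le_trans ?_ (ENNReal.le_tsum j)
    have hmem : t ∈ Icc (c - 2^j*l) (c + 2^j*l) := by
      rw [abs_le] at hj1; constructor <;> linarith
    rw [indicator_of_mem hmem, enorm_mul, enorm_norm, mul_comm]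
    refine mul_le_mul_left ?_ _
    rw [Real.enorm_of_nonneg (by positivity)]
    apply ENNReal.ofReal_le_ofReal
    rcases Nat.eq_zero_or_pos j with h0 | h0
    · rw [h0]; simp
      calc ((1 + |t - c|)^K)⁻¹ ≤ 1 := inv_le_one_of_one_le₀ (one_le_pow₀ (by linarith [abs_nonneg (t-c)]))
        _ ≤ D := by rw [hD]; linarith [show 0 ≤ (2/l)^K by positivity]
    · have hlt : ¬ |t - c| ≤ 2^(j-1) * l := Nat.find_min hex (by omega)
      push Not at hlt
      have e5 : (2:ℝ)^j * l / 2 ≤ 1 + |t - c| := by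
        have : (2:ℝ)^j = 2^(j-1) * 2 := by rw [← pow_succ]; congr 1; omega
        rw [this]; linarith
      calc ((1 + |t - c|)^K)⁻¹ ≤ ((2^j * l / 2)^K)⁻¹ := by gcongr
        _ = (2/l)^K * ((2^j)^K)⁻¹ := by rw [← inv_pow, ← inv_pow, ← mul_pow]; congr 1; field_simp
        _ ≤ _ := by gcongr; rw [hD]; linarith
  refine (lintegral_mono hpt).trans_lt ?_
  rw [lintegral_tsum (fun j => ((hw.enorm.indicator measurableSet_Icc).const_mul _).aemeasurable)]
  have hj : ∀ j : ℕ, ∫⁻ t, ENNReal.ofReal (D * ((2^j)^K)⁻¹) *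
      (Icc (c - 2^j*l) (c + 2^j*l)).indicator (fun t => ‖w t‖ₑ) t ≤ ENNReal.ofReal (D * A' * (1/2)^j) := by
    intro j
    rw [lintegral_const_mul _ (hw.enorm.indicator measurableSet_Icc), lintegral_indicator measurableSet_Icc]
    refine (mul_le_mul_right (h1 j) _).trans ?_
    rw [← ENNReal.ofReal_mul (by positivity)]
    apply ENNReal.ofReal_le_ofReal
    apply le_of_eq
    have : ((2:ℝ)^j)^K = (2^j)^(K-1) * 2^j := by rw [← pow_succ]; congr 1
    rw [this, one_div, inv_pow]; field_simp
  refine (ENNReal.tsum_le_tsum hj).trans_lt ?_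
  have hsum : Summable fun j : ℕ => D * A' * (1/2:ℝ)^j := (summable_geometric_two).mul_left _
  rw [← ENNReal.ofReal_tsum_of_nonneg (fun j => by positivity) hsum]
  exact ENNReal.ofReal_lt_top

theorem ker_decay (η : SchwartzMap ℝ ℂ) (a b : ℝ) (hab : a < b) (c R : ℝ) (hR : 0 ≤ R) (K : ℕ) :
    ∃ M : ℝ, 0 ≤ M ∧ ∀ y, |y - c| ≤ R → ∀ t, ‖ker η a b y t‖ ≤ M * ((1 + |t - c|)^K)⁻¹ := by
  have hL : 0 < b - a := by linarith
  set L := b - a with hLd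
  obtain ⟨B, hB⟩ : ∃ B : ℝ, ∀ x : ℝ, (1 + |x|)^K * ‖η x‖ ≤ B := by
    refine ⟨2 ^ K * ((Finset.Iic (K, 0)).sup fun m : ℕ × ℕ => SchwartzMap.seminorm ℝ m.1 m.2) η, fun x => ?_⟩
    have := SchwartzMap.one_add_le_sup_seminorm_apply (𝕜 := ℝ) (m := (K, 0)) (k := K) (n := 0) le_rfl le_rfl η x
    simpa only [norm_iteratedFDeriv_zero, Real.norm_eq_abs] using this
  have hB0 : 0 ≤ B := le_trans (by positivity) (hB 0)
  refine ⟨L * B * ((1+R)*(1+L⁻¹))^K, by positivity, fun y hy t => ?_⟩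
  rw [ker, norm_mul, norm_mul, e2pi_norm, mul_one, Complex.norm_real, Real.norm_eq_abs, abs_of_pos hL]
  have h1 : 1 + |t - c| ≤ (1+R)*(1+L⁻¹) * (1 + |L * (y - t)|) := by
    rw [abs_mul, abs_of_pos hL]
    have e1 : |t - c| ≤ |y - t| + R := by
      have : t - c = -(y - t) + (y - c) := by ring
      rw [this]; refine (abs_add_le _ _).trans ?_; rw [abs_neg]; linarith
    have hd := abs_nonneg (y - t)
    set d := |y - t|
    have e2 : (1 + L⁻¹) * (1 + L * d) = 1 + L * d + L⁻¹ + d := by field_simp; ring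
    rw [mul_assoc, e2]
    have : 0 ≤ L * d := by positivity
    have : 0 ≤ L⁻¹ := by positivity
    nlinarith [mul_nonneg hR hd, mul_nonneg hR (by positivity : 0 ≤ L * d), mul_nonneg hR (by positivity : 0 ≤ L⁻¹)]
  have h2 := hB (L * (y - t))
  have h3 : (1 + |t - c|)^K * ‖η (L * (y - t))‖ ≤ ((1+R)*(1+L⁻¹))^K * B := by
    calc _ ≤ ((1+R)*(1+L⁻¹) * (1 + |L * (y - t)|))^K * ‖η (L * (y - t))‖ := by gcongr
      _ = ((1+R)*(1+L⁻¹))^K * ((1 + |L * (y - t)|)^K * ‖η (L * (y - t))‖) := by rw [mul_pow]; ring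
      _ ≤ _ := by gcongr
  rw [← div_eq_mul_inv, le_div_iff₀ (by positivity)]
  calc _ = L * ((1 + |t - c|)^K * ‖η (L * (y - t))‖) := by ring
    _ ≤ L * (((1+R)*(1+L⁻¹))^K * B) := by gcongr
    _ = _ := by ring

theorem ker_cont_y (η : SchwartzMap ℝ ℂ) (a b t : ℝ) : Continuous (fun y => ker η a b y t) := by
  unfold ker
  have := η.continuous
  fun_prop

theorem ker_int (η : SchwartzMap ℝ ℂ) (a b : ℝ) (hab : a < b) (w : ℝ → ℂ) (hw : Measurable w) (c : ℝ) (K : ℕ)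
    (hi : Integrable (fun t => ‖w t‖ * ((1 + |t - c|)^K)⁻¹)) (y : ℝ) : Integrable (fun t => w t * ker η a b y t) := by
  obtain ⟨M, hM, h⟩ := ker_decay η a b hab c |y - c| (abs_nonneg _) K
  refine (hi.const_mul M).mono' (hw.aestronglyMeasurable.mul (ker_cont η a b y).aestronglyMeasurable) ?_
  refine Filter.Eventually.of_forall fun t => ?_
  rw [norm_mul]
  calc _ ≤ ‖w t‖ * (M * ((1 + |t - c|)^K)⁻¹) := by gcongr; exact h y le_rfl t
    _ = _ := by ring

theorem rot_cont (η : SchwartzMap ℝ ℂ) (a b : ℝ) (hab : a < b) (w : ℝ → ℂ) (hw : Measurable w) (c : ℝ) (K : ℕ)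
    (hi : Integrable (fun t => ‖w t‖ * ((1 + |t - c|)^K)⁻¹)) : Continuous (rotConv η a b w) := by
  have e0 : rotConv η a b w = fun y => ∫ t, w t * ker η a b y t := funext (rotConv_eq _ _ _ _)
  rw [e0, continuous_iff_continuousAt]
  intro y0
  obtain ⟨M, hM, h⟩ := ker_decay η a b hab c (|y0 - c| + 1) (by positivity) K
  refine continuousAt_of_dominated (bound := fun t => M * (‖w t‖ * ((1 + |t - c|)^K)⁻¹)) ?_ ?_ (hi.const_mul M) ?_
  · exact Filter.Eventually.of_forall fun y => hw.aestronglyMeasurable.mul (ker_cont η a b y).aestronglyMeasurable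
  · filter_upwards [Metric.ball_mem_nhds y0 one_pos] with y hy
    refine Filter.Eventually.of_forall fun t => ?_
    rw [norm_mul]
    have : |y - c| ≤ |y0 - c| + 1 := by
      rw [Metric.mem_ball, Real.dist_eq] at hy
      have : y - c = (y0 - c) + (y - y0) := by ring
      rw [this]; refine (abs_add_le _ _).trans ?_; linarith
    calc _ ≤ ‖w t‖ * (M * ((1 + |t - c|)^K)⁻¹) := by gcongr; exact h y this t
      _ = _ := by ring
  · exact Filter.Eventually.of_forall fun t => (continuous_const.mul (ker_cont_y η a b t)).continuousAt

theorem poly_grow (Q : Polynomial ℂ) : ∃ K : ℕ, ∃ B : ℝ, ∀ t : ℝ, ‖Q.eval (t:ℂ)‖ ≤ B * (1 + |t|)^K := by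
  induction Q using Polynomial.induction_on' with
  | add p q hp hq =>
    obtain ⟨K1, B1, h1⟩ := hp
    obtain ⟨K2, B2, h2⟩ := hq
    refine ⟨K1 + K2, |B1| + |B2|, fun t => ?_⟩
    rw [Polynomial.eval_add]
    refine (norm_add_le _ _).trans ?_
    have ht : 1 ≤ 1 + |t| := by linarith [abs_nonneg t]
    have e1 : (1+|t|)^K1 ≤ (1+|t|)^(K1+K2) := pow_le_pow_right₀ ht (by omega)
    have e2 : (1+|t|)^K2 ≤ (1+|t|)^(K1+K2) := pow_le_pow_right₀ ht (by omega)
    calc _ ≤ B1 * (1+|t|)^K1 + B2 * (1+|t|)^K2 := add_le_add (h1 t) (h2 t)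
      _ ≤ |B1| * (1+|t|)^K1 + |B2| * (1+|t|)^K2 := by gcongr <;> exact le_abs_self _
      _ ≤ |B1| * (1+|t|)^(K1+K2) + |B2| * (1+|t|)^(K1+K2) := by gcongr
      _ = _ := by ring
  | monomial n a =>
    refine ⟨n, ‖a‖, fun t => ?_⟩
    rw [Polynomial.eval_monomial, norm_mul, norm_pow, Complex.norm_real, Real.norm_eq_abs]
    gcongr; linarith

theorem poly_wt (Q : Polynomial ℂ) : ∃ K : ℕ, Integrable (fun t : ℝ => ‖Q.eval (t:ℂ)‖ * ((1 + |t - 0|)^K)⁻¹) := by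
  obtain ⟨K, B, h⟩ := poly_grow Q
  refine ⟨K + 2, ?_⟩
  have h1 : Integrable (fun t : ℝ => |B| * (1 + t^2)⁻¹) := (integrable_inv_one_add_sq).const_mul _
  have hc : Continuous fun t : ℝ => Q.eval (t:ℂ) := by fun_prop
  refine h1.mono' (Measurable.aestronglyMeasurable (by have := hc.measurable; fun_prop)) (Filter.Eventually.of_forall fun t => ?_)
  rw [Real.norm_of_nonneg (by positivity), sub_zero]
  have hp : 0 < 1 + |t| := by positivity
  calc _ ≤ (|B| * (1 + |t|)^K) * ((1 + |t|)^(K+2))⁻¹ := by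
        gcongr; exact (h t).trans (by gcongr; exact le_abs_self _)
    _ = |B| * ((1+|t|)^2)⁻¹ := by rw [pow_add]; field_simp
    _ ≤ _ := by
      gcongr
      nlinarith [sq_abs t, abs_nonneg t]

theorem rot_sub_poly {η : SchwartzMap ℝ ℂ} (h : InS η) (a b : ℝ) (hab : a < b) (h0 : (0:ℝ) ∉ Ioo a b)
    (f : ℝ → ℂ) (hf : Measurable f) (Q : Polynomial ℂ) (c : ℝ) (K : ℕ)
    (hi : Integrable (fun t : ℝ => ‖f t - Q.eval (t:ℂ)‖ * ((1 + |t - c|)^K)⁻¹)) (y : ℝ) :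
    rotConv η a b f y = rotConv η a b (fun t => f t - Q.eval (t:ℂ)) y := by
  have hc : Continuous fun t : ℝ => Q.eval (t:ℂ) := by fun_prop
  obtain ⟨K2, hK2⟩ := poly_wt Q
  have i1 := ker_int η a b hab _ (hf.sub hc.measurable) c K hi y
  have i2 := ker_int η a b hab _ hc.measurable 0 K2 hK2 y
  have e0 : rotConv η a b (fun t : ℝ => Q.eval (t:ℂ)) y = 0 := by
    rw [rotConv, conv, annihil h a b hab h0, mul_zero]
  rw [rotConv_eq] at e0
  rw [rotConv_eq, rotConv_eq]
  have := integral_add i1 i2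
  rw [e0, add_zero] at this
  refine Eq.trans ?_ this
  congr 1; ext t; simp only [Pi.sub_apply]; ring


theorem ind_wt (w : ℝ → ℂ) (hw : Measurable w) (c : ℝ) (K : ℕ) (S : Set ℝ) (hS : MeasurableSet S)
    (hi : Integrable (fun t => ‖w t‖ * ((1 + |t - c|)^K)⁻¹)) :
    Integrable (fun t => ‖S.indicator w t‖ * ((1 + |t - c|)^K)⁻¹) := by
  have hm := hw.indicator hS
  refine hi.mono' (by fun_prop : Measurable fun t => ‖S.indicator w t‖ * ((1 + |t - c|)^K)⁻¹).aestronglyMeasurable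
    (Filter.Eventually.of_forall fun t => ?_)
  rw [Real.norm_of_nonneg (by positivity)]
  gcongr
  exact norm_indicator_le_norm_self _ _

theorem gv_cont (η : SchwartzMap ℝ ℂ) {N : ℕ} (a b : Fin N → ℝ) (hab : ∀ m, a m < b m) (w : ℝ → ℂ) (hw : Measurable w) (c : ℝ) (K : ℕ)
    (hi : Integrable (fun t => ‖w t‖ * ((1 + |t - c|)^K)⁻¹)) : Continuous (gv η a b w) := by
  unfold gv
  have h : ∀ m, Continuous (rotConv η (a m) (b m) w) := fun m => rot_cont η _ _ (hab m) w hw c K hi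
  exact (PiLp.continuous_toLp 2 _).comp (continuous_pi fun m => h m)

theorem gv_add (η : SchwartzMap ℝ ℂ) {N : ℕ} (a b : Fin N → ℝ) (hab : ∀ m, a m < b m) (w w1 w2 : ℝ → ℂ) (h1 : Measurable w1) (h2 : Measurable w2)
    (c : ℝ) (K : ℕ) (e : ∀ t, w t = w1 t + w2 t)
    (i1 : Integrable (fun t => ‖w1 t‖ * ((1 + |t - c|)^K)⁻¹))
    (i2 : Integrable (fun t => ‖w2 t‖ * ((1 + |t - c|)^K)⁻¹)) (y : ℝ) : gv η a b w y = gv η a b w1 y + gv η a b w2 y := by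
  ext m
  simp only [gv, PiLp.add_apply]
  rw [rotConv_eq, rotConv_eq, rotConv_eq, ← integral_add (ker_int η _ _ (hab m) _ h1 c K i1 y) (ker_int η _ _ (hab m) _ h2 c K i2 y)]
  congr 1; ext t; rw [e]; ring

theorem norm_le_sum_coord {N : ℕ} (x : EuclideanSpace ℂ (Fin N)) : ‖x‖ ≤ ∑ m, ‖x m‖ := by
  rw [EuclideanSpace.norm_eq]
  apply Real.sqrt_le_iff.2
  refine ⟨by positivity, ?_⟩
  exact Finset.sum_sq_le_sq_sum_of_nonneg fun i _ => norm_nonneg _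

theorem gv_tail (η : SchwartzMap ℝ ℂ) {N : ℕ} (a b : Fin N → ℝ) (hab : ∀ m, a m < b m) (w : ℝ → ℂ) (hw : Measurable w) (c : ℝ) (K : ℕ)
    (hi : Integrable (fun t => ‖w t‖ * ((1 + |t - c|)^K)⁻¹)) (l R ε : ℝ) (hl : 0 < l) (hR : 0 ≤ R) (hε : 0 < ε) :
    ∃ J : ℕ, ∀ y, |y - c| ≤ R → ‖gv η a b ((Icc (c - 2^J*l) (c + 2^J*l))ᶜ.indicator w) y‖ ≤ ε := by
  choose M hM h using fun m => ker_decay η (a m) (b m) (hab m) c R hR K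
  have hmS : ∀ J : ℕ, MeasurableSet ((Icc (c - 2^J*l) (c + 2^J*l))ᶜ) := fun J => measurableSet_Icc.compl
  have ht := Antitone.tendsto_setIntegral (μ := volume) (s := fun J : ℕ => (Icc (c - 2^J*l) (c + 2^J*l))ᶜ) (f := fun t => ‖w t‖ * ((1 + |t - c|)^K)⁻¹)
    hmS (by
      intro i j hij
      apply compl_subset_compl.2
      have : (2:ℝ)^i*l ≤ 2^j*l := by gcongr; norm_num
      exact Icc_subset_Icc (by linarith) (by linarith)) hi.integrableOn
  have hemp : (⋂ J : ℕ, (Icc (c - 2^J*l) (c + 2^J*l))ᶜ) = ∅ := by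
    rw [eq_empty_iff_forall_notMem]
    intro t ht
    obtain ⟨j, hj⟩ := pow_unbounded_of_one_lt (|t-c|/l) (one_lt_two)
    rw [div_lt_iff₀ hl] at hj
    have := mem_iInter.1 ht j
    apply this
    have := abs_le.1 hj.le
    constructor <;> linarith
  rw [hemp, setIntegral_empty] at ht
  have hS : 0 ≤ ∑ m, M m := Finset.sum_nonneg fun m _ => hM m
  have hev := ht.eventually (gt_mem_nhds (show (0:ℝ) < ε / (∑ m, M m + 1) by positivity))
  obtain ⟨J, hJ⟩ := hev.exists
  refine ⟨J, fun y hy => ?_⟩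
  set I0 := ∫ t in (Icc (c - 2^J*l) (c + 2^J*l))ᶜ, ‖w t‖ * ((1 + |t - c|)^K)⁻¹ with hI0
  have hI0n : 0 ≤ I0 := by rw [hI0]; apply integral_nonneg; intro t; positivity
  calc _ ≤ ∑ m, M m * I0 := by
        refine (norm_le_sum_coord _).trans (Finset.sum_le_sum fun m _ => ?_)
        simp only [gv]
        rw [rotConv_eq, hI0, ← integral_indicator (hmS J), ← integral_const_mul]
        refine norm_integral_le_of_norm_le ((hi.indicator (hmS J)).const_mul _) (Filter.Eventually.of_forall fun t => ?_)
        by_cases ht : t ∈ (Icc (c - 2^J*l) (c + 2^J*l))ᶜ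
        · rw [indicator_of_mem ht, indicator_of_mem ht, norm_mul]
          calc _ ≤ ‖w t‖ * (M m * ((1 + |t - c|)^K)⁻¹) := by gcongr; exact h m y hy t
            _ = _ := by ring
        · rw [indicator_of_notMem ht, indicator_of_notMem ht]; simp
    _ = (∑ m, M m) * I0 := by rw [Finset.sum_mul]
    _ ≤ (∑ m, M m + 1) * (ε / (∑ m, M m + 1)) := by
      have : I0 ≤ ε / (∑ m, M m + 1) := hJ.le
      gcongr; linarith
    _ = ε := by field_simp

theorem local_gv {η : SchwartzMap ℝ ℂ} (hη : InS η) : ∃ B : ℝ, 0 < B ∧ ∀ {N : ℕ} (a b : Fin N → ℝ), Admissible a b →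
    ∀ (h : ℝ → ℂ), MemLp h 2 volume → eLpNorm (gv η a b h) 2 volume ≤ ENNReal.ofReal B * eLpNorm h 2 volume := by
  obtain ⟨B, hB, H⟩ := local_l2 hη
  refine ⟨√B, by positivity, fun a b hab h hh => ?_⟩
  have h1 := H a b hab h hh
  have e : eLpNorm (gv η a b h) 2 volume ^ 2 = ∫⁻ y, ∑ m, ‖conv h (phim η (a m) (b m)) y‖ₑ ^ 2 := by
    rw [eLpNorm_two_sq]
    congr 1; ext y
    rw [← ofReal_norm, ← ENNReal.ofReal_pow (norm_nonneg _), EuclideanSpace.norm_sq_eq, ENNReal.ofReal_sum_of_nonneg (fun _ _ => by positivity)]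
    refine Finset.sum_congr rfl fun m _ => ?_
    rw [ENNReal.ofReal_pow (norm_nonneg _), gv, rotConv_norm, ofReal_norm]
  rw [← e] at h1
  have e2 : ENNReal.ofReal B * eLpNorm h 2 volume ^ 2 = (ENNReal.ofReal √B * eLpNorm h 2 volume)^2 := by
    rw [mul_pow, ← ENNReal.ofReal_pow (by positivity), Real.sq_sqrt hB.le]
  rw [e2] at h1
  exact (ENNReal.pow_le_pow_left_iff (by norm_num)).1 h1


theorem part1 {φ : SchwartzMap ℝ ℂ} (hφ : InS φ) (k : ℕ) (s : ℝ) (hks : (k:ℝ) ≤ s) (hsk : s < k + 1) :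
    ∃ C : ℝ, 0 < C ∧ ∀ {N : ℕ} (a b : Fin N → ℝ), Admissible a b → ∀ f : ℝ → ℂ, Measurable f → ∀ (x lam : ℝ), 0 < lam →
    (∀ u v, u < v → x ∈ Icc u v → ∃ Q : Polynomial ℂ, Q.degree < ((k+1:ℕ) : WithBot ℕ) ∧
      eLpNorm (fun t : ℝ => f t - Q.eval (t:ℂ)) 2 (volume.restrict (Icc u v)) ≤ ENNReal.ofReal (lam * (v - u) ^ (s + 1/2))) →
    Continuous (gv φ a b f) ∧ ∀ u v, u < v → x ∈ Icc u v → ∃ P : Fin N → Polynomial ℂ, (∀ m, (P m).degree < ((k+1:ℕ) : WithBot ℕ)) ∧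
      eLpNorm (fun t => gv φ a b f t - pv P t) 2 (volume.restrict (Icc u v)) ≤ ENNReal.ofReal (C * lam * (v - u) ^ (s + 1/2)) := by
  obtain ⟨Ca, hCa, HA⟩ := claimA k s hks
  obtain ⟨B, hB, HB⟩ := local_gv hφ
  obtain ⟨Cf, hCf, HF⟩ := far_piece hφ (k+1)
  have hs0 : 0 ≤ s := (Nat.cast_nonneg k).trans hks
  set σ := s + 1/2 with hσ
  have hσ0 : 0 ≤ σ := by positivity
  set δ : ℝ := k + 1 - s with hδ
  have hδ0 : 0 < δ := by rw [hδ]; linarith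
  set q : ℝ := 2^(-δ) with hq
  have hq0 : 0 < q := by positivity
  have hq1 : q < 1 := Real.rpow_lt_one_of_one_lt_of_neg one_lt_two (by linarith)
  have hsum : Summable fun j : ℕ => ((j:ℝ)+2) * q^j := by
    have h1 := summable_pow_mul_geometric_of_norm_lt_one (R := ℝ) 1 (r := q) (by rwa [Real.norm_of_nonneg hq0.le])
    have h2 := (summable_geometric_of_lt_one hq0.le hq1).mul_left 2
    refine (h1.add h2).congr fun j => ?_
    simp; ring
  set T := ∑' j : ℕ, ((j:ℝ)+2) * q^j with hT
  have hT0 : 0 ≤ T := tsum_nonneg fun j => by positivity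
  set E : ℝ := Cf * Ca * 2^((k:ℝ) + 1 + 1/2 + σ) with hE
  have hE0 : 0 < E := by positivity
  refine ⟨B * Ca + E * T + 1, by positivity, ?_⟩
  intro N a b hadm f hf x lam hlam H
  -- the decomposition for a given interval
  have main : ∀ u v, u < v → x ∈ Icc u v → ∃ (Q : Polynomial ℂ) (c : ℝ) (K : ℕ), c = (u+v)/2 ∧
      (∀ j : ℕ, eLpNorm (fun t : ℝ => f t - Q.eval (t:ℂ)) 2 (volume.restrict (Icc (c - 2^j*(v-u)) (c + 2^j*(v-u)))) ≤
        ENNReal.ofReal (Ca * (j+1) * lam * (2^j * (v-u)) ^ σ)) ∧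
      Integrable (fun t : ℝ => ‖f t - Q.eval (t:ℂ)‖ * ((1 + |t - c|)^K)⁻¹) := by
    intro u v huv hx
    have hl : 0 < v - u := by linarith
    obtain ⟨Q, hQd, hQ⟩ := HA f hf ((u+v)/2) (v-u) lam hl hlam.le (fun j => by
      have h1 : v - u ≤ 2^j*(v-u) := by
        have : (1:ℝ) ≤ 2^j := one_le_pow₀ (by norm_num)
        nlinarith
      obtain ⟨Q, h2, h3⟩ := H ((u+v)/2 - 2^j*(v-u)) ((u+v)/2 + 2^j*(v-u)) (by linarith)
        ⟨by linarith [hx.1], by linarith [hx.2]⟩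
      refine ⟨Q, h2, h3.trans (le_of_eq ?_)⟩
      congr 3; ring)
    have hcQ : Continuous fun t : ℝ => Q.eval (t:ℂ) := by fun_prop
    obtain ⟨K, hK⟩ := growth_int (fun t : ℝ => f t - Q.eval (t:ℂ)) (hf.sub hcQ.measurable) ((u+v)/2) (v-u) (Ca*lam) σ hl (by positivity) hσ0
      (fun j => (hQ j).trans (le_of_eq (by congr 1; ring)))
    exact ⟨Q, (u+v)/2, K, rfl, hQ, hK⟩
  have hgw : ∀ (Q : Polynomial ℂ) (c : ℝ) (K : ℕ), Integrable (fun t : ℝ => ‖f t - Q.eval (t:ℂ)‖ * ((1 + |t - c|)^K)⁻¹) →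
      gv φ a b f = gv φ a b (fun t : ℝ => f t - Q.eval (t:ℂ)) := by
    intro Q c K hi
    ext y m
    exact rot_sub_poly hφ (a m) (b m) (hadm.1 m) (hadm.2.1 m) f hf Q c K hi y
  refine ⟨?_, ?_⟩
  · obtain ⟨Q, c, K, -, -, hi⟩ := main (x-1) (x+1) (by linarith) ⟨by linarith, by linarith⟩
    have hcQ : Continuous fun t : ℝ => Q.eval (t:ℂ) := by fun_prop
    rw [hgw Q c K hi]
    exact gv_cont φ a b hadm.1 _ (hf.sub hcQ.measurable) c K hi
  intro u v huv hx
  obtain ⟨Q, c, K, hc, hQ, hi⟩ := main u v huv hx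
  rw [hgw Q c K hi]
  have hcQ : Continuous fun t : ℝ => Q.eval (t:ℂ) := by fun_prop
  have hw : Measurable (fun t : ℝ => f t - Q.eval (t:ℂ)) := hf.sub hcQ.measurable
  set w : ℝ → ℂ := fun t => f t - Q.eval (t:ℂ) with hwd
  have hl : 0 < v - u := by linarith
  set l := v - u with hld
  set S : ℕ → Set ℝ := fun j => Icc (c - 2^j*l) (c + 2^j*l) with hS
  have hSm : ∀ j, MeasurableSet (S j) := fun j => measurableSet_Icc
  have hSmono : ∀ j, S j ⊆ S (j+1) := fun j => by
    have : (2:ℝ)^j*l ≤ 2^(j+1)*l := by gcongr <;> norm_num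
    exact Icc_subset_Icc (by linarith) (by linarith)
  have hmem : ∀ j, MemLp w 2 (volume.restrict (S j)) := fun j =>
    ⟨hw.aestronglyMeasurable, (hQ j).trans_lt ENNReal.ofReal_lt_top⟩
  have hmemI : ∀ (j : ℕ) (A : Set ℝ), MeasurableSet A → A ⊆ S j → MemLp (A.indicator w) 2 volume ∧ Integrable (A.indicator w) ∧
      eLpNorm (A.indicator w) 2 volume ≤ ENNReal.ofReal (Ca * (j+1) * lam * (2^j * l) ^ σ) := by
    intro j A hA hAS
    have h1 : eLpNorm (A.indicator w) 2 volume ≤ ENNReal.ofReal (Ca * (j+1) * lam * (2^j * l) ^ σ) := by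
      rw [eLpNorm_indicator_eq_eLpNorm_restrict hA]
      exact (eLpNorm_mono_measure _ (Measure.restrict_mono hAS le_rfl)).trans (hQ j)
    refine ⟨⟨(hw.indicator hA).aestronglyMeasurable, h1.trans_lt ENNReal.ofReal_lt_top⟩, ?_, h1⟩
    rw [integrable_indicator_iff hA]
    have : IntegrableOn w (S j) := (hmem j).integrable (by norm_num)
    exact this.mono_set hAS
  have hiI : ∀ A : Set ℝ, MeasurableSet A → Integrable (fun t => ‖A.indicator w t‖ * ((1 + |t - c|)^K)⁻¹) :=
    fun A hA => ind_wt w hw c K A hA hi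
  have hcontI : ∀ A : Set ℝ, MeasurableSet A → Continuous (gv φ a b (A.indicator w)) :=
    fun A hA => gv_cont φ a b hadm.1 _ (hw.indicator hA) c K (hiI A hA)
  -- induction
  have ind : ∀ J : ℕ, ∃ P : Fin N → Polynomial ℂ, (∀ m, (P m).degree < ((k+1:ℕ) : WithBot ℕ)) ∧
      eLpNorm (fun t => gv φ a b ((S J).indicator w) t - pv P t) 2 (volume.restrict (Icc u v)) ≤
        ENNReal.ofReal ((B * Ca + E * ∑ j ∈ Finset.range J, ((j:ℝ)+2) * q^j) * lam * l^σ) := by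
    intro J
    induction J with
    | zero =>
      refine ⟨fun _ => 0, fun m => by simpa using WithBot.bot_lt_coe _, ?_⟩
      have e : (fun t => gv φ a b ((S 0).indicator w) t - pv (fun _ => 0) t) = gv φ a b ((S 0).indicator w) := by
        ext t m; simp [pv]
      rw [e]
      obtain ⟨h1, -, h2⟩ := hmemI 0 (S 0) (hSm 0) subset_rfl
      refine (eLpNorm_mono_measure _ Measure.restrict_le_self).trans ((HB a b hadm _ h1).trans ?_)
      refine (mul_le_mul_right h2 _).trans ?_
      rw [← ENNReal.ofReal_mul hB.le]
      apply ENNReal.ofReal_le_ofReal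
      simp
      apply le_of_eq; ring
    | succ J ih =>
      obtain ⟨P, hPd, hP⟩ := ih
      have hAm : MeasurableSet (S (J+1) \ S J) := (hSm _).diff (hSm _)
      obtain ⟨h1, h1i, h2⟩ := hmemI (J+1) (S (J+1) \ S J) hAm diff_subset
      have hρ : 0 < 2^J*l/2 := by positivity
      obtain ⟨R, hRd, hR⟩ := HF a b hadm _ h1 h1i u v (2^J*l/2) huv hρ (by
        intro y hy t ht
        have htm : t ∈ S (J+1) \ S J := by
          by_contra hc
          exact ht (indicator_of_notMem hc _)
        have h3 : 2^J*l < |t - c| := by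
          by_contra hc
          push Not at hc
          rw [abs_le] at hc
          exact htm.2 ⟨by linarith, by linarith⟩
        have h4 : |y - c| ≤ l/2 := by
          rw [abs_le, hc, hld]; constructor <;> linarith [hy.1, hy.2]
        have h5 : |t - c| ≤ |y - t| + |y - c| := by
          have : t - c = -(y - t) + (y - c) := by ring
          rw [this]; refine (abs_add_le _ _).trans ?_; rw [abs_neg]
        have h6 : l ≤ 2^J * l := by
          have : (1:ℝ) ≤ 2^J := one_le_pow₀ (by norm_num)
          nlinarith
        linarith)
      refine ⟨fun m => P m + R m, fun m => (Polynomial.degree_add_le _ _).trans_lt (max_lt (hPd m) (hRd m)), ?_⟩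
      have e : (fun t => gv φ a b ((S (J+1)).indicator w) t - pv (fun m => P m + R m) t) =
          (fun t => gv φ a b ((S J).indicator w) t - pv P t) + (fun t => gv φ a b ((S (J+1) \ S J).indicator w) t - pv R t) := by
        ext t : 1
        have e1 := gv_add φ a b hadm.1 ((S (J+1)).indicator w) ((S J).indicator w) ((S (J+1) \ S J).indicator w)
          (hw.indicator (hSm _)) (hw.indicator hAm) c K (by
            intro t
            by_cases ht : t ∈ S J
            · rw [indicator_of_mem ht, indicator_of_mem (hSmono J ht), indicator_of_notMem (fun h => h.2 ht), add_zero]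
            · rw [indicator_of_notMem ht, zero_add]
              by_cases ht' : t ∈ S (J+1)
              · have hh : t ∈ S (J+1) \ S J := ⟨ht', ht⟩
                rw [indicator_of_mem ht', indicator_of_mem hh]
              · rw [indicator_of_notMem ht', indicator_of_notMem (fun h => ht' h.1)]) (hiI _ (hSm _)) (hiI _ hAm) t
        rw [e1]
        have e2 : pv (fun m => P m + R m) t = pv P t + pv R t := by ext m; simp [pv]
        rw [e2, Pi.add_apply]; abel
      rw [e]
      refine (eLpNorm_add_le ((hcontI _ (hSm _)).sub (continuous_pv P)).aestronglyMeasurable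
        ((hcontI _ hAm).sub (continuous_pv R)).aestronglyMeasurable (by norm_num)).trans ?_
      have h7 : eLpNorm (fun t => gv φ a b ((S (J+1) \ S J).indicator w) t - pv R t) 2 (volume.restrict (Icc u v)) ≤
          ENNReal.ofReal (E * (((J:ℝ)+2) * q^J) * lam * l^σ) := by
        refine (eLpNorm_le_of_ae_bound ((ae_restrict_iff' measurableSet_Icc).2 (Filter.Eventually.of_forall hR))).trans ?_
        rw [Measure.restrict_apply_univ, Real.volume_Icc, ← hld]
        rw [ENNReal.ofReal_rpow_of_nonneg hl.le (by positivity), ← ENNReal.ofReal_mul (by apply Real.rpow_nonneg; linarith)]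
        apply ENNReal.ofReal_le_ofReal
        have h8 : (eLpNorm ((S (J+1) \ S J).indicator w) 2 volume).toReal ≤ Ca * ((J:ℝ)+2) * lam * (2^(J+1) * l) ^ σ := by
          refine (ENNReal.toReal_mono ENNReal.ofReal_ne_top h2).trans ?_
          rw [ENNReal.toReal_ofReal (by positivity)]
          apply le_of_eq; push_cast; ring
        have e3 : (2^(J+1) * l)^σ = 2^σ * ((2^J)^σ * l^σ) := by
          rw [show (2:ℝ)^(J+1)*l = 2 * (2^J*l) by ring, Real.mul_rpow (by norm_num) (by positivity), Real.mul_rpow (by positivity) hl.le]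
        have e4 : (2^J*l/2)^(-(((k+1:ℕ):ℝ)+1/2)) = 2^((k:ℝ)+1+1/2) * ((2^J)^(-((k:ℝ)+1+1/2)) * l^(-((k:ℝ)+1+1/2))) := by
          rw [Real.div_rpow (by positivity) (by norm_num), Real.mul_rpow (by positivity) hl.le]
          push_cast
          rw [Real.rpow_neg (by norm_num : (0:ℝ) ≤ 2) ]
          rw [div_inv_eq_mul]; ring
        have e5 : ((2:ℝ)^J)^(-((k:ℝ)+1+1/2)) * (2^J)^σ = q^J := by
          rw [← Real.rpow_add (by positivity), hq, ← Real.rpow_natCast, ← Real.rpow_natCast, ← Real.rpow_mul (by norm_num), ← Real.rpow_mul (by norm_num)]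
          congr 1; rw [hσ, hδ]; ring
        have e6 : l^((2:ℝ≥0∞).toReal⁻¹) * l^(-((k:ℝ)+1+1/2)) * l^(k+1) = 1 := by
          rw [← Real.rpow_natCast l (k+1), ← Real.rpow_add hl, ← Real.rpow_add hl]
          conv_rhs => rw [← Real.rpow_zero l]
          congr 1; push_cast; simp
        have e7 : (2:ℝ)^((k:ℝ)+1+1/2) * 2^σ = 2^((k:ℝ) + 1 + 1/2 + σ) := by
          rw [← Real.rpow_add (by norm_num)]
        calc _ ≤ l^((2:ℝ≥0∞).toReal⁻¹) * (Cf * (2^J*l/2)^(-(((k+1:ℕ):ℝ)+1/2)) * (Ca * ((J:ℝ)+2) * lam * (2^(J+1) * l) ^ σ) * l^(k+1)) := by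
              gcongr
          _ = Cf * Ca * (2^((k:ℝ)+1+1/2) * 2^σ) * (((J:ℝ)+2) * (((2:ℝ)^J)^(-((k:ℝ)+1+1/2)) * (2^J)^σ)) * lam * l^σ *
              (l^((2:ℝ≥0∞).toReal⁻¹) * l^(-((k:ℝ)+1+1/2)) * l^(k+1)) := by rw [e3, e4]; ring
          _ = _ := by rw [e5, e6, e7, mul_one]
      refine (add_le_add hP h7).trans ?_
      rw [← ENNReal.ofReal_add (by positivity) (by positivity)]
      apply ENNReal.ofReal_le_ofReal
      rw [Finset.sum_range_succ]
      apply le_of_eq; ring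
  -- tail
  obtain ⟨J, hJ⟩ := gv_tail φ a b hadm.1 w hw c K hi l (l/2) (lam * l^s) hl (by positivity) (by positivity)
  obtain ⟨P, hPd, hP⟩ := ind J
  refine ⟨P, hPd, ?_⟩
  have e : (fun t => gv φ a b w t - pv P t) = (fun t => gv φ a b ((S J).indicator w) t - pv P t) + gv φ a b ((S J)ᶜ.indicator w) := by
    ext t : 1
    rw [gv_add φ a b hadm.1 w ((S J).indicator w) ((S J)ᶜ.indicator w)
          (hw.indicator (hSm _)) (hw.indicator (hSm _).compl) c K (fun t => by
            have := congrFun (indicator_self_add_compl (S J) w) t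
            exact this.symm) (hiI _ (hSm _)) (hiI _ (hSm _).compl) t]
    rw [Pi.add_apply]; abel
  rw [e]
  refine (eLpNorm_add_le ((hcontI _ (hSm _)).sub (continuous_pv P)).aestronglyMeasurable
        (hcontI _ (hSm _).compl).aestronglyMeasurable (by norm_num)).trans ?_
  have h9 : eLpNorm (gv φ a b ((S J)ᶜ.indicator w)) 2 (volume.restrict (Icc u v)) ≤ ENNReal.ofReal (lam * l^σ) := by
    refine (eLpNorm_le_of_ae_bound (C := lam * l^s) ((ae_restrict_iff' measurableSet_Icc).2 (Filter.Eventually.of_forall fun y hy => hJ y ?_))).trans ?_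
    · rw [abs_le, hc, hld]; constructor <;> linarith [hy.1, hy.2]
    rw [Measure.restrict_apply_univ, Real.volume_Icc, ← hld]
    rw [ENNReal.ofReal_rpow_of_nonneg hl.le (by positivity), ← ENNReal.ofReal_mul (by apply Real.rpow_nonneg; linarith)]
    apply ENNReal.ofReal_le_ofReal
    have : l^((2:ℝ≥0∞).toReal⁻¹) * l^s = l^σ := by
      rw [← Real.rpow_add hl]; congr 1; rw [hσ]; simp; ring
    rw [← this]; apply le_of_eq; ring
  refine (add_le_add hP h9).trans ?_
  rw [← ENNReal.ofReal_add (by positivity) (by positivity)]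
  apply ENNReal.ofReal_le_ofReal
  have h10 : ∑ j ∈ Finset.range J, ((j:ℝ)+2) * q^j ≤ T := hsum.sum_le_tsum _ (fun j _ => by positivity)
  calc _ = (B * Ca + E * ∑ j ∈ Finset.range J, ((j:ℝ)+2) * q^j + 1) * lam * l^σ := by ring
    _ ≤ _ := by gcongr


/-- uniform boundedness of the rotated family on `Ċ^s_p = Ḟ^s_{p∞}`:
for `2 ≤ p < ∞`, `s > 0` and `i = ⌊s⌋ + 1`, if `‖M^{i,s}_p f‖_{L^p} < ∞` then
`‖M^{i,s}_p g‖_{L^p} ≤ C ‖M^{i,s}_p f‖_{L^p}`, where `g_m(x) = e^{-2πi a_m x}(f∗φ_m)(x)`. -/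
theorem statement13 (φ : SchwartzMap ℝ ℂ)
    (hφ : Function.support (𝓕 ⇑φ) ⊆ Set.Ioo 0 1)
    (p : ℝ) (hp : 2 ≤ p) (s : ℝ) (hs : 0 < s) :
    ∃ C : ℝ, 0 < C ∧ ∀ (N : ℕ) (a b : Fin N → ℝ), Admissible a b →
      ∀ f : ℝ → ℂ, Measurable f →
        (∫⁻ x : ℝ, sharpMax (Nat.floor s + 1) s p (fun _ : Fin 1 => f) x ^ p) ^ (1/p) < ∞ →
        (∫⁻ x : ℝ, sharpMax (Nat.floor s + 1) s p
            (fun m : Fin N => rotConv ⇑φ (a m) (b m) f) x ^ p) ^ (1/p)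
          ≤ ENNReal.ofReal C *
            (∫⁻ x : ℝ, sharpMax (Nat.floor s + 1) s p (fun _ : Fin 1 => f) x ^ p) ^ (1/p) := by
  have hS : InS φ := by
    intro ξ hξ
    by_contra hc
    exact hξ (hφ hc)
  have hp0 : 0 < p := by linarith
  set k := Nat.floor s with hk
  obtain ⟨C1, hC1, H1⟩ := part1 hS k s (Nat.floor_le hs.le) (Nat.lt_floor_add_one s)
  obtain ⟨Cs, hCs, H2⟩ := self_improve k s p hs hp0
  set r : ℝ := 1 + s * p / 4 with hr
  have hr1 : 1 < r := by rw [hr]; have : 0 < s * p / 4 := by positivity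
                         linarith
  have hr0 : 0 < r := by linarith
  obtain ⟨C2, hC2, H3⟩ := hlM_strong r hr1
  set κ : ℝ := C1 * 2^(s+1/2) with hκ
  have hκ0 : 0 < κ := by positivity
  set D : ℝ≥0∞ := Cs * 2^(s*p) * 2 + 1 with hD
  have hDt : D ≠ ⊤ := by
    rw [hD]
    refine ENNReal.add_ne_top.2 ⟨ENNReal.mul_ne_top (ENNReal.mul_ne_top hCs ?_) (by norm_num), by norm_num⟩
    exact ENNReal.rpow_ne_top_of_nonneg (by positivity) (by norm_num)
  have hD0 : D ≠ 0 := by rw [hD]; simp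
  set Z : ℝ≥0∞ := D * (ENNReal.ofReal C2 * ENNReal.ofReal κ ^ p) with hZ
  have hZt : Z ≠ ⊤ := ENNReal.mul_ne_top hDt (ENNReal.mul_ne_top ENNReal.ofReal_ne_top
    (ENNReal.rpow_ne_top_of_nonneg hp0.le ENNReal.ofReal_ne_top))
  have hZ1 : Z ^ (1/p) ≠ ⊤ := ENNReal.rpow_ne_top_of_nonneg (by positivity) hZt
  refine ⟨(Z ^ (1/p)).toReal + 1, by positivity, ?_⟩
  intro N a b hadm f hf hfin
  set F := sharpMax (k + 1) s p (fun _ : Fin 1 => f) with hF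
  set F' : ℝ → ℝ≥0∞ := fun x => ⨆ (u : ℝ) (v : ℝ) (_ : x ∈ Set.Ioo u v), oscA (k+1) s p (fun _ : Fin 1 => f) u v with hF'
  have hF'm : Measurable F' := measurable_iSup_Ioo _
  have hF'F : ∀ x, F' x ≤ F x := by
    intro x
    rw [hF, sharpMax_eq]
    refine iSup_le fun u => iSup_le fun v => iSup_le fun hx => ?_
    exact le_iSup₂_of_le u v (le_iSup₂_of_le (hx.1.trans hx.2) ⟨hx.1.le, hx.2.le⟩ le_rfl)
  have hl2 : ∀ x (lam : ℝ), F' x < ENNReal.ofReal lam → ∀ u v, u < v → x ∈ Icc u v → ∃ Q : Polynomial ℂ, Q.degree < ((k+1:ℕ) : WithBot ℕ) ∧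
      eLpNorm (fun t : ℝ => f t - Q.eval (t:ℂ)) 2 (volume.restrict (Icc u v)) ≤ ENNReal.ofReal (2^(s+1/2) * lam * (v - u) ^ (s + 1/2)) := by
    intro x lam hlt u v huv hx
    have hl : 0 < v - u := by linarith
    have h1 : oscA (k+1) s p (fun _ : Fin 1 => f) (u - (v-u)/2) (v + (v-u)/2) < ENNReal.ofReal lam := by
      refine lt_of_le_of_lt ?_ hlt
      exact le_iSup₂_of_le (f := fun u v => ⨆ (_ : x ∈ Set.Ioo u v), oscA (k+1) s p (fun _ : Fin 1 => f) u v) (u - (v-u)/2) (v + (v-u)/2)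
        (le_iSup_of_le ⟨by linarith [hx.1], by linarith [hx.2]⟩ le_rfl)
    obtain ⟨Q, hQ, hQ2⟩ := osc_to_l2 (k+1) s p hp f hf lam _ _ (by linarith) h1
    refine ⟨Q, hQ, ?_⟩
    refine (eLpNorm_mono_measure _ (Measure.restrict_mono (Icc_subset_Icc (by linarith) (by linarith)) le_rfl)).trans (hQ2.trans (le_of_eq ?_))
    rw [show v + (v-u)/2 - (u - (v-u)/2) = 2 * (v - u) by ring, Real.mul_rpow (by norm_num) hl.le]
    congr 1; ring
  have hlam_pos : ∀ (y : ℝ≥0∞) (lam : ℝ), y < ENNReal.ofReal lam → 0 < lam := by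
    intro y lam h
    by_contra hc
    rw [ENNReal.ofReal_of_nonpos (by linarith)] at h; simp at h
  have hFfin : ∫⁻ x, F x ^ p < ∞ := by
    by_contra hc
    have : ∫⁻ x, F x ^ p = ⊤ := by simpa using hc
    rw [this, ENNReal.top_rpow_of_pos (by positivity)] at hfin
    simp at hfin
  have hF'le : ∫⁻ x, F' x ^ p ≤ ∫⁻ x, F x ^ p := lintegral_mono fun x => ENNReal.rpow_le_rpow (hF'F x) hp0.le
  set g : ℝ → EuclideanSpace ℂ (Fin N) := gv φ a b f with hg
  have hgc : Continuous g := by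
    have hae := ae_lt_top (hF'm.pow_const p) (hF'le.trans_lt hFfin).ne
    obtain ⟨x, hx⟩ := hae.exists
    have hx' : F' x < ⊤ := by
      by_contra hc
      have : F' x = ⊤ := by simpa using hc
      rw [this, ENNReal.top_rpow_of_pos hp0] at hx
      simp at hx
    have h2 : F' x < ENNReal.ofReal ((F' x).toReal + 1) := by
      rw [ENNReal.lt_ofReal_iff_toReal_lt hx'.ne]; linarith
    exact (H1 a b hadm f hf x (2^(s+1/2) * ((F' x).toReal + 1)) (by positivity) (hl2 x _ h2)).1
  set H : ℝ → ℝ≥0∞ := fun x => ENNReal.ofReal κ * F' x with hH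
  have hHm : Measurable H := hF'm.const_mul _
  have hyp : ∀ x (lam : ℝ), H x < ENNReal.ofReal lam → ∀ u v, u < v → x ∈ Icc u v →
      ∃ P : Fin N → Polynomial ℂ, (∀ m, (P m).degree < ((k+1 : ℕ) : WithBot ℕ)) ∧
        eLpNorm (fun x => g x - pv P x) 2 (volume.restrict (Icc u v)) ≤
          ENNReal.ofReal (lam * (v - u) ^ (s + 1/2)) := by
    intro x lam hlt u v huv hx
    have hlp := hlam_pos _ _ hlt
    have h3 : F' x < ENNReal.ofReal (lam / κ) := by
      rw [ENNReal.ofReal_div_of_pos hκ0, ENNReal.lt_div_iff_mul_lt (Or.inl (by simpa using hκ0)) (Or.inl ENNReal.ofReal_ne_top), mul_comm]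
      exact hlt
    obtain ⟨P, hP, hP2⟩ := (H1 a b hadm f hf x (2^(s+1/2) * (lam/κ)) (by positivity) (hl2 x _ h3)).2 u v huv hx
    refine ⟨P, hP, hP2.trans (le_of_eq ?_)⟩
    congr 2
    rw [hκ]; field_simp
  set W : ℝ → ℝ≥0∞ := fun x => H x ^ (p/r) with hW
  have hWm : Measurable W := hHm.pow_const _
  have hpt : ∀ x, sharpMax (k + 1) s p (fun m : Fin N => rotConv ⇑φ (a m) (b m) f) x ^ p ≤ D * hlM W x ^ r := by
    intro x
    rcases eq_or_ne (hlM W x) ⊤ with hM | hM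
    · rw [hM, ENNReal.top_rpow_of_pos hr0, ENNReal.mul_top hD0]; exact le_top
    suffices h : sharpMax (k + 1) s p (fun m : Fin N => rotConv ⇑φ (a m) (b m) f) x ≤ (D * hlM W x ^ r) ^ (p⁻¹) by
      rwa [ENNReal.le_rpow_inv_iff hp0] at h
    rw [sharpMax_eq]
    refine iSup_le fun u => iSup_le fun v => iSup_le fun huv => iSup_le fun hx => ?_
    rw [ENNReal.le_rpow_inv_iff hp0]
    have hl : 0 < v - u := by linarith
    set A : ℝ≥0∞ := (ENNReal.ofReal ((v + (v-u)/2) - (u - (v-u)/2)))⁻¹ * ∫⁻ z in Icc (u - (v-u)/2) (v + (v-u)/2), (H z) ^ (p / r) with hA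
    have hAM : A ≤ hlM W x := le_iSup₂_of_le (f := fun u v => ⨆ (_ : x ∈ Set.Ioo u v), (ENNReal.ofReal (v - u))⁻¹ * ∫⁻ t in Set.Icc u v, W t)
        (u - (v-u)/2) (v + (v-u)/2) (le_iSup_of_le ⟨by linarith [hx.1], by linarith [hx.2]⟩ le_rfl)
    have hAt : A ≠ ⊤ := (hAM.trans_lt (lt_top_iff_ne_top.2 hM)).ne
    have step : ∀ η : ℝ, 0 < η → oscA (k+1) s p (fun m : Fin N => rotConv ⇑φ (a m) (b m) f) u v ^ p ≤ D * (hlM W x ^ r + ENNReal.ofReal η ^ p) := by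
      intro η hη
      obtain ⟨P, hPd, hP⟩ := H2 N g hgc H hHm hyp r hr (u - (v-u)/2) (v + (v-u)/2) (by linarith) A hA hAt η hη
      rw [← ENNReal.le_rpow_inv_iff hp0]
      refine (iInf₂_le P hPd).trans ?_
      rw [ENNReal.le_rpow_inv_iff hp0]
      simp_rw [term_eq p hp0]
      set L := ENNReal.ofReal (v - u) with hL
      have hL0 : L ≠ 0 := by simpa [hL] using hl
      have hLt : L ≠ ⊤ := ENNReal.ofReal_ne_top
      rw [show v + (v-u)/2 - (u - (v-u)/2) = 2 * (v - u) by ring, ENNReal.ofReal_mul (by norm_num), ← hL] at hP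
      rw [ENNReal.mul_rpow_of_nonneg _ _ hp0.le, ← ENNReal.rpow_mul, ← ENNReal.rpow_mul, one_div, inv_mul_cancel₀ hp0.ne', ENNReal.rpow_one]
      have h5 : ∫⁻ t in Icc u v, ‖g t - pv P t‖ₑ ^ p ≤ Cs * (2 * L) ^ (s*p) * (2 * L) * (hlM W x ^ r + ENNReal.ofReal η ^ p) := by
        refine (lintegral_mono_set (Icc_subset_Icc (by linarith) (by linarith))).trans (hP.trans ?_)
        rw [show ENNReal.ofReal 2 = 2 by simp]
        exact mul_le_mul_right (add_le_add_left (ENNReal.rpow_le_rpow hAM hr0.le) _) _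
      refine (mul_le_mul_right (mul_le_mul_right h5 _) _).trans ?_
      rw [ENNReal.mul_rpow_of_nonneg _ _ (by positivity : 0 ≤ s * p)]
      have e1 : L ^ (-s * p) * L ^ (s * p) = 1 := by
        rw [← ENNReal.rpow_add _ _ hL0 hLt]; simp
      have e2 : L⁻¹ * L = 1 := ENNReal.inv_mul_cancel hL0 hLt
      calc _ = (L ^ (-s * p) * L ^ (s * p)) * (L⁻¹ * L) * ((Cs * 2^(s*p) * 2) * (hlM W x ^ r + ENNReal.ofReal η ^ p)) := by ring
        _ = (Cs * 2^(s*p) * 2) * (hlM W x ^ r + ENNReal.ofReal η ^ p) := by rw [e1, e2]; ring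
        _ ≤ _ := mul_le_mul_left (by rw [hD]; exact le_self_add) _
    have ht : Filter.Tendsto (fun η : ℝ => D * (hlM W x ^ r + ENNReal.ofReal η ^ p)) (nhdsWithin 0 (Ioi 0)) (nhds (D * (hlM W x ^ r + 0))) := by
      refine ENNReal.Tendsto.const_mul (Filter.Tendsto.const_add _ ?_) (Or.inr hDt)
      have hcc : Continuous fun η : ℝ => ENNReal.ofReal η ^ p := ENNReal.continuous_rpow_const.comp ENNReal.continuous_ofReal
      have := hcc.tendsto 0
      simp only [ENNReal.ofReal_zero, ENNReal.zero_rpow_of_pos hp0] at this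
      exact this.mono_left nhdsWithin_le_nhds
    rw [add_zero] at ht
    refine ge_of_tendsto ht ?_
    filter_upwards [self_mem_nhdsWithin] with η hη
    exact step η hη
  have hfinal : ∫⁻ x : ℝ, sharpMax (k + 1) s p (fun m : Fin N => rotConv ⇑φ (a m) (b m) f) x ^ p ≤ Z * ∫⁻ x, F x ^ p := by
    refine (lintegral_mono hpt).trans ?_
    rw [lintegral_const_mul _ ((measurable_hlM W).pow_const r), hZ, mul_assoc]
    refine mul_le_mul_right ((H3 W hWm).trans ?_) _
    rw [mul_assoc]
    refine mul_le_mul_right ?_ _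
    have e3 : ∀ x, W x ^ r = ENNReal.ofReal κ ^ p * F' x ^ p := by
      intro x
      simp only [hW, hH]
      rw [← ENNReal.rpow_mul, div_mul_cancel₀ _ hr0.ne', ENNReal.mul_rpow_of_nonneg _ _ hp0.le]
    simp_rw [e3]
    rw [lintegral_const_mul _ (hF'm.pow_const p)]
    exact mul_le_mul_right hF'le _
  refine (ENNReal.rpow_le_rpow hfinal (by positivity)).trans ?_
  rw [ENNReal.mul_rpow_of_nonneg _ _ (by positivity)]
  refine mul_le_mul_left ?_ _
  rw [← ENNReal.toReal_le_toReal hZ1 ENNReal.ofReal_ne_top, ENNReal.toReal_ofReal (by positivity)]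
  linarith
end

section
/- There exist constants c₀ > 0 and γ > 0 such that for every pair of complex numbers a, b, the Lebesgue measure of the set { x ∈ [0, 1/2] : |e^{2πix} − a x − b| > c₀ } is at least γ. -/
open MeasureTheory Real Set Function
open scoped FourierTransform ENNReal NNReal

theorem e2pi_sixth : e2pi (1/6) ^ 2 = e2pi (1/6) - 1 := by
  have h : e2pi (1/6) = ((1/2 : ℝ) : ℂ) + ((√3 / 2 : ℝ) : ℂ) * Complex.I := by
    unfold e2pi
    have : 2 * (Real.pi : ℂ) * Complex.I * ((1/6 : ℝ) : ℂ)
        = ((Real.pi / 3 : ℝ) : ℂ) * Complex.I := by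
      push_cast
      ring
    rw [this, Complex.exp_mul_I, ← Complex.ofReal_cos, ← Complex.ofReal_sin,
      Real.cos_pi_div_three, Real.sin_pi_div_three]
  have h3 : ((√3 : ℝ) : ℂ) ^ 2 = 3 := by
    rw [← Complex.ofReal_pow, Real.sq_sqrt (by norm_num)]
    norm_num
  rw [h]
  push_cast
  linear_combination (Complex.I ^ 2 / 4) * h3 + (3 / 4) * Complex.I_sq

theorem second_diff (a b : ℂ) (x : ℝ) :
    1 ≤ ‖e2pi x - (a * (x : ℂ) + b)‖ + 2 * ‖e2pi (x + 1/6) - (a * ((x + 1/6 : ℝ) : ℂ) + b)‖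
      + ‖e2pi (x + 1/3) - (a * ((x + 1/3 : ℝ) : ℂ) + b)‖ := by
  set u := e2pi x - (a * (x : ℂ) + b) with hu
  set v := e2pi (x + 1/6) - (a * ((x + 1/6 : ℝ) : ℂ) + b) with hv
  set w := e2pi (x + 1/3) - (a * ((x + 1/3 : ℝ) : ℂ) + b) with hw
  have e3 : e2pi (x + 1/3) = e2pi x * e2pi (1/6) ^ 2 := by
    rw [show x + 1/3 = x + 1/6 + 1/6 by ring, e2pi_add, e2pi_add]
    ring
  have key : u - 2 * v + w = -(e2pi x * e2pi (1/6)) := by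
    rw [hu, hv, hw, e3, e2pi_add]
    push_cast
    linear_combination (e2pi x) * e2pi_sixth
  have hn : ‖u - 2 * v + w‖ = 1 := by
    rw [key, norm_neg, norm_mul, e2pi_norm, e2pi_norm, one_mul]
  have h1 := norm_add_le (u - 2 * v) w
  have h2 := norm_sub_le u (2 * v)
  have h4 : ‖2 * v‖ = 2 * ‖v‖ := by
    rw [norm_mul]
    norm_num
  linarith

/-- there are `c₀ > 0` and `γ > 0` such that for all complex `a, b` the set
`{x ∈ [0,1/2] : |e^{2πix} - ax - b| > c₀}` has Lebesgue measure at least `γ`. -/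
theorem statement17 :
    ∃ c₀ : ℝ, 0 < c₀ ∧ ∃ γ : ℝ, 0 < γ ∧ ∀ a b : ℂ,
      ENNReal.ofReal γ ≤
        volume {x : ℝ | x ∈ Set.Icc (0:ℝ) (1/2) ∧ c₀ < ‖e2pi x - (a * (x : ℂ) + b)‖} := by
  refine ⟨1/5, by norm_num, 1/18, by norm_num, fun a b => ?_⟩
  set S := {x : ℝ | x ∈ Set.Icc (0:ℝ) (1/2) ∧ 1/5 < ‖e2pi x - (a * (x : ℂ) + b)‖} with hS
  have hsub : Set.Icc (0:ℝ) (1/6) ⊆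
      S ∪ ((fun x => x + 1/6) ⁻¹' S ∪ (fun x => x + 1/3) ⁻¹' S) := by
    rintro x ⟨hx0, hx1⟩
    by_contra hc
    simp only [Set.mem_union, Set.mem_preimage, not_or, hS, Set.mem_setOf_eq, Set.mem_Icc,
      not_and, not_lt] at hc
    obtain ⟨h1, h2, h3⟩ := hc
    have h1 := h1 ⟨by linarith, by linarith⟩
    have h2 := h2 ⟨by linarith, by linarith⟩
    have h3 := h3 ⟨by linarith, by linarith⟩
    have := second_diff a b x
    linarith
  have hm : ENNReal.ofReal (1/6) ≤ volume S + (volume S + volume S) := by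
    calc ENNReal.ofReal (1/6) = volume (Set.Icc (0:ℝ) (1/6)) := by
          rw [Real.volume_Icc, sub_zero]
      _ ≤ _ := measure_mono hsub
      _ ≤ _ := measure_union_le _ _
      _ ≤ volume S + (volume ((fun x => x + 1/6) ⁻¹' S) + volume ((fun x => x + 1/3) ⁻¹' S)) :=
          add_le_add le_rfl (measure_union_le _ _)
      _ = _ := by rw [measure_preimage_add_right, measure_preimage_add_right]
  by_contra hlt
  rw [not_le] at hlt
  have h2 : volume S + (volume S + volume S) <
      ENNReal.ofReal (1/18) + (ENNReal.ofReal (1/18) + ENNReal.ofReal (1/18)) :=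
    ENNReal.add_lt_add hlt (ENNReal.add_lt_add hlt hlt)
  rw [← ENNReal.ofReal_add (by norm_num) (by norm_num),
    ← ENNReal.ofReal_add (by norm_num) (by norm_num)] at h2
  norm_num at h2 hm
  exact absurd (lt_of_le_of_lt hm h2) (lt_irrefl _)
end
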